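/- arXiv:2306.10922 — 3 statements merged into one kernel-verified Lean document; each statement's English description precedes it below -/
import Mathlib

section
/- Let B^H = {B^H(t), t ∈ [0,1]} be a d-dimensional fractional Brownian motion of Hurst index H ∈ (0,1), let I = [a,b] with 0 < a < b ≤ 1, let f : [0,1] → ℝ^d be a bounded Borel measurable function, and let E ⊆ I be a Borel set. Then: (i) if C^{d}_{ρ_{d_H}}(Gr_E(f)) > 0, then λ_d((B^H + f)(E)) > 0 with positive probability; (ii) if ℋ^{d}_{ρ_{d_H}}(Gr_E(f)) = 0, then λ_d((B^H + f)(E)) = 0 almost surely. -/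
open MeasureTheory Set ENNReal

/-- The `β`-dimensional Hausdorff measure of `G` with respect to the distance
function `ρ`, defined via countable coverings by `ρ`-balls of radii at most `δ`,
letting `δ → 0` (i.e. taking the supremum over `δ > 0`). -/
noncomputable def hMeasure {X : Type*} (ρ : X → X → ℝ) (β : ℝ) (G : Set X) : ℝ≥0∞ :=
  ⨆ (δ : ℝ) (_ : 0 < δ), ⨅ (c : ℕ → X) (r : ℕ → ℝ)
    (_ : ∀ n, 0 < r n ∧ r n ≤ δ) (_ : G ⊆ ⋃ n, {y | ρ y (c n) < r n}),
    ∑' n, ENNReal.ofReal ((2 * r n) ^ β)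

/-- The radial kernel `φ_α` : `r^{-α}` for `α > 0`, `log(e / (r ⊓ 1))` for `α = 0`,
and `1` for `α < 0`. -/
noncomputable def radialKernel (α : ℝ) (r : ℝ) : ℝ≥0∞ :=
  if 0 < α then ENNReal.ofReal r ^ (-α)
  else if α = 0 then ENNReal.ofReal (Real.log (Real.exp 1 / min r 1))
  else 1

/-- The `φ_α`-energy of a measure `μ` with respect to the distance function `ρ`. -/
noncomputable def energy {X : Type*} [MeasurableSpace X] (ρ : X → X → ℝ) (α : ℝ)
    (μ : MeasureTheory.Measure X) : ℝ≥0∞ :=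
  ∫⁻ u, ∫⁻ v, radialKernel α (ρ u v) ∂μ ∂μ

/-- The Bessel–Riesz capacity of order `α` of `G` with respect to the distance
function `ρ`: the reciprocal of the infimum of `φ_α`-energies over probability
measures carried by `G` (equal to `0` if every such energy is infinite). -/
noncomputable def capacity {X : Type*} [MeasurableSpace X] (ρ : X → X → ℝ) (α : ℝ)
    (G : Set X) : ℝ≥0∞ :=
  (⨅ (μ : MeasureTheory.Measure X) (_ : MeasureTheory.IsProbabilityMeasure μ)
    (_ : μ Gᶜ = 0), energy ρ α μ)⁻¹

/-- Covariance function of fractional Brownian motion of Hurst index `H`. -/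
noncomputable def fbmCov (H s t : ℝ) : ℝ :=
  (|s| ^ (2 * H) + |t| ^ (2 * H) - |t - s| ^ (2 * H)) / 2

/-- `B` is a `d`-dimensional fractional Brownian motion of Hurst index `H` on `[0,1]`
under the probability measure `ℙ`: its coordinates are independent copies of a
real-valued centered Gaussian process with continuous sample paths, starting at `0`,
whose covariance is `fbmCov H`. -/
structure IsFBM {Ω : Type*} [MeasurableSpace Ω] (ℙ : MeasureTheory.Measure Ω)
    (H : ℝ) (d : ℕ) (B : Ω → ℝ → EuclideanSpace ℝ (Fin d)) : Prop where
  meas : ∀ t : ℝ, Measurable fun ω => B ω t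
  cont : ∀ ω, ContinuousOn (fun t => B ω t) (Set.Icc 0 1)
  start : ∀ ω, B ω 0 = 0
  indep : ProbabilityTheory.iIndepFun
      (fun (i : Fin d) (ω : Ω) => fun t : ℝ => B ω t i) ℙ
  gaussian : ∀ i : Fin d, ∀ (n : ℕ) (t : Fin n → ℝ) (a : Fin n → ℝ),
      (∀ j, t j ∈ Set.Icc (0 : ℝ) 1) →
      ∃ v : NNReal, (v : ℝ) = ∑ j, ∑ k, a j * a k * fbmCov H (t j) (t k) ∧
        MeasureTheory.Measure.map (fun ω => ∑ j, a j * B ω (t j) i) ℙ =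
          ProbabilityTheory.gaussianReal 0 v

/-- The parabolic metric `ρ_{d_H}((s,x),(t,y)) = max(|t-s|^H, ‖x-y‖)` on `ℝ × ℝ^d`. -/
noncomputable def parabolicDist (H : ℝ) {d : ℕ}
    (p q : ℝ × EuclideanSpace ℝ (Fin d)) : ℝ :=
  max (|p.1 - q.1| ^ H) (dist p.2 q.2)

/-- `f` is `γ`-Hölder continuous on `s`. -/
def HolderWithExp {E : Type*} [NormedAddCommGroup E] (f : ℝ → E) (γ : ℝ) (s : Set ℝ) : Prop :=
  ∃ K : ℝ, ∀ x ∈ s, ∀ y ∈ s, ‖f x - f y‖ ≤ K * |x - y| ^ γ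

namespace FBMaux

theorem incr_law {Ω : Type*} [MeasurableSpace Ω] {ℙ : Measure Ω} 
    {H : ℝ} (hH : H ∈ Set.Ioo (0 : ℝ) 1) {d : ℕ}
    {B : Ω → ℝ → EuclideanSpace ℝ (Fin d)} (hB : IsFBM ℙ H d B) (i : Fin d)
    {s t : ℝ} (hs : s ∈ Icc (0:ℝ) 1) (ht : t ∈ Icc (0:ℝ) 1) :
    ∃ v : NNReal, (v : ℝ) = (|s - t| ^ H) ^ 2 ∧
    Measure.map (fun ω => B ω s i - B ω t i) ℙ = ProbabilityTheory.gaussianReal 0 v := by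
  obtain ⟨v, hv, h⟩ := hB.gaussian i 2 ![s, t] ![1, -1] (by
    intro j; fin_cases j <;> simpa)
  refine ⟨v, ?_, ?_⟩
  · have h0 : (2 * H) ≠ 0 := by have := hH.1; positivity
    rw [hv, ← Real.rpow_natCast, ← Real.rpow_mul (abs_nonneg _)]
    simp [Fin.sum_univ_two, fbmCov, Real.zero_rpow h0, abs_sub_comm t s]
    rw [mul_comm H 2]; ring
  · rw [← h]
    congr 1
    ext ω
    simp [Fin.sum_univ_two]; ring

theorem gauss_ball {v : NNReal} {σ : ℝ} (hσ : 0 < σ) (hv : (v : ℝ) = σ ^ 2) (δ r m : ℝ)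
    (hr : 0 < r) (hm : ∀ x, |x + δ| ≤ r → m ≤ x ^ 2) :
    ProbabilityTheory.gaussianReal 0 v {x | |x + δ| ≤ r}
      ≤ ENNReal.ofReal (r / σ * Real.exp (- m / (2 * σ ^ 2))) := by
  have hv0 : v ≠ 0 := by
    intro h; rw [h] at hv; simp at hv; exact absurd hv (by positivity)
  rw [ProbabilityTheory.gaussianReal_apply _ hv0]
  have hset : {x : ℝ | |x + δ| ≤ r} = Icc (-δ - r) (-δ + r) := by
    ext x; simp only [mem_ofPred_eq, abs_le, mem_Icc]; constructor <;> rintro ⟨h1, h2⟩ <;> constructor <;> linarith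
  have hms : MeasurableSet {x : ℝ | |x + δ| ≤ r} := by rw [hset]; exact measurableSet_Icc
  calc ∫⁻ x in {x : ℝ | |x + δ| ≤ r}, ProbabilityTheory.gaussianPDF 0 v x
      ≤ ∫⁻ x in {x : ℝ | |x + δ| ≤ r}, ENNReal.ofReal ((2 * σ)⁻¹ * Real.exp (- m / (2 * σ ^ 2))) := by
        refine setLIntegral_mono' hms fun x hx => ?_
        rw [ProbabilityTheory.gaussianPDF, ProbabilityTheory.gaussianPDFReal]
        apply ENNReal.ofReal_le_ofReal
        rw [hv]
        have hx' := hm x hx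
        gcongr
        · apply Real.le_sqrt_of_sq_le
          have := Real.pi_gt_three
          nlinarith [sq_nonneg σ]
        · simpa using hx'
    _ = _ := by
        rw [setLIntegral_const, hset, Real.volume_Icc, ← ENNReal.ofReal_mul (by positivity)]
        congr 1
        field_simp
        ring

theorem pow_le_exp_sq (d : ℕ) (x : ℝ) (hx : 0 ≤ x) :
    x ^ d ≤ (d.factorial * Real.exp 2) * Real.exp (x ^ 2 / 8) := by
  have h1 : x ^ d / d.factorial ≤ Real.exp x := Real.pow_div_factorial_le_exp x hx d
  have h2 : Real.exp x ≤ Real.exp 2 * Real.exp (x ^ 2 / 8) := by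
    rw [← Real.exp_add]; apply Real.exp_le_exp.2; nlinarith [sq_nonneg (x - 4)]
  rw [div_le_iff₀ (by positivity)] at h1
  calc x ^ d ≤ Real.exp x * d.factorial := h1
    _ ≤ Real.exp 2 * Real.exp (x ^ 2 / 8) * d.factorial := by gcongr
    _ = _ := by ring

theorem norm_le_card_mul {d : ℕ} (hd : 0 < d) (x : EuclideanSpace ℝ (Fin d)) :
    ∃ j, ‖x‖ ≤ d * |x j| := by
  have : Nonempty (Fin d) := ⟨⟨0, hd⟩⟩
  obtain ⟨j, hj⟩ := Finite.exists_max (fun j => |x j|)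
  refine ⟨j, ?_⟩
  rw [EuclideanSpace.norm_eq]
  apply Real.sqrt_le_iff.2 ⟨by positivity, ?_⟩
  calc ∑ i, ‖x i‖ ^ 2 ≤ ∑ i : Fin d, |x j| ^ 2 := by
        apply Finset.sum_le_sum; intro i _; rw [Real.norm_eq_abs]; exact pow_le_pow_left₀ (abs_nonneg _) (hj i) 2
    _ = d * |x j| ^ 2 := by simp
    _ ≤ (d * d) * |x j| ^ 2 := by
        gcongr
        have : (1:ℝ) ≤ d := by exact_mod_cast hd
        nlinarith
    _ = _ := by ring

theorem small_ball {Ω : Type*} [MeasurableSpace Ω] {ℙ : Measure Ω} [IsProbabilityMeasure ℙ]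
    {H : ℝ} (hH : H ∈ Set.Ioo (0 : ℝ) 1) {d : ℕ} (hd : 0 < d)
    {B : Ω → ℝ → EuclideanSpace ℝ (Fin d)} (hB : IsFBM ℙ H d B)
    {s t : ℝ} (hs : s ∈ Icc (0:ℝ) 1) (ht : t ∈ Icc (0:ℝ) 1) (x y : EuclideanSpace ℝ (Fin d)) (hxy : s = t → x = y)
    (r : ℝ) (hr : 0 < r) :
    ℙ {ω | ‖(B ω s + x) - (B ω t + y)‖ ≤ r} ≤
      ENNReal.ofReal ((2 * d) ^ d * (d.factorial * Real.exp 2)) *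
        (ENNReal.ofReal r ^ d * radialKernel d (parabolicDist H (s, x) (t, y))) := by
  have hd0 : (0:ℝ) < d := by exact_mod_cast hd
  set σ := |s - t| ^ H with hσdef
  set δ := x - y with hδ
  have hρ : parabolicDist H (s, x) (t, y) = max σ ‖δ‖ := by
    simp [parabolicDist, hσdef, hδ, dist_eq_norm]
  have hC : 0 < ((2 * d) ^ d * (d.factorial * Real.exp 2) : ℝ) := by positivity
  set C := ((2 * d) ^ d * (d.factorial * Real.exp 2) : ℝ) with hCdef
  rw [hρ]
  rcases eq_or_ne (max σ ‖δ‖) 0 with h0 | h0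
  · rw [h0]
    have : radialKernel d 0 = ∞ := by
      simp [radialKernel, hd]
    rw [this, ENNReal.mul_top, ENNReal.mul_top]
    · exact le_top
    · simpa using hC
    · simp [hr]
  have hσ0 : 0 ≤ σ := by positivity
  have hρ0 : 0 < max σ ‖δ‖ := lt_of_le_of_ne (le_max_of_le_left hσ0) (Ne.symm h0)
  have hrhs : ENNReal.ofReal C * (ENNReal.ofReal r ^ d * radialKernel d (max σ ‖δ‖)) =
      ENNReal.ofReal (C * (r / max σ ‖δ‖) ^ d) := by
    rw [radialKernel, if_pos hd0, ENNReal.rpow_neg, ENNReal.rpow_natCast,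
      ← ENNReal.ofReal_pow hρ0.le, ← ENNReal.ofReal_inv_of_pos (by positivity),
      ← ENNReal.ofReal_pow hr.le, ← ENNReal.ofReal_mul (by positivity), ← ENNReal.ofReal_mul hC.le,
      div_pow, div_eq_mul_inv]
  rw [hrhs]
  have hd1 : (1:ℝ) ≤ d := by exact_mod_cast hd
  have hK1 : (1:ℝ) ≤ d.factorial * Real.exp 2 := by
    have h1 : (1:ℝ) ≤ d.factorial := by exact_mod_cast Nat.factorial_pos d
    have h2 : (1:ℝ) ≤ Real.exp 2 := Real.one_le_exp (by norm_num)
    nlinarith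
  obtain ⟨j, hj⟩ := norm_le_card_mul hd δ
  by_cases hcase : σ < ‖δ‖ ∧ |δ j| < 2 * r
  · -- trivial bound
    rw [max_eq_right hcase.1.le]
    have hD : 0 < ‖δ‖ := lt_of_le_of_lt hσ0 hcase.1
    refine prob_le_one.trans ?_
    rw [← ENNReal.ofReal_one]
    apply ENNReal.ofReal_le_ofReal
    have h1 : (1:ℝ) ≤ 2 * d * (r / ‖δ‖) := by
      rw [← mul_div_assoc, one_le_div hD]
      nlinarith [hcase.2]
    calc (1:ℝ) ≤ (2 * d * (r / ‖δ‖)) ^ d := one_le_pow₀ h1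
      _ = (2 * d) ^ d * 1 * (r / ‖δ‖) ^ d := by rw [mul_pow]; ring
      _ ≤ _ := by rw [hCdef]; gcongr
  have hσpos : 0 < σ := by
    rcases hσ0.lt_or_eq with h | h
    · exact h
    · exfalso
      have hst : s = t := by
        have := (Real.rpow_eq_zero_iff_of_nonneg (abs_nonneg (s-t))).1 h.symm
        linarith [abs_eq_zero.1 this.1]
      apply h0
      rw [← h, hδ, hxy hst]
      simp
  -- product bound
  have hprod : ∀ m : Fin d → ℝ, (∀ i u, |u + δ i| ≤ r → m i ≤ u ^ 2) →
      ℙ {ω | ‖(B ω s + x) - (B ω t + y)‖ ≤ r} ≤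
       ENNReal.ofReal (∏ i, (r / σ * Real.exp (- m i / (2 * σ ^ 2)))) := by
    intro m hm
    have hind : ProbabilityTheory.iIndepFun (fun (i : Fin d) (ω : Ω) => B ω s i - B ω t i) ℙ := by
      exact hB.indep.comp (fun i (g : ℝ → ℝ) => g s - g t) (fun i => by fun_prop)
    have hmeas : ∀ u i, Measurable fun ω => B ω u i := by
      intro u i
      have := hB.meas u
      fun_prop
    have hms : ∀ i, MeasurableSet {u : ℝ | |u + δ i| ≤ r} := fun i =>
      measurableSet_le (by fun_prop) (by fun_prop)
    calc ℙ {ω | ‖(B ω s + x) - (B ω t + y)‖ ≤ r}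
       ≤ ℙ (⋂ i ∈ (Finset.univ : Finset (Fin d)), (fun ω => B ω s i - B ω t i) ⁻¹' {u : ℝ | |u + δ i| ≤ r}) := by
          apply measure_mono
          intro ω hω
          simp only [Finset.mem_univ, iInter_true, mem_iInter, mem_preimage, mem_ofPred_eq]
          intro i
          have h1 := PiLp.norm_apply_le ((B ω s + x) - (B ω t + y)) i
          have h2 : ((B ω s + x) - (B ω t + y)) i = B ω s i - B ω t i + δ i := by
            simp [hδ]; ring
          rw [h2, Real.norm_eq_abs] at h1
          exact h1.trans hω
     _ = ∏ i, ℙ ((fun ω => B ω s i - B ω t i) ⁻¹' {u : ℝ | |u + δ i| ≤ r}) := 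
          hind.measure_inter_preimage_eq_mul Finset.univ (fun i _ => hms i)
     _ ≤ ∏ i, ENNReal.ofReal (r / σ * Real.exp (- m i / (2 * σ ^ 2))) := by
          apply Finset.prod_le_prod'
          intro i _
          obtain ⟨v, hv, hl⟩ := incr_law hH hB i hs ht
          have hmm : Measurable (fun ω => B ω s i - B ω t i) := (hmeas s i).sub (hmeas t i)
          rw [← Measure.map_apply hmm (hms i), hl]
          exact gauss_ball hσpos hv (δ i) r (m i) hr (hm i)
     _ = _ := by
          rw [ENNReal.ofReal_prod_of_nonneg]
          intro i _; positivity
  by_cases hlt : σ < ‖δ‖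
  · have hD : 0 < ‖δ‖ := hσpos.trans hlt
    have hjr : 2 * r ≤ |δ j| := by
      by_contra h; exact hcase ⟨hlt, not_le.1 h⟩
    have hj0 : 0 < |δ j| := by linarith
    rw [max_eq_right hlt.le]
    refine (hprod (fun i => if i = j then |δ j| ^ 2 / 4 else 0) ?_).trans ?_
    · intro i u hu
      dsimp only
      split_ifs with hij
      · subst hij
        have h1 : |δ i| ≤ |u + δ i| + |u| := by
          have := abs_sub (u + δ i) u
          simpa using this
        have h2 : |δ i| / 2 ≤ |u| := by linarith
        rw [← sq_abs u]
        nlinarith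
      · positivity
    · apply ENNReal.ofReal_le_ofReal
      rw [Finset.prod_mul_distrib, Finset.prod_const, Finset.card_univ, Fintype.card_fin]
      rw [Finset.prod_eq_single j (by intro i _ hi; simp [hi]) (by simp)]
      simp only [if_true]
      have hx := pow_le_exp_sq d (|δ j| / σ) (by positivity)
      have he : Real.exp (-(|δ j| ^ 2 / 4) / (2 * σ ^ 2)) = (Real.exp ((|δ j| / σ) ^ 2 / 8))⁻¹ := by
        rw [← Real.exp_neg]; congr 1; field_simp; ring
      rw [he]
      have hx2 : (Real.exp ((|δ j| / σ) ^ 2 / 8))⁻¹ ≤ (d.factorial * Real.exp 2) * (σ / |δ j|) ^ d := by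
        rw [inv_le_iff_one_le_mul₀ (by positivity)]
        have : (σ / |δ j|) ^ d * (|δ j| / σ) ^ d = 1 := by
          rw [← mul_pow]; rw [div_mul_div_cancel₀ hj0.ne', div_self hσpos.ne', one_pow]
        calc 1 = (σ / |δ j|) ^ d * (|δ j| / σ) ^ d := this.symm
          _ ≤ (σ / |δ j|) ^ d * ((d.factorial * Real.exp 2) * Real.exp ((|δ j| / σ) ^ 2 / 8)) := by gcongr
          _ = _ := by ring
      have h3 : r / |δ j| ≤ 2 * d * (r / ‖δ‖) := by
        rw [← mul_div_assoc, div_le_div_iff₀ hj0 hD]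
        nlinarith
      calc (r / σ) ^ d * (Real.exp ((|δ j| / σ) ^ 2 / 8))⁻¹
          ≤ (r / σ) ^ d * ((d.factorial * Real.exp 2) * (σ / |δ j|) ^ d) := by gcongr
        _ = (d.factorial * Real.exp 2) * (r / |δ j|) ^ d := by
            have : r / |δ j| = (r / σ) * (σ / |δ j|) := by field_simp
            rw [this, mul_pow]; ring
        _ ≤ (d.factorial * Real.exp 2) * (2 * d * (r / ‖δ‖)) ^ d := by gcongr
        _ = _ := by rw [mul_pow, hCdef]; ring
  · rw [max_eq_left (not_lt.1 hlt)]
    refine (hprod (fun i => 0) (by intros; positivity)).trans ?_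
    apply ENNReal.ofReal_le_ofReal
    simp only [neg_zero, zero_div, Real.exp_zero, mul_one, Finset.prod_const, Finset.card_univ, Fintype.card_fin]
    have : 1 ≤ C := by
      rw [hCdef]
      have : (1:ℝ) ≤ (2 * d) ^ d := one_le_pow₀ (by linarith)
      nlinarith
    have h2 : 0 ≤ (r / σ) ^ d := by positivity
    nlinarith

end FBMaux
namespace FBMaux
open Filter Topology

theorem pos_vol {d : ℕ} (ν : Measure ℝ) [IsFiniteMeasure ν] (E : Set ℝ) (hE : ν E ≠ 0)
    (X : ℝ → EuclideanSpace ℝ (Fin d)) (hX : Measurable X)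
    (h : ∀ᵐ s ∂ν, liminf (fun n : ℕ => ((n : ℝ≥0∞) + 1) ^ d *
      ν {t | ‖X s - X t‖ ≤ 1 / ((n : ℝ) + 1)}) atTop < ∞) :
    0 < volume (X '' E) := by
  by_contra hcon
  have hz : volume (X '' E) = 0 := by simpa using hcon
  set m := ν.map X with hm
  have : IsFiniteMeasure m := by rw [hm]; infer_instance
  set V := volume (Metric.closedBall (0 : EuclideanSpace ℝ (Fin d)) 1) with hV
  have hV0 : V ≠ 0 := (Metric.measure_closedBall_pos volume _ one_pos).ne'
  have hVt : V ≠ ∞ := measure_closedBall_lt_top.ne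
  let S : ℕ → Set ℝ := fun N => {s | s ∈ E ∧ liminf (fun n : ℕ => ((n : ℝ≥0∞) + 1) ^ d *
      ν {t | ‖X s - X t‖ ≤ 1 / ((n : ℝ) + 1)}) atTop < N}
  have hS : ∀ N, ν (S N) = 0 := by
    intro N
    have hc : (N : ℝ≥0∞) / V ≠ ∞ := (ENNReal.div_lt_top (by simp) hV0).ne
    obtain ⟨c, hc⟩ : ∃ c : NNReal, (c : ℝ≥0∞) = (N : ℝ≥0∞) / V := WithTop.ne_top_iff_exists.1 hc
    have key : m (X '' S N) ≤ (c • (volume : Measure (EuclideanSpace ℝ (Fin d)))) (X '' S N) := by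
      refine (Besicovitch.vitaliFamily m).measure_le_of_frequently_le _ (Measure.AbsolutelyContinuous.rfl) _ ?_
      rintro _ ⟨s, ⟨hsE, hs⟩, rfl⟩
      have hfr := frequently_lt_of_liminf_lt (by isBoundedDefault) hs
      have ht : Tendsto (fun n : ℕ => Metric.closedBall (X s) (1 / ((n : ℝ) + 1))) atTop
          ((Besicovitch.vitaliFamily m).filterAt (X s)) := by
        refine (Besicovitch.tendsto_filterAt m (X s)).comp ?_
        refine tendsto_nhdsWithin_iff.2 ⟨tendsto_one_div_add_atTop_nhds_zero_nat, ?_⟩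
        exact Eventually.of_forall fun n => by simp only [mem_Ioi]; positivity
      refine ht.frequently (hfr.mono ?_)
      intro n hn
      have hpos : (0:ℝ) < 1 / ((n : ℝ) + 1) := by positivity
      rw [hm, Measure.map_apply hX Metric.isClosed_closedBall.measurableSet]
      have hpre : X ⁻¹' Metric.closedBall (X s) (1 / ((n : ℝ) + 1)) =
          {t | ‖X s - X t‖ ≤ 1 / ((n : ℝ) + 1)} := by
        ext t; simp only [mem_preimage, Metric.mem_closedBall, mem_ofPred_eq, dist_comm (X t), dist_eq_norm]
      rw [hpre, Measure.smul_apply, Measure.addHaar_closedBall' _ _ hpos.le, finrank_euclideanSpace_fin,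
        ← hV, ENNReal.smul_def, smul_eq_mul, hc]
      have e1 : ENNReal.ofReal ((1 / ((n:ℝ) + 1)) ^ d) = (((n : ℝ≥0∞) + 1) ^ d)⁻¹ := by
        rw [ENNReal.ofReal_pow hpos.le, one_div, ENNReal.ofReal_inv_of_pos (by positivity),
          ENNReal.inv_pow]
        congr
        rw [ENNReal.ofReal_add (by positivity) (by positivity)]; simp
      rw [e1]
      have e2 : (N : ℝ≥0∞) / V * ((((n : ℝ≥0∞) + 1) ^ d)⁻¹ * V) = (((n : ℝ≥0∞) + 1) ^ d)⁻¹ * N := by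
        rw [mul_comm _ V, ← mul_assoc, ENNReal.div_mul_cancel hV0 hVt, mul_comm]
      rw [e2]
      set A := ((n : ℝ≥0∞) + 1) ^ d with hA
      have hA0 : A ≠ 0 := by rw [hA]; simp
      have hAt : A ≠ ∞ := by rw [hA]; finiteness
      rw [mul_comm, ← div_eq_mul_inv, ENNReal.le_div_iff_mul_le (Or.inl hA0) (Or.inl hAt), mul_comm]
      exact hn.le
    have h2 : (c • (volume : Measure (EuclideanSpace ℝ (Fin d)))) (X '' S N) = 0 := by
      rw [Measure.smul_apply, measure_mono_null (image_mono (fun s hs => hs.1)) hz, smul_zero]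
    have h3 : m (X '' S N) = 0 := le_antisymm (key.trans h2.le) zero_le
    refine measure_mono_null (subset_preimage_image X _) ?_
    exact le_antisymm ((Measure.le_map_apply hX.aemeasurable _).trans h3.le) zero_le
  apply hE
  have hsub : E ⊆ (⋃ N, S N) ∪ {s | ¬ (liminf (fun n : ℕ => ((n : ℝ≥0∞) + 1) ^ d *
      ν {t | ‖X s - X t‖ ≤ 1 / ((n : ℝ) + 1)}) atTop < ∞)} := by
    intro s hs
    by_cases hl : liminf (fun n : ℕ => ((n : ℝ≥0∞) + 1) ^ d *
      ν {t | ‖X s - X t‖ ≤ 1 / ((n : ℝ) + 1)}) atTop < ∞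
    · left
      obtain ⟨N, hN⟩ := ENNReal.exists_nat_gt hl.ne
      exact mem_iUnion.2 ⟨N, hs, hN⟩
    · right; exact hl
  exact measure_mono_null hsub (measure_union_null (measure_iUnion_null hS) h)

/-- clamped process -/
noncomputable def cl {Ω V : Type*} (B : Ω → ℝ → V) (t : ℝ) (ω : Ω) : V :=
  B ω (projIcc (0:ℝ) 1 zero_le_one t)

theorem cl_eq {Ω V : Type*} (B : Ω → ℝ → V) {t : ℝ} (ht : t ∈ Icc (0:ℝ) 1) (ω : Ω) :
    cl B t ω = B ω t := by
  rw [cl, projIcc_of_mem _ ht]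

theorem cl_cont {Ω : Type*} [MeasurableSpace Ω] {ℙ : Measure Ω} {H : ℝ} {d : ℕ}
    {B : Ω → ℝ → EuclideanSpace ℝ (Fin d)} (hB : IsFBM ℙ H d B) (ω : Ω) :
    Continuous fun t => cl B t ω :=
  (hB.cont ω).comp_continuous (continuous_subtype_val.comp continuous_projIcc) (fun _ => Subtype.prop _)

theorem cl_meas {Ω : Type*} [MeasurableSpace Ω] {ℙ : Measure Ω} {H : ℝ} {d : ℕ}
    {B : Ω → ℝ → EuclideanSpace ℝ (Fin d)} (hB : IsFBM ℙ H d B) (t : ℝ) :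
    Measurable (cl B t) := hB.meas _

theorem part_one {Ω : Type*} [MeasurableSpace Ω] (ℙ : Measure Ω) [IsProbabilityMeasure ℙ]
    (H : ℝ) (hH : H ∈ Set.Ioo (0 : ℝ) 1) (d : ℕ) (hd : 0 < d)
    (B : Ω → ℝ → EuclideanSpace ℝ (Fin d)) (hB : IsFBM ℙ H d B)
    (f : ℝ → EuclideanSpace ℝ (Fin d)) (hfm : Measurable f)
    (E : Set ℝ) (hE : E ⊆ Icc (0:ℝ) 1)
    (hcap : 0 < capacity (parabolicDist H) d ((fun t => (t, f t)) '' E)) :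
    ∀ᵐ ω ∂ℙ, 0 < volume ((fun t => B ω t + f t) '' E) := by
  have h1 : (⨅ (μ : Measure (ℝ × EuclideanSpace ℝ (Fin d))) (_ : IsProbabilityMeasure μ)
    (_ : μ ((fun t => (t, f t)) '' E)ᶜ = 0), energy (parabolicDist H) d μ) < ∞ := by
    rw [lt_top_iff_ne_top]
    intro h
    rw [capacity, h] at hcap
    simp at hcap
  simp only [iInf_lt_iff] at h1
  obtain ⟨μ, hμ, hμG, hen⟩ := h1
  have hae : ∀ᵐ u ∂μ, u ∈ (fun t => (t, f t)) '' E := hμG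
  set ν := μ.map Prod.fst with hν
  have : IsProbabilityMeasure ν := Measure.isProbabilityMeasure_map measurable_fst.aemeasurable
  have hfst : AEMeasurable (Prod.fst : ℝ × EuclideanSpace ℝ (Fin d) → ℝ) μ := measurable_fst.aemeasurable
  have hνE : ∀ᵐ s ∂ν, s ∈ E := by
    obtain ⟨T, hT, hTm, hT0⟩ := exists_measurable_superset_of_null hμG
    -- graph preimage
    set T' := {s | (s, f s) ∈ T} with hT'
    have hT'm : MeasurableSet T' := (measurable_id.prodMk hfm) hTm
    have : ν T' = 0 := by
      rw [hν, Measure.map_apply measurable_fst hT'm]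
      refine measure_mono_null (t := T ∪ ((fun t => (t, f t)) '' E)ᶜ) ?_ (measure_union_null hT0 hμG)
      intro u hu
      by_cases hu2 : u ∈ ((fun t => (t, f t)) '' E)
      · left
        obtain ⟨s, hs, rfl⟩ := hu2
        exact hu
      · right; exact hu2
    refine measure_mono_null ?_ this
    intro s hs
    apply hT
    rintro ⟨s', hs', h⟩
    simp only [Prod.mk.injEq] at h
    exact hs (h.1 ▸ hs')
  have hνE1 : ν E ≠ 0 := by
    intro h
    have h2 : ∀ᵐ s ∂ν, False := by
      filter_upwards [hνE, measure_eq_zero_iff_ae_notMem.1 h] with s h1 h2 using h2 h1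
    obtain ⟨_, hx⟩ := h2.exists
    exact hx
  -- kernel
  let k : ℝ → ℝ → ℝ≥0∞ := fun s t => radialKernel d (parabolicDist H (s, f s) (t, f t))
  have hpm : Measurable fun z : ℝ × ℝ => parabolicDist H (z.1, f z.1) (z.2, f z.2) := by
    unfold parabolicDist
    have e1 : Measurable fun z : ℝ × ℝ => f z.1 := hfm.comp measurable_fst
    have e2 : Measurable fun z : ℝ × ℝ => f z.2 := hfm.comp measurable_snd
    fun_prop
  have hd0 : (0:ℝ) < d := by exact_mod_cast hd
  have hkm : Measurable fun z : ℝ × ℝ => k z.1 z.2 := by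
    simp only [k, radialKernel, if_pos hd0]
    fun_prop
  have hk1 : ∀ x, Measurable (k x) := fun x => Measurable.of_uncurry_left (f := k) hkm
  have hen2 : ∫⁻ s, ∫⁻ t, k s t ∂ν ∂ν = energy (parabolicDist H) d μ := by
    rw [energy, hν, lintegral_map hkm.lintegral_prod_right measurable_fst]
    apply lintegral_congr_ae
    filter_upwards [hae] with u hu
    rw [lintegral_map (hk1 u.1) measurable_fst]
    apply lintegral_congr_ae
    filter_upwards [hae] with v hv
    obtain ⟨s, hs, rfl⟩ := hu
    obtain ⟨t, ht, rfl⟩ := hv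
    rfl
  -- joint measurability
  have hBm : Measurable fun z : ℝ × Ω => cl B z.1 z.2 :=
    measurable_uncurry_of_continuous_of_measurable (cl_cont hB) (cl_meas hB)
  let X : Ω → ℝ → EuclideanSpace ℝ (Fin d) := fun ω t => cl B t ω + f t
  have hXm : Measurable fun z : Ω × ℝ => X z.1 z.2 :=
    (hBm.comp measurable_swap).add (hfm.comp measurable_snd)
  have hXm1 : Measurable fun z : (Ω × ℝ) × ℝ => X z.1.1 z.1.2 := hXm.comp measurable_fst
  have hXm2 : Measurable fun z : (Ω × ℝ) × ℝ => X z.1.1 z.2 :=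
    hXm.comp (measurable_fst.fst.prodMk measurable_snd)
  have hSm : ∀ r : ℝ, MeasurableSet {z : (Ω × ℝ) × ℝ | ‖X z.1.1 z.1.2 - X z.1.1 z.2‖ ≤ r} := fun r =>
    measurableSet_le (hXm1.sub hXm2).norm measurable_const
  let F : ℕ → Ω × ℝ → ℝ≥0∞ := fun n z => ((n : ℝ≥0∞) + 1) ^ d *
      ν {t | ‖X z.1 z.2 - X z.1 t‖ ≤ 1 / ((n : ℝ) + 1)}
  have hFm : ∀ n, Measurable (F n) := fun n =>
    (measurable_measure_prodMk_left (hSm (1 / ((n : ℝ) + 1)))).const_mul _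
  set C := ENNReal.ofReal ((2 * d) ^ d * (d.factorial * Real.exp 2)) with hC
  have hFint : ∀ n, ∫⁻ z, F n z ∂(ℙ.prod ν) ≤ C * energy (parabolicDist H) d μ := by
    intro n
    have hpos : (0:ℝ) < 1 / ((n : ℝ) + 1) := by positivity
    rw [lintegral_prod_symm' _ (hFm n), ← hen2,
      ← lintegral_const_mul _ hkm.lintegral_prod_right]
    apply lintegral_mono_ae
    filter_upwards [hνE] with s hs
    have hSs : MeasurableSet {z : Ω × ℝ | ‖X z.1 s - X z.1 z.2‖ ≤ 1 / ((n : ℝ) + 1)} := by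
      have : Measurable fun z : Ω × ℝ => ((z.1, s), z.2) := by fun_prop
      exact this (hSm _)
    simp only [F]
    have hm1 : Measurable fun ω => ν {t | ‖X ω s - X ω t‖ ≤ 1 / ((n : ℝ) + 1)} :=
      measurable_measure_prodMk_left hSs
    have hm2 : Measurable fun t => ℙ {ω | ‖X ω s - X ω t‖ ≤ 1 / ((n : ℝ) + 1)} :=
      measurable_measure_prodMk_right hSs
    have hm3 := hk1 s
    rw [lintegral_const_mul _ hm1]
    have e := (Measure.prod_apply (μ := ℙ) (ν := ν) hSs).symm.trans (Measure.prod_apply_symm hSs)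
    have e' : ∫⁻ ω, ν {t | ‖X ω s - X ω t‖ ≤ 1 / ((n : ℝ) + 1)} ∂ℙ =
      ∫⁻ t, ℙ {ω | ‖X ω s - X ω t‖ ≤ 1 / ((n : ℝ) + 1)} ∂ν := e
    rw [e', ← lintegral_const_mul _ hm2, ← lintegral_const_mul _ hm3]
    apply lintegral_mono_ae
    filter_upwards [hνE] with t ht
    have hsb := small_ball hH hd hB (hE hs) (hE ht) (f s) (f t) (fun h => by rw [h]) _ hpos
    simp only [X, cl_eq B (hE hs), cl_eq B (hE ht)]
    refine (mul_le_mul_right hsb _).trans ?_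
    rw [← hC]
    have e1 : ENNReal.ofReal (1 / ((n:ℝ) + 1)) = ((n : ℝ≥0∞) + 1)⁻¹ := by
      rw [one_div, ENNReal.ofReal_inv_of_pos (by positivity)]
      congr
      rw [ENNReal.ofReal_add (by positivity) (by positivity)]; simp
    rw [e1]
    have e3 : ((n : ℝ≥0∞) + 1) ^ d * (((n : ℝ≥0∞) + 1)⁻¹) ^ d = 1 := by
      rw [← mul_pow, ENNReal.mul_inv_cancel (by simp) (by finiteness), one_pow]
    calc ((n : ℝ≥0∞) + 1) ^ d * (C * ((((n : ℝ≥0∞) + 1)⁻¹) ^ d * k s t))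
        = C * ((((n : ℝ≥0∞) + 1) ^ d * (((n : ℝ≥0∞) + 1)⁻¹) ^ d) * k s t) := by ring
      _ ≤ C * k s t := by rw [e3, one_mul]
  have hlim : ∫⁻ z, liminf (fun n => F n z) atTop ∂(ℙ.prod ν) < ∞ := by
    refine (lintegral_liminf_le hFm).trans_lt ?_
    refine lt_of_le_of_lt (b := C * energy (parabolicDist H) d μ) ?_ (ENNReal.mul_lt_top ENNReal.ofReal_lt_top hen)
    refine liminf_le_of_le (by isBoundedDefault) fun b hb => ?_
    obtain ⟨n, hn⟩ := hb.exists
    exact hn.trans (hFint n)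
  have hae1 := ae_lt_top (Measurable.liminf hFm) hlim.ne
  have hae2 := Measure.ae_ae_of_ae_prod hae1
  filter_upwards [hae2] with ω hω
  have := pos_vol ν E hνE1 (X ω) (hXm.comp measurable_prodMk_left) hω
  convert! this using 2
  apply image_congr
  intro t ht
  simp only [X, cl_eq B (hE ht)]

end FBMaux
namespace FBMaux
open Filter Topology

theorem moment {Ω : Type*} [MeasurableSpace Ω] {ℙ : Measure Ω} 
    {H : ℝ} (hH : H ∈ Set.Ioo (0 : ℝ) 1) {d : ℕ} (hd : 0 < d)
    {B : Ω → ℝ → EuclideanSpace ℝ (Fin d)} (hB : IsFBM ℙ H d B) (q : ℕ) (hq : q ≠ 0) :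
    ∃ K : ℝ≥0∞, K ≠ ∞ ∧ ∀ s t : ℝ,
      ∫⁻ ω, ‖cl B s ω - cl B t ω‖ₑ ^ q ∂ℙ ≤ K * ENNReal.ofReal (|s - t| ^ H) ^ q := by
  set M := ∫⁻ x : ℝ, ‖x‖ₑ ^ q ∂(ProbabilityTheory.gaussianReal 0 1) with hM
  have hMt : M ≠ ∞ := by
    have h := (ProbabilityTheory.memLp_id_gaussianReal' (μ := 0) (v := 1) (q : ℝ≥0∞) (by simp)).eLpNorm_lt_top
    have h2 := lintegral_rpow_enorm_lt_top_of_eLpNorm_lt_top (by exact_mod_cast hq) (by simp) h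
    simpa using h2.ne
  refine ⟨(d : ℝ≥0∞) ^ q * (d * M), by finiteness, ?_⟩
  have main : ∀ s ∈ Icc (0:ℝ) 1, ∀ t ∈ Icc (0:ℝ) 1,
      ∫⁻ ω, ‖B ω s - B ω t‖ₑ ^ q ∂ℙ ≤ (d : ℝ≥0∞) ^ q * (d * M) * ENNReal.ofReal (|s - t| ^ H) ^ q := by
    intro s hs t ht
    have hmeas : ∀ u i, Measurable fun ω => B ω u i := by
      intro u i
      have := hB.meas u
      fun_prop
    have hmm : ∀ i, Measurable fun ω => B ω s i - B ω t i := fun i => (hmeas s i).sub (hmeas t i)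
    have h1 : ∀ i, ∫⁻ ω, ‖B ω s i - B ω t i‖ₑ ^ q ∂ℙ = ENNReal.ofReal (|s - t| ^ H) ^ q * M := by
      intro i
      obtain ⟨v, hv, hl⟩ := incr_law hH hB i hs ht
      set σ := |s - t| ^ H with hσ
      have hσ0 : 0 ≤ σ := by positivity
      have hg : ProbabilityTheory.gaussianReal 0 v =
          (ProbabilityTheory.gaussianReal 0 1).map (σ * ·) := by
        rw [ProbabilityTheory.gaussianReal_map_const_mul]
        congr 1
        · simp
        · ext; simp [hv]
      calc ∫⁻ ω, ‖B ω s i - B ω t i‖ₑ ^ q ∂ℙ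
          = ∫⁻ x, ‖x‖ₑ ^ q ∂(Measure.map (fun ω => B ω s i - B ω t i) ℙ) := by
            rw [lintegral_map (by fun_prop) (hmm i)]
        _ = ∫⁻ x, ‖σ * x‖ₑ ^ q ∂(ProbabilityTheory.gaussianReal 0 1) := by
            rw [hl, hg, lintegral_map (by fun_prop) (by fun_prop)]
        _ = _ := by
            simp only [enorm_mul, mul_pow]
            rw [lintegral_const_mul _ (by fun_prop), Real.enorm_eq_ofReal hσ0]
    have h2 : ∀ x : EuclideanSpace ℝ (Fin d), ‖x‖ₑ ^ q ≤ (d : ℝ≥0∞) ^ q * ∑ i, ‖x i‖ₑ ^ q := by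
      intro x
      obtain ⟨j, hj⟩ := norm_le_card_mul hd x
      have : ‖x‖ₑ ≤ d * ‖x j‖ₑ := by
        rw [← ofReal_norm, ← ofReal_norm, Real.norm_eq_abs, ← ENNReal.ofReal_natCast, ← ENNReal.ofReal_mul (by positivity)]
        exact ENNReal.ofReal_le_ofReal hj
      calc ‖x‖ₑ ^ q ≤ (d * ‖x j‖ₑ) ^ q := by gcongr
        _ = (d : ℝ≥0∞) ^ q * ‖x j‖ₑ ^ q := mul_pow _ _ _
        _ ≤ _ := by
          gcongr
          exact Finset.single_le_sum (f := fun i => ‖x i‖ₑ ^ q) (fun _ _ => zero_le) (Finset.mem_univ j)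
    calc ∫⁻ ω, ‖B ω s - B ω t‖ₑ ^ q ∂ℙ
        ≤ ∫⁻ ω, (d : ℝ≥0∞) ^ q * ∑ i, ‖B ω s i - B ω t i‖ₑ ^ q ∂ℙ := lintegral_mono fun ω => h2 _
      _ = (d : ℝ≥0∞) ^ q * ∑ i : Fin d, (ENNReal.ofReal (|s - t| ^ H) ^ q * M) := by
          have hms : ∀ i, Measurable fun ω => ‖B ω s i - B ω t i‖ₑ ^ q := fun i => (hmm i).enorm.pow_const q
          rw [lintegral_const_mul _ (Finset.measurable_sum _ fun i _ => hms i),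
            lintegral_finsetSum _ (fun i _ => hms i)]
          simp_rw [h1]
      _ ≤ _ := by simp; apply le_of_eq; ring
  intro s t
  refine (main _ (projIcc (0:ℝ) 1 zero_le_one s).2 _ (projIcc (0:ℝ) 1 zero_le_one t).2).trans ?_
  refine mul_le_mul_right (pow_le_pow_left' (ENNReal.ofReal_le_ofReal ?_) q) _
  exact Real.rpow_le_rpow (abs_nonneg _) (abs_projIcc_sub_projIcc _) hH.1.le

/-- dyadic increments sum -/
noncomputable def Zf {V : Type*} [NormedAddCommGroup V] (q : ℕ) (g : ℝ → V) : ℝ≥0∞ :=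
  ∑' k : ℕ, (2:ℝ≥0∞) ^ k * ∑ j ∈ Finset.range (2 ^ k),
    ‖g (((j:ℝ) + 1) / 2 ^ k) - g ((j:ℝ) / 2 ^ k)‖ₑ ^ q

theorem chain {V : Type*} [NormedAddCommGroup V] (q : ℕ) (hq : q ≠ 0) (g : ℝ → V) (hg : Continuous g)
    (x : ℝ) (hx : x ∈ Ico (0:ℝ) 1) :
    ‖g x - g 0‖ₑ ≤ (∑' k : ℕ, ((2:ℝ≥0∞) ^ (-(1 / (q:ℝ)))) ^ k) * Zf q g ^ (1 / (q:ℝ)) := by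
  have hq0 : (0:ℝ) < q := by positivity
  let y : ℕ → ℝ := fun k => (⌊2 ^ k * x⌋₊ : ℝ) / 2 ^ k
  have hy0 : y 0 = 0 := by
    simp [y, Nat.floor_eq_zero.2 hx.2]
  have hylim : Tendsto y atTop (𝓝 x) := by
    have h2 : Tendsto (fun k : ℕ => (2:ℝ) ^ k) atTop atTop := tendsto_pow_atTop_atTop_of_one_lt (by norm_num)
    have h3 := (tendsto_nat_floor_mul_div_atTop hx.1).comp h2
    refine h3.congr fun k => ?_
    simp only [y, Function.comp, mul_comm]
  -- increment bound
  have hterm : ∀ k, ‖g (y (k+1)) - g (y k)‖ₑ ≤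
      ((2:ℝ≥0∞) ^ (-(1 / (q:ℝ)))) ^ (k+1) * Zf q g ^ (1 / (q:ℝ)) := by
    intro k
    set i := ⌊2 ^ k * x⌋₊ with hi
    have hx0 : 0 ≤ 2 ^ k * x := mul_nonneg (by positivity) hx.1
    have hx0' : 0 ≤ 2 ^ (k+1) * x := mul_nonneg (by positivity) hx.1
    have hil : (i:ℝ) ≤ 2 ^ k * x := Nat.floor_le hx0
    have hiu : 2 ^ k * x < i + 1 := Nat.lt_floor_add_one _
    have hik : i < 2 ^ k := by
      have : (i:ℝ) < 2 ^ k := by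
        have : (2:ℝ) ^ k * x < 2 ^ k * 1 := by gcongr; exact hx.2
        linarith
      exact_mod_cast this
    have hyk : y k = ((2 * i : ℕ) : ℝ) / 2 ^ (k+1) := by
      simp only [y, ← hi]; push_cast; rw [pow_succ]; field_simp
    have hps : (2:ℝ) ^ (k+1) * x = 2 * (2 ^ k * x) := by ring
    have hcases : ⌊2 ^ (k+1) * x⌋₊ = 2 * i ∨ ⌊2 ^ (k+1) * x⌋₊ = 2 * i + 1 := by
      have h1 : 2 * i ≤ ⌊2 ^ (k+1) * x⌋₊ := by
        apply Nat.le_floor; push_cast; linarith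
      have h2 : ⌊2 ^ (k+1) * x⌋₊ < 2 * i + 2 := by
        rw [Nat.floor_lt hx0']; push_cast; linarith
      omega
    rcases hcases with hc | hc
    · have : y (k+1) = y k := by rw [hyk]; simp only [y, hc]
      rw [this]; simp
    · have hyk1 : y (k+1) = (((2 * i : ℕ) : ℝ) + 1) / 2 ^ (k+1) := by simp only [y, hc]; push_cast; rfl
      rw [hyk1, hyk]
      set D := ‖g ((((2 * i : ℕ) : ℝ) + 1) / 2 ^ (k+1)) - g (((2 * i : ℕ) : ℝ) / 2 ^ (k+1))‖ₑ with hD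
      have hZ : (2:ℝ≥0∞) ^ (k+1) * D ^ q ≤ Zf q g := by
        refine le_trans ?_ (ENNReal.le_tsum (k+1))
        gcongr
        refine Finset.single_le_sum (f := fun j : ℕ => ‖g (((j:ℝ) + 1) / 2 ^ (k+1)) - g ((j:ℝ) / 2 ^ (k+1))‖ₑ ^ q)
          (fun _ _ => zero_le) (Finset.mem_range.2 ?_)
        rw [pow_succ]; omega
      have h3 : ((2:ℝ≥0∞) ^ (k+1) * D ^ q) ^ (1 / (q:ℝ)) ≤ Zf q g ^ (1 / (q:ℝ)) := by gcongr
      calc D = ((2:ℝ≥0∞) ^ (-(1 / (q:ℝ)))) ^ (k+1) * ((2:ℝ≥0∞) ^ (k+1) * D ^ q) ^ (1 / (q:ℝ)) := by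
            rw [ENNReal.mul_rpow_of_nonneg _ _ (by positivity), ← ENNReal.rpow_natCast D, ← ENNReal.rpow_mul,
              mul_one_div_cancel hq0.ne', ENNReal.rpow_one, ← mul_assoc, ← ENNReal.rpow_natCast, ← ENNReal.rpow_natCast,
              ← ENNReal.rpow_mul, ← ENNReal.rpow_mul, ← ENNReal.rpow_add _ _ (by norm_num) (by norm_num)]
            have : -(1 / (q:ℝ)) * ((k+1 : ℕ) : ℝ) + ((k+1:ℕ):ℝ) * (1 / (q:ℝ)) = 0 := by ring
            rw [this]; simp
        _ ≤ _ := by gcongr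
  have hpart : ∀ n, ‖g (y n) - g 0‖ₑ ≤ ∑ k ∈ Finset.range n, ((2:ℝ≥0∞) ^ (-(1 / (q:ℝ)))) ^ (k+1) * Zf q g ^ (1 / (q:ℝ)) := by
    intro n
    induction n with
    | zero => simp [hy0]
    | succ n ih =>
      rw [Finset.sum_range_succ]
      calc ‖g (y (n+1)) - g 0‖ₑ = ‖(g (y (n+1)) - g (y n)) + (g (y n) - g 0)‖ₑ := by rw [sub_add_sub_cancel]
        _ ≤ ‖g (y (n+1)) - g (y n)‖ₑ + ‖g (y n) - g 0‖ₑ := enorm_add_le _ _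
        _ ≤ _ := by rw [add_comm]; exact add_le_add ih (hterm n)
  have hlim : Tendsto (fun n => ‖g (y n) - g 0‖ₑ) atTop (𝓝 ‖g x - g 0‖ₑ) :=
    (((hg.tendsto x).comp hylim).sub_const (g 0)).enorm
  refine le_of_tendsto' hlim fun n => (hpart n).trans ?_
  rw [← Finset.sum_mul]
  gcongr
  refine le_trans ?_ (ENNReal.sum_le_tsum (Finset.range (n+1)))
  rw [Finset.sum_range_succ']
  exact le_self_add

theorem Z_int {Ω : Type*} [MeasurableSpace Ω] {ℙ : Measure Ω} {H : ℝ} (hH : H ∈ Set.Ioo (0 : ℝ) 1) {d : ℕ}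
    {B : Ω → ℝ → EuclideanSpace ℝ (Fin d)} (hB : IsFBM ℙ H d B) (q : ℕ) (hq : 3 ≤ H * q) (K : ℝ≥0∞)
    (hK : ∀ s t : ℝ,
      ∫⁻ ω, ‖cl B s ω - cl B t ω‖ₑ ^ q ∂ℙ ≤ K * ENNReal.ofReal (|s - t| ^ H) ^ q) (u h : ℝ) (hh : 0 < h) :
    Measurable (fun ω => Zf q (fun x => cl B (u + h * x) ω)) ∧
    ∫⁻ ω, Zf q (fun x => cl B (u + h * x) ω) ∂ℙ ≤ 2 * K * ENNReal.ofReal (h ^ H) ^ q := by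
  have hm : ∀ s t, Measurable fun ω => ‖cl B s ω - cl B t ω‖ₑ ^ q := fun s t =>
    ((cl_meas hB s).sub (cl_meas hB t)).enorm.pow_const q
  unfold Zf
  refine ⟨Measurable.tsum fun k => (Finset.measurable_sum _ fun j _ => hm _ _).const_mul _, ?_⟩
  rw [lintegral_tsum fun k => ((Finset.measurable_sum _ fun j _ => hm _ _).const_mul _).aemeasurable]
  have hk : ∀ k : ℕ, ∫⁻ ω, (2:ℝ≥0∞) ^ k * ∑ j ∈ Finset.range (2 ^ k),
      ‖cl B (u + h * (((j:ℝ) + 1) / 2 ^ k)) ω - cl B (u + h * ((j:ℝ) / 2 ^ k)) ω‖ₑ ^ q ∂ℙ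
      ≤ (2:ℝ≥0∞)⁻¹ ^ k * (K * ENNReal.ofReal (h ^ H) ^ q) := by
    intro k
    rw [lintegral_const_mul _ (Finset.measurable_sum _ fun j _ => hm _ _),
      lintegral_finsetSum _ (fun j _ => hm _ _)]
    have hinc : ∀ j : ℕ, ∫⁻ ω, ‖cl B (u + h * (((j:ℝ) + 1) / 2 ^ k)) ω - cl B (u + h * ((j:ℝ) / 2 ^ k)) ω‖ₑ ^ q ∂ℙ
        ≤ K * (ENNReal.ofReal (h ^ H) ^ q * (2:ℝ≥0∞)⁻¹ ^ (3 * k)) := by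
      intro j
      refine (hK _ _).trans ?_
      gcongr
      have e : |u + h * (((j:ℝ) + 1) / 2 ^ k) - (u + h * ((j:ℝ) / 2 ^ k))| = h * (1/2) ^ k := by
        have : u + h * (((j:ℝ) + 1) / 2 ^ k) - (u + h * ((j:ℝ) / 2 ^ k)) = h * (1/2) ^ k := by
          rw [one_div, inv_pow]; field_simp; ring
        rw [this, abs_of_pos (by positivity)]
      rw [e, Real.mul_rpow hh.le (by positivity), ENNReal.ofReal_mul (by positivity), mul_pow]
      refine mul_le_mul_right ?_ _
      rw [← ENNReal.ofReal_pow (by positivity)]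
      have e2 : (2:ℝ≥0∞)⁻¹ ^ (3 * k) = ENNReal.ofReal ((1/2) ^ (3 * k)) := by
        rw [ENNReal.ofReal_pow (by norm_num), one_div, ENNReal.ofReal_inv_of_pos (by norm_num)]; simp
      rw [e2]
      apply ENNReal.ofReal_le_ofReal
      rw [← Real.rpow_natCast, ← Real.rpow_natCast, ← Real.rpow_natCast, ← Real.rpow_mul (by norm_num), ← Real.rpow_mul (by norm_num)]
      apply Real.rpow_le_rpow_of_exponent_ge (by norm_num) (by norm_num)
      push_cast
      have : (0:ℝ) ≤ k := by positivity
      nlinarith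
    calc (2:ℝ≥0∞) ^ k * ∑ j ∈ Finset.range (2 ^ k), ∫⁻ ω, ‖cl B (u + h * (((j:ℝ) + 1) / 2 ^ k)) ω - cl B (u + h * ((j:ℝ) / 2 ^ k)) ω‖ₑ ^ q ∂ℙ
        ≤ (2:ℝ≥0∞) ^ k * ∑ j ∈ Finset.range (2 ^ k), (K * (ENNReal.ofReal (h ^ H) ^ q * (2:ℝ≥0∞)⁻¹ ^ (3 * k))) := by
          gcongr with j _; exact hinc j
      _ = ((2:ℝ≥0∞) * 2⁻¹) ^ k * ((2:ℝ≥0∞) * 2⁻¹) ^ k * (2⁻¹ ^ k * (K * ENNReal.ofReal (h ^ H) ^ q)) := by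
          simp only [Finset.sum_const, Finset.card_range, nsmul_eq_mul]; push_cast
          rw [mul_pow, mul_comm 3 k, pow_mul]; ring
      _ ≤ _ := by rw [ENNReal.mul_inv_cancel (by norm_num) (by norm_num)]; simp
  refine (ENNReal.tsum_le_tsum hk).trans ?_
  rw [ENNReal.tsum_mul_right, ENNReal.tsum_geometric]
  simp [mul_assoc]

end FBMaux
namespace FBMaux
open Filter Topology

theorem vol_le {d : ℕ} (hd : 0 < d) (S : Set (EuclideanSpace ℝ (Fin d))) (y : EuclideanSpace ℝ (Fin d))
    (R : ℝ≥0∞) (h : ∀ x ∈ S, ‖x - y‖ₑ ≤ R) :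
    volume S ≤ volume (Metric.closedBall (0 : EuclideanSpace ℝ (Fin d)) 1) * R ^ d := by
  have hV0 : volume (Metric.closedBall (0 : EuclideanSpace ℝ (Fin d)) 1) ≠ 0 :=
    (Metric.measure_closedBall_pos volume _ one_pos).ne'
  rcases eq_or_ne R ∞ with hR | hR
  · rw [hR, ENNReal.top_pow hd.ne', ENNReal.mul_top hV0]; exact le_top
  · have hsub : S ⊆ Metric.closedBall y R.toReal := by
      intro x hx
      rw [Metric.mem_closedBall, dist_eq_norm, ← toReal_enorm]
      exact ENNReal.toReal_mono hR (h x hx)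
    refine (measure_mono hsub).trans ?_
    rw [Measure.addHaar_closedBall' _ _ ENNReal.toReal_nonneg, finrank_euclideanSpace_fin,
      ENNReal.ofReal_pow ENNReal.toReal_nonneg, ENNReal.ofReal_toReal hR, mul_comm]

theorem pow_bound (C Z ρ : ℝ≥0∞) (hρ0 : ρ ≠ 0) (hρt : ρ ≠ ∞) (d q : ℕ) (hdq : d ≤ q) (hq : q ≠ 0) :
    (C * Z ^ (1 / (q:ℝ)) + ρ) ^ d ≤ ρ ^ d * (C + 1) ^ d * (1 + Z / ρ ^ q) := by
  have hq0 : (0:ℝ) < q := by positivity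
  set W := Z / ρ ^ q with hW
  have hpt : ρ ^ q ≠ ∞ := by finiteness
  have hp0 : ρ ^ q ≠ 0 := pow_ne_zero _ hρ0
  have hZ : Z ^ (1 / (q:ℝ)) = W ^ (1 / (q:ℝ)) * ρ := by
    have : Z = W * ρ ^ q := by rw [hW, ENNReal.div_mul_cancel hp0 hpt]
    rw [this, ENNReal.mul_rpow_of_nonneg _ _ (by positivity), ← ENNReal.rpow_natCast ρ, ← ENNReal.rpow_mul,
      mul_one_div_cancel hq0.ne', ENNReal.rpow_one]
  set w := (1 + W) ^ (1 / (q:ℝ)) with hw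
  have hw1 : 1 ≤ w := ENNReal.one_le_rpow (by simp) (by positivity)
  have hWw : W ^ (1 / (q:ℝ)) ≤ w := by rw [hw]; gcongr; exact le_add_self
  have hwd : w ^ d ≤ 1 + W := by
    calc w ^ d ≤ w ^ q := pow_le_pow_right₀ hw1 hdq
      _ = 1 + W := by
        rw [hw, ← ENNReal.rpow_natCast, ← ENNReal.rpow_mul, one_div_mul_cancel hq0.ne', ENNReal.rpow_one]
  calc (C * Z ^ (1 / (q:ℝ)) + ρ) ^ d = (ρ * (C * W ^ (1 / (q:ℝ)) + 1)) ^ d := by rw [hZ]; congr 1; ring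
    _ ≤ (ρ * (C * w + 1 * w)) ^ d := by gcongr; simpa using hw1
    _ = ρ ^ d * (C + 1) ^ d * w ^ d := by rw [← mul_pow, ← mul_pow]; congr 1; ring
    _ ≤ _ := by gcongr

theorem part_two {Ω : Type*} [MeasurableSpace Ω] (ℙ : Measure Ω) [IsProbabilityMeasure ℙ]
    (H : ℝ) (hH : H ∈ Set.Ioo (0 : ℝ) 1) (d : ℕ) (hd : 0 < d)
    (B : Ω → ℝ → EuclideanSpace ℝ (Fin d)) (hB : IsFBM ℙ H d B)
    (f : ℝ → EuclideanSpace ℝ (Fin d))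
    (E : Set ℝ) (hE : E ⊆ Icc (0:ℝ) 1)
    (hmz : hMeasure (parabolicDist H) d ((fun t => (t, f t)) '' E) = 0) :
    ∀ᵐ ω ∂ℙ, volume ((fun t => B ω t + f t) '' E) = 0 := by
  have hHp := hH.1
  obtain ⟨q0, hq0⟩ := exists_nat_ge (3 / H)
  set q := max q0 d with hqdef
  have hdq : d ≤ q := le_max_right _ _
  have hqne : q ≠ 0 := by omega
  have hq3 : 3 ≤ H * q := by
    rw [div_le_iff₀ hHp] at hq0
    have : (q0 : ℝ) ≤ q := by exact_mod_cast le_max_left _ _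
    nlinarith
  obtain ⟨K, hKt, hK⟩ := moment hH hd hB q hqne
  set C := (∑' k : ℕ, ((2:ℝ≥0∞) ^ (-(1 / (q:ℝ)))) ^ k) with hC
  have hCt : C ≠ ∞ := by
    rw [hC, ENNReal.tsum_geometric]
    apply ENNReal.inv_ne_top.2
    have : (2:ℝ≥0∞) ^ (-(1 / (q:ℝ))) < 1 := by
      apply ENNReal.rpow_lt_one_of_one_lt_of_neg (by norm_num)
      have : (0:ℝ) < q := by positivity
      simp [this]
    exact (tsub_pos_of_lt this).ne'
  set V := volume (Metric.closedBall (0 : EuclideanSpace ℝ (Fin d)) 1) with hV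
  have hVt : V ≠ ∞ := measure_closedBall_lt_top.ne
  set A := V * ((C + 1) ^ d * (1 + 2 * K * 2 ^ q)) with hA
  have hAt : A ≠ ∞ := by rw [hA]; finiteness
  -- approximations
  have happ : ∀ ε : ℝ≥0∞, 0 < ε → ∃ Y : Ω → ℝ≥0∞, Measurable Y ∧
      (∀ ω, volume ((fun t => B ω t + f t) '' E) ≤ Y ω) ∧ ∫⁻ ω, Y ω ∂ℙ ≤ A * ε := by
    intro ε hε
    have h1 : (⨅ (c : ℕ → ℝ × EuclideanSpace ℝ (Fin d)) (r : ℕ → ℝ)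
      (_ : ∀ n, 0 < r n ∧ r n ≤ 1) (_ : ((fun t => (t, f t)) '' E) ⊆ ⋃ n, {y | parabolicDist H y (c n) < r n}),
      ∑' n, ENNReal.ofReal ((2 * r n) ^ (d:ℝ))) < ε := by
      refine lt_of_le_of_lt ?_ hε
      rw [← hmz, hMeasure]
      exact le_iSup₂_of_le (1:ℝ) one_pos le_rfl
    simp only [iInf_lt_iff] at h1
    obtain ⟨c, r, hr, hcov, hsum⟩ := h1
    let p : ℕ → ℝ := fun i => r i ^ (1 / H)
    have hp : ∀ i, 0 < p i := fun i => Real.rpow_pos_of_pos (hr i).1 _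
    let Z : ℕ → Ω → ℝ≥0∞ := fun i ω => Zf q (fun x => cl B ((c i).1 - p i + (2 * p i) * x) ω)
    have hZ := fun i => Z_int hH hB q hq3 K hK ((c i).1 - p i) (2 * p i) (by have := hp i; positivity)
    let ρ : ℕ → ℝ≥0∞ := fun i => ENNReal.ofReal (r i)
    have hρ0 : ∀ i, ρ i ≠ 0 := fun i => by simp [ρ, (hr i).1]
    have hρt : ∀ i, ρ i ≠ ∞ := fun i => by simp [ρ]
    have hZm : ∀ i, Measurable (Z i) := fun i => (hZ i).1
    have hZi : ∀ i, ∫⁻ ω, Z i ω ∂ℙ ≤ 2 * K * (2 ^ q * ρ i ^ q) := by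
      intro i
      refine (hZ i).2.trans ?_
      rw [← mul_pow]
      gcongr
      have e : (2 * p i) ^ H = 2 ^ H * r i := by
        rw [Real.mul_rpow (by norm_num) (hp i).le, ← Real.rpow_mul (hr i).1.le, one_div_mul_cancel hHp.ne', Real.rpow_one]
      rw [e]
      have e2 : (2:ℝ≥0∞) * ρ i = ENNReal.ofReal (2 * r i) := by
        rw [ENNReal.ofReal_mul (by norm_num)]; simp [ρ]
      rw [e2]
      apply ENNReal.ofReal_le_ofReal
      have := (hr i).1
      gcongr
      calc (2:ℝ) ^ H ≤ 2 ^ (1:ℝ) := Real.rpow_le_rpow_of_exponent_le (by norm_num) hH.2.le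
        _ = 2 := by simp
    let T : ℕ → Ω → ℝ≥0∞ := fun i ω => V * (ρ i ^ d * (C + 1) ^ d * (1 + Z i ω / ρ i ^ q))
    have hTm : ∀ i, Measurable (T i) := fun i =>
      (((hZm i).div_const _).const_add _ |>.const_mul _).const_mul _
    refine ⟨fun ω => ∑' i, T i ω, Measurable.tsum hTm, ?_, ?_⟩
    · intro ω
      let J : ℕ → Set ℝ := fun i => {s | s ∈ E ∧ parabolicDist H (s, f s) (c i) < r i}
      have hsub : (fun t => B ω t + f t) '' E ⊆ ⋃ i, (fun t => B ω t + f t) '' J i := by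
        rintro _ ⟨s, hs, rfl⟩
        obtain ⟨i, hi⟩ := mem_iUnion.1 (hcov ⟨s, hs, rfl⟩)
        exact mem_iUnion.2 ⟨i, s, ⟨hs, hi⟩, rfl⟩
      refine (measure_mono hsub).trans ((measure_iUnion_le _).trans (ENNReal.tsum_le_tsum fun i => ?_))
      refine (vol_le hd _ (cl B ((c i).1 - p i) ω + (c i).2) (C * Z i ω ^ (1 / (q:ℝ)) + ρ i) ?_).trans ?_
      · rintro _ ⟨s, ⟨hs, hsJ⟩, rfl⟩
        rw [parabolicDist, max_lt_iff] at hsJ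
        obtain ⟨hs1, hs2⟩ := hsJ
        have hpi := hp i
        have hsp : |s - (c i).1| < p i := by
          have := Real.rpow_lt_rpow (by positivity) hs1 (z := 1 / H) (by positivity)
          rwa [← Real.rpow_mul (abs_nonneg _), mul_one_div_cancel hHp.ne', Real.rpow_one] at this
        rw [abs_lt] at hsp
        set x := (s - (c i).1 + p i) / (2 * p i) with hx
        have hxI : x ∈ Ico (0:ℝ) 1 := by
          constructor
          · apply div_nonneg <;> linarith
          · rw [div_lt_one (by positivity)]; linarith
        have hch := chain q hqne (fun x => cl B ((c i).1 - p i + (2 * p i) * x) ω)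
          ((cl_cont hB ω).comp (by fun_prop)) x hxI
        have hxs : (c i).1 - p i + (2 * p i) * x = s := by rw [hx]; field_simp; ring
        simp only [hxs, mul_zero, add_zero, cl_eq B (hE hs)] at hch
        have e : B ω s + f s - (cl B ((c i).1 - p i) ω + (c i).2) =
          (B ω s - cl B ((c i).1 - p i) ω) + (f s - (c i).2) := by abel
        show ‖B ω s + f s - (cl B ((c i).1 - p i) ω + (c i).2)‖ₑ ≤ _
        rw [e]
        refine (enorm_add_le _ _).trans (add_le_add hch ?_)
        rw [← ofReal_norm]
        apply ENNReal.ofReal_le_ofReal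
        rw [← dist_eq_norm]; exact hs2.le
      · exact mul_le_mul_right (pow_bound C (Z i ω) (ρ i) (hρ0 i) (hρt i) d q hdq hqne) _
    · rw [lintegral_tsum fun i => (hTm i).aemeasurable]
      calc ∑' i, ∫⁻ ω, T i ω ∂ℙ ≤ ∑' i, A * ENNReal.ofReal ((2 * r i) ^ (d:ℝ)) := by
            refine ENNReal.tsum_le_tsum fun i => ?_
            simp only [T]
            rw [lintegral_const_mul _ ((((hZm i).div_const _).const_add _).const_mul _),
              lintegral_const_mul _ (((hZm i).div_const _).const_add _),
              lintegral_add_left measurable_const]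
            simp only [div_eq_mul_inv]
            rw [lintegral_mul_const _ (hZm i), lintegral_const, measure_univ, mul_one]
            have hpt : ρ i ^ q ≠ ∞ := by have := hρt i; finiteness
            have hp0 : ρ i ^ q ≠ 0 := pow_ne_zero _ (hρ0 i)
            have hb : (∫⁻ ω, Z i ω ∂ℙ) * (ρ i ^ q)⁻¹ ≤ 2 * K * 2 ^ q := by
              refine (mul_le_mul_left (hZi i) _).trans ?_
              rw [mul_assoc, mul_assoc (2 ^ q), ENNReal.mul_inv_cancel hp0 hpt, mul_one]
            have hrd : ρ i ^ d ≤ ENNReal.ofReal ((2 * r i) ^ (d:ℝ)) := by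
              have := (hr i).1
              rw [Real.rpow_natCast, ← ENNReal.ofReal_pow this.le]
              apply ENNReal.ofReal_le_ofReal
              gcongr; linarith
            calc V * (ρ i ^ d * (C + 1) ^ d * (1 + (∫⁻ ω, Z i ω ∂ℙ) * (ρ i ^ q)⁻¹))
                ≤ V * (ENNReal.ofReal ((2 * r i) ^ (d:ℝ)) * (C + 1) ^ d * (1 + 2 * K * 2 ^ q)) := by gcongr
              _ = _ := by rw [hA]; ring
        _ = A * ∑' i, ENNReal.ofReal ((2 * r i) ^ (d:ℝ)) := ENNReal.tsum_mul_left
        _ ≤ A * ε := by gcongr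
  choose Y hYm hYle hYint using fun n : ℕ => happ ((n : ℝ≥0∞) + 1)⁻¹ (by simp)
  have hz : ∫⁻ ω, liminf (fun n => Y n ω) atTop ∂ℙ = 0 := by
    apply le_antisymm _ zero_le
    refine (lintegral_liminf_le hYm).trans ?_
    have hlim : Tendsto (fun n : ℕ => A * ((n : ℝ≥0∞) + 1)⁻¹) atTop (𝓝 0) := by
      have h0 : Tendsto (fun n : ℕ => ((n : ℝ≥0∞) + 1)⁻¹) atTop (𝓝 0) := by
        have := (tendsto_add_atTop_iff_nat 1).2 ENNReal.tendsto_inv_nat_nhds_zero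
        simpa using this
      simpa using ENNReal.Tendsto.const_mul h0 (Or.inr hAt)
    rw [← hlim.liminf_eq]
    exact liminf_le_liminf (Eventually.of_forall hYint)
  rw [lintegral_eq_zero_iff (Measurable.liminf hYm)] at hz
  filter_upwards [hz] with ω hω
  apply le_antisymm _ zero_le
  have : volume ((fun t => B ω t + f t) '' E) ≤ liminf (fun n => Y n ω) atTop :=
    le_liminf_of_le (by isBoundedDefault) (Eventually.of_forall fun n => hYle n ω)
  exact this.trans hω.le

end FBMaux
/-- Corollary 5.3: for a bounded Borel measurable drift `f` and a
Borel set `E ⊆ I`: (i) if `C^d_{ρ_H}(Gr_E(f)) > 0` then `λ_d((B^H+f)(E)) > 0` with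
positive probability; (ii) if `ℋ^d_{ρ_H}(Gr_E(f)) = 0` then `λ_d((B^H+f)(E)) = 0` a.s. -/
theorem statement16 {Ω : Type*} [MeasurableSpace Ω] (ℙ : Measure Ω) [IsProbabilityMeasure ℙ]
    (H : ℝ) (hH : H ∈ Set.Ioo (0 : ℝ) 1) (d : ℕ) (hd : 0 < d)
    (B : Ω → ℝ → EuclideanSpace ℝ (Fin d)) (hB : IsFBM ℙ H d B)
    (a b : ℝ) (ha : 0 < a) (hab : a < b) (hb : b ≤ 1)
    (f : ℝ → EuclideanSpace ℝ (Fin d)) (hfm : Measurable f)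
    (hfb : ∃ M₀ : ℝ, ∀ t ∈ Set.Icc (0 : ℝ) 1, ‖f t‖ ≤ M₀)
    (E : Set ℝ) (hE : MeasurableSet E) (hEI : E ⊆ Set.Icc a b) :
    (0 < capacity (parabolicDist H) d ((fun t => (t, f t)) '' E) →
      0 < ℙ {ω | 0 < volume ((fun t => B ω t + f t) '' E)}) ∧
    (hMeasure (parabolicDist H) d ((fun t => (t, f t)) '' E) = 0 →
      ℙ {ω | volume ((fun t => B ω t + f t) '' E) = 0} = 1) := by
  have hE01 : E ⊆ Icc (0:ℝ) 1 := fun t ht =>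
    ⟨ha.le.trans (hEI ht).1, (hEI ht).2.trans hb⟩
  have key : ∀ p : Ω → Prop, (∀ᵐ ω ∂ℙ, p ω) → ℙ {ω | p ω} = 1 := by
    intro p hp
    rw [← measure_univ (μ := ℙ)]
    apply measure_congr
    filter_upwards [hp] with ω hω
    exact eq_true hω
  refine ⟨fun h => ?_, fun h => ?_⟩
  · rw [key _ (FBMaux.part_one ℙ H hH d hd B hB f hfm E hE01 h)]
    exact one_pos
  · exact key _ (FBMaux.part_two ℙ H hH d hd B hB f E hE01 h)
end

section
/- Let B^H = {B^H(t) : t ∈ [0,1]} be a d-dimensional fractional Brownian motion of Hurst index H ∈ (0,1) with Hd < 1, let I = [a,b] with 0 < a < b ≤ 1, and let f : [0,1] → ℝ^d be an H-Hölder continuous function. Then there exist two Borel subsets E₁ and E₂ of I with dim(E₁) = dim(E₂) = Hd such that for every x ∈ ℝ^d: ℙ{∃ s ∈ E₁ : B^H(s) + f(s) = x} = 0 and ℙ{∃ s ∈ E₂ : B^H(s) + f(s) = x} > 0. -/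
open MeasureTheory Set ENNReal

section Aux

open ProbabilityTheory Filter Topology

lemma aux_gauss_upper (v : NNReal) (hv : v ≠ 0) (s : Set ℝ) :
    gaussianReal 0 v s ≤ ENNReal.ofReal (1 / √v) * volume s := by
  rw [gaussianReal_apply 0 hv]
  have hv' : (0:ℝ) < v := by positivity
  calc ∫⁻ x in s, gaussianPDF 0 v x ≤ ∫⁻ x in s, ENNReal.ofReal (1 / √v) := by
        apply lintegral_mono
        intro x
        apply ENNReal.ofReal_le_ofReal
        rw [gaussianPDFReal]
        have h1 : Real.exp (-(x - 0) ^ 2 / (2 * v)) ≤ 1 := by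
          rw [Real.exp_le_one_iff]
          apply div_nonpos_of_nonpos_of_nonneg <;> nlinarith [sq_nonneg (x-0)]
        have h2 : (√(2 * Real.pi * v))⁻¹ ≤ 1 / √v := by
          rw [one_div]
          apply inv_anti₀ (by positivity)
          apply Real.sqrt_le_sqrt
          nlinarith [Real.pi_gt_three]
        calc _ ≤ (1 / √v) * 1 := by gcongr
          _ = _ := by ring
    _ = _ := by simp

lemma aux_gauss_lower (v : NNReal) (hv : v ≠ 0) (hv1 : v ≤ 1) (M : ℝ) (lo : ℝ) (hlo : 0 < lo)
    (hlov : lo ≤ v) (s : Set ℝ) (hsM : ∀ x ∈ s, |x| ≤ M) :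
    ENNReal.ofReal ((√(2 * Real.pi))⁻¹ * Real.exp (- M ^ 2 / (2 * lo))) * volume s
      ≤ gaussianReal 0 v s := by
  rw [gaussianReal_apply 0 hv]
  have hv' : (0:ℝ) < v := by positivity
  have hv1' : (v:ℝ) ≤ 1 := by exact_mod_cast hv1
  calc _ = ∫⁻ x in s, ENNReal.ofReal ((√(2 * Real.pi))⁻¹ * Real.exp (- M ^ 2 / (2 * lo))) := by simp
    _ ≤ ∫⁻ x in s, gaussianPDF 0 v x := by
        apply setLIntegral_mono (measurable_gaussianPDF _ _)
        intro x hx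
        apply ENNReal.ofReal_le_ofReal
        rw [gaussianPDFReal]
        have hxM : x ^ 2 ≤ M ^ 2 := sq_le_sq' (by linarith [(abs_le.1 (hsM x hx)).1]) (abs_le.1 (hsM x hx)).2
        have h1 : Real.exp (- M ^ 2 / (2 * lo)) ≤ Real.exp (-(x - 0) ^ 2 / (2 * v)) := by
          rw [Real.exp_le_exp, neg_div, neg_div, neg_le_neg_iff, sub_zero]
          gcongr
        have h2 : (√(2 * Real.pi))⁻¹ ≤ (√(2 * Real.pi * v))⁻¹ := by
          apply inv_anti₀ (by positivity)
          apply Real.sqrt_le_sqrt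
          nlinarith [Real.pi_gt_three]
        gcongr

lemma aux_gauss_tail {Ω : Type*} [MeasurableSpace Ω] (P : Measure Ω) [IsProbabilityMeasure P]
    (X : Ω → ℝ) (hX : Measurable X) (v : NNReal) (hv : v ≠ 0) (h : P.map X = gaussianReal 0 v)
    (l : ℝ) (hl : 0 ≤ l) :
    P {ω | l < |X ω|} ≤ ENNReal.ofReal (2 * Real.exp (- l ^ 2 / (2 * v))) := by
  have hv' : (0:ℝ) < v := by positivity
  have key : ∀ Y : Ω → ℝ, Measurable Y → P.map Y = gaussianReal 0 v →
      P.real {ω | l ≤ Y ω} ≤ Real.exp (- l ^ 2 / (2 * v)) := by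
    intro Y hY hYl
    have := measure_ge_le_exp_mul_mgf (μ := P) (X := Y) (t := l / v) l (by positivity) (by
      have h1 := integrable_exp_mul_gaussianReal (μ := 0) (v := v) (l / v)
      rw [← hYl] at h1
      exact h1.comp_measurable hY)
    refine this.trans (le_of_eq ?_)
    rw [mgf_gaussianReal hYl, ← Real.exp_add]
    congr 1
    field_simp
    ring
  have hneg : P.map (fun ω => - X ω) = gaussianReal 0 v := by
    have : P.map (fun ω => - X ω) = (P.map X).map (fun x => -x) := by
      rw [Measure.map_map (by fun_prop) hX]; rfl
    rw [this, h, gaussianReal_map_neg, neg_zero]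
  have hsub : {ω | l < |X ω|} ⊆ {ω | l ≤ X ω} ∪ {ω | l ≤ - X ω} := by
    intro ω hω
    simp only [mem_ofPred_eq, mem_union] at hω ⊢
    rcases lt_abs.1 hω with h | h
    · exact Or.inl h.le
    · exact Or.inr h.le
  rw [← ofReal_measureReal]
  apply ENNReal.ofReal_le_ofReal
  calc P.real {ω | l < |X ω|} ≤ P.real ({ω | l ≤ X ω} ∪ {ω | l ≤ - X ω}) := measureReal_mono hsub
    _ ≤ _ := measureReal_union_le _ _
    _ ≤ _ := by
      have := key X hX h
      have := key (fun ω => - X ω) hX.neg hneg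
      linarith

lemma aux_pair {Ω : Type*} [MeasurableSpace Ω] (P : Measure Ω) [IsProbabilityMeasure P]
    (U V : Ω → ℝ) (hU : Measurable U) (hV : Measurable V) (A C D : ℝ) (hA : 0 < A)
    (hΔ : 0 < A * D - C ^ 2)
    (hlaw : ∀ x y : ℝ, ∃ v : NNReal, (v : ℝ) = x ^ 2 * A + 2 * x * y * C + y ^ 2 * D ∧
      P.map (fun ω => x * U ω + y * V ω) = gaussianReal 0 v)
    (u w ε : ℝ) (hε : 0 ≤ ε) :
    P {ω | |U ω - u| ≤ ε ∧ |V ω - w| ≤ ε} ≤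
      ENNReal.ofReal (4 * ε ^ 2 / √(A * D - C ^ 2)) := by
  set R : Ω → ℝ := fun ω => V ω - C / A * U ω with hR
  have hRm : Measurable R := by fun_prop
  have hlaw2 : ∀ x y : ℝ, ∃ v : NNReal, (v : ℝ) = x ^ 2 * A + y ^ 2 * ((A * D - C ^ 2) / A) ∧
      P.map (fun ω => x * U ω + y * R ω) = gaussianReal 0 v := by
    intro x y
    obtain ⟨v, hv, h⟩ := hlaw (x - y * (C / A)) y
    refine ⟨v, ?_, ?_⟩
    · rw [hv]; field_simp; ring
    · rw [← h]; congr 1; ext ω; simp only [hR]; ring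
  obtain ⟨vU, hvU, hlU⟩ := hlaw2 1 0
  obtain ⟨vR, hvR, hlR⟩ := hlaw2 0 1
  obtain ⟨vS, hvS, hlS⟩ := hlaw2 1 1
  simp only [one_mul, zero_mul, add_zero, zero_add, one_pow, ne_eq, OfNat.ofNat_ne_zero,
    not_false_eq_true, zero_pow] at hvU hlU hvR hlR hvS hlS
  have hmem : ∀ (Y : Ω → ℝ) (v : NNReal), Measurable Y → P.map Y = gaussianReal 0 v →
      MemLp Y 2 P ∧ Var[Y; P] = v := by
    intro Y v hY h
    constructor
    · have := memLp_id_gaussianReal' (μ := 0) (v := v) 2 (by simp)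
      rw [← h] at this
      exact (memLp_map_measure_iff (by fun_prop) hY.aemeasurable).1 this
    · have := variance_id_gaussianReal (μ := 0) (v := v)
      rw [← h, variance_map (by fun_prop) hY.aemeasurable] at this
      exact this
  have hcov : cov[U, R; P] = 0 := by
    have h1 := hmem U vU hU hlU
    have h2 := hmem R vR hRm hlR
    have h3 := hmem _ vS (hU.add hRm) hlS
    have := variance_add h1.1 h2.1
    rw [h1.2, h2.2] at this
    have h4 : Var[U + R; P] = vS := h3.2
    rw [h4] at this
    linarith
  have hG : HasGaussianLaw (fun ω => (U ω, R ω)) P := by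
    constructor
    apply isGaussian_of_map_eq_gaussianReal
    intro L
    obtain ⟨v, -, h⟩ := hlaw2 (L (1, 0)) (L (0, 1))
    refine ⟨0, v, ?_⟩
    rw [Measure.map_map (by fun_prop) (by fun_prop), ← h]
    congr 1
    ext ω
    have : ((U ω, R ω) : ℝ × ℝ) = U ω • (1, 0) + R ω • (0, 1) := by simp
    simp only [Function.comp]
    rw [this, map_add, map_smul, map_smul, smul_eq_mul, smul_eq_mul]
    ring
  have hind := hG.indepFun_of_covariance_eq_zero hcov
  rw [indepFun_iff_map_prod_eq_prod_map_map hU.aemeasurable hRm.aemeasurable, hlU, hlR] at hind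
  have hvU0 : vU ≠ 0 := by
    intro h; rw [h] at hvU; simp at hvU; linarith
  have hΔA : 0 < (A * D - C ^ 2) / A := by positivity
  have hvR0 : vR ≠ 0 := by
    intro h; rw [h] at hvR; simp only [NNReal.coe_zero] at hvR; linarith
  set S : Set (ℝ × ℝ) := {p | |p.1 - u| ≤ ε ∧ |p.2 + C / A * p.1 - w| ≤ ε} with hS
  have hSm : MeasurableSet S := by
    exact (measurableSet_le (f := fun p : ℝ × ℝ => |p.1 - u|) (g := fun _ => ε)
      (by fun_prop) (by fun_prop)).inter
      (measurableSet_le (f := fun p : ℝ × ℝ => |p.2 + C / A * p.1 - w|) (g := fun _ => ε)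
      (by fun_prop) (by fun_prop))
  have hball : ∀ z : ℝ, {x : ℝ | |x - z| ≤ ε} = Icc (z - ε) (z + ε) := by
    intro z; ext x; simp only [mem_ofPred_eq, mem_Icc, abs_le]
    constructor <;> rintro ⟨h1, h2⟩ <;> constructor <;> linarith
  have e1 : P {ω | |U ω - u| ≤ ε ∧ |V ω - w| ≤ ε} = (P.map (fun ω => (U ω, R ω))) S := by
    rw [Measure.map_apply (by fun_prop) hSm]
    congr 1
    ext ω
    simp [hS, hR]
  rw [e1, hind, Measure.prod_apply hSm]
  calc ∫⁻ x, gaussianReal 0 vR (Prod.mk x ⁻¹' S) ∂gaussianReal 0 vU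
      ≤ ∫⁻ x, (Icc (u - ε) (u + ε)).indicator
          (fun _ => ENNReal.ofReal (1 / √vR) * ENNReal.ofReal (2 * ε)) x ∂gaussianReal 0 vU := by
        apply lintegral_mono
        intro x
        by_cases hx : x ∈ Icc (u - ε) (u + ε)
        · simp only [indicator_of_mem hx]
          refine (aux_gauss_upper vR hvR0 _).trans ?_
          gcongr
          calc volume (Prod.mk x ⁻¹' S) ≤ volume (Icc (w - C / A * x - ε) (w - C / A * x + ε)) := by
                apply measure_mono
                intro r hr
                have := hr.2
                simp only [abs_le] at this
                constructor <;> linarith [this.1, this.2]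
            _ = ENNReal.ofReal (2 * ε) := by
                rw [Real.volume_Icc]; congr 1; ring
        · simp only [indicator_of_notMem hx]
          have : Prod.mk x ⁻¹' S = ∅ := by
            ext r
            simp only [mem_preimage, hS, mem_ofPred_eq, mem_empty_iff_false, iff_false]
            rintro ⟨h, -⟩
            exact hx (by rw [← hball]; exact h)
          rw [this]; simp
    _ = ENNReal.ofReal (1 / √vR) * ENNReal.ofReal (2 * ε) * gaussianReal 0 vU (Icc (u - ε) (u + ε)) := by
        rw [lintegral_indicator measurableSet_Icc]; simp
    _ ≤ ENNReal.ofReal (1 / √vR) * ENNReal.ofReal (2 * ε) *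
          (ENNReal.ofReal (1 / √vU) * ENNReal.ofReal (2 * ε)) := by
        gcongr
        refine (aux_gauss_upper vU hvU0 _).trans ?_
        rw [Real.volume_Icc]
        gcongr
        linarith
    _ = _ := by
        rw [← ENNReal.ofReal_mul (by positivity), ← ENNReal.ofReal_mul (by positivity),
          ← ENNReal.ofReal_mul (by positivity)]
        congr 1
        have : √(A * D - C ^ 2) = √vR * √vU := by
          rw [← Real.sqrt_mul (by positivity), hvR, hvU]
          congr 1; field_simp
        rw [this]
        have : (0:ℝ) < vR := by positivity
        have : (0:ℝ) < vU := by positivity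
        field_simp
        ring


lemma aux_theta (H a : ℝ) (hH : H ∈ Set.Ioo (0 : ℝ) 1) (ha : 0 < a) :
    0 < 1 - ((1 + a) ^ H - a ^ H) := by
  obtain ⟨hH0, hH1⟩ := hH
  have hc := Real.strictConcaveOn_rpow hH0 hH1
  have hc' : ∀ u v : ℝ, 0 < u → 0 < v → u + v = 1 →
      v * (1 + a) ^ H < (v * (1 + a)) ^ H := fun u v hu hv h => by
    simpa [Real.zero_rpow hH0.ne'] using hc.2 (Set.mem_Ici.2 le_rfl)
      (Set.mem_Ici.2 (show 0 ≤ 1 + a by linarith)) (by linarith) hu hv h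
  have h1 := hc' (a / (1 + a)) (1 / (1 + a)) (by positivity) (by positivity) (by field_simp; ring)
  have h2 := hc' (1 / (1 + a)) (a / (1 + a)) (by positivity) (by positivity) (by field_simp)
  have e1 : 1 / (1 + a) * (1 + a) = 1 := by field_simp
  have e2 : a / (1 + a) * (1 + a) = a := by field_simp
  rw [e1, Real.one_rpow] at h1
  rw [e2] at h2
  have e3 : a / (1 + a) = 1 - 1 / (1 + a) := by field_simp; ring
  rw [e3] at h2
  linarith

lemma aux_det (H a s t : ℝ) (hH : H ∈ Set.Ioo (0 : ℝ) 1) (ha : 0 < a) (ha1 : a ≤ 1)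
    (hs : a ≤ s) (hst : s < t) (ht : t ≤ 1) :
    (a ^ H) ^ 2 * (1 - ((1 + a) ^ H - a ^ H)) / 4 * (t - s) ^ (2 * H) ≤
      fbmCov H s s * fbmCov H t t - fbmCov H s t ^ 2 := by
  obtain ⟨hH0, hH1⟩ := hH
  have hs0 : 0 < s := by linarith
  have ht0 : 0 < t := by linarith
  have hh : 0 < t - s := by linarith
  have e : ∀ x : ℝ, 0 < x → x ^ (2 * H) = (x ^ H) ^ 2 := by
    intro x hx
    rw [mul_comm, Real.rpow_mul hx.le]; norm_num
  set p := s ^ H with hp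
  set q := t ^ H with hq
  set r := (t - s) ^ H with hr
  set θ := (1 + a) ^ H - a ^ H with hθ
  have hp0 : 0 < p := Real.rpow_pos_of_pos hs0 _
  have hq0 : 0 < q := Real.rpow_pos_of_pos ht0 _
  have hr0 : 0 < r := Real.rpow_pos_of_pos hh _
  have hA0 : 0 < a ^ H := Real.rpow_pos_of_pos ha _
  have hpa : a ^ H ≤ p := Real.rpow_le_rpow ha.le hs hH0.le
  have hqp : p ≤ q := Real.rpow_le_rpow hs0.le hst.le hH0.le
  have hqr : r ≤ q := Real.rpow_le_rpow hh.le (by linarith) hH0.le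
  have hz : (0:ℝ) ^ (2 * H) = 0 := Real.zero_rpow (by linarith)
  have c1 : fbmCov H s s = p ^ 2 := by
    simp only [fbmCov, sub_self, abs_zero, hz, abs_of_pos hs0, e s hs0]; ring
  have c2 : fbmCov H t t = q ^ 2 := by
    simp only [fbmCov, sub_self, abs_zero, hz, abs_of_pos ht0, e t ht0]; ring
  have c3 : fbmCov H s t = (p ^ 2 + q ^ 2 - r ^ 2) / 2 := by
    simp only [fbmCov, abs_of_pos hs0, abs_of_pos ht0, abs_of_pos hh, e _ hs0, e _ ht0, e _ hh]
    rfl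
  have hθ1 : q - p ≤ θ * r := by
    -- concavity
    have hc := Real.concaveOn_rpow hH0.le hH1.le
    set y := s / (t - s) with hy
    have hya : a ≤ y := by
      rw [hy, le_div_iff₀ hh]; nlinarith
    have hmono : (1 + y) ^ H - y ^ H ≤ θ := by
      rw [hθ]
      rcases hya.eq_or_lt with h | h
      · rw [h]
      -- a < y ; points a, 1+a and y, 1+y
      have hT : 0 < y + 1 - a := by linarith
      have hc' : ∀ x y u v : ℝ, 0 ≤ x → 0 ≤ y → 0 ≤ u → 0 ≤ v → u + v = 1 →
          u * x ^ H + v * y ^ H ≤ (u * x + v * y) ^ H := fun x y u v hx hy hu hv h => by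
        simpa using hc.2 (Set.mem_Ici.2 hx) (Set.mem_Ici.2 hy) hu hv h
      have h1 := hc' a (1 + y) ((y - a) / (y + 1 - a)) (1 / (y + 1 - a)) ha.le (by linarith)
        (by apply div_nonneg <;> linarith) (by positivity) (by field_simp; ring)
      have h2 := hc' a (1 + y) (1 / (y + 1 - a)) ((y - a) / (y + 1 - a)) ha.le (by linarith)
        (by positivity) (by apply div_nonneg <;> linarith) (by field_simp; ring)
      have e1 : (y - a) / (y + 1 - a) * a + 1 / (y + 1 - a) * (1 + y) = 1 + a := by
        field_simp; ring
      have e2 : 1 / (y + 1 - a) * a + (y - a) / (y + 1 - a) * (1 + y) = y := by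
        field_simp; ring
      rw [e1] at h1
      rw [e2] at h2
      have e3 : (y - a) / (y + 1 - a) = 1 - 1 / (y + 1 - a) := by field_simp; ring
      rw [e3] at h1 h2
      linarith
    have hy0 : 0 < y := by linarith
    have hqe : q = (1 + y) ^ H * r := by
      rw [hq, hr, ← Real.mul_rpow (by linarith) hh.le]
      congr 1; rw [hy]; field_simp; ring
    have hpe : p = y ^ H * r := by
      rw [hp, hr, ← Real.mul_rpow (by linarith) hh.le]
      congr 1; rw [hy]; field_simp
    rw [hqe, hpe]
    nlinarith
  have hθ2 : 0 ≤ θ := by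
    rw [hθ, sub_nonneg]
    exact Real.rpow_le_rpow ha.le (by linarith) hH0.le
  have hθ3 : θ < 1 := by linarith [aux_theta H a ⟨hH0, hH1⟩ ha]
  rw [c1, c2, c3, e _ hh]
  have f1 : (1 - θ) * r ^ 2 ≤ r ^ 2 - (q - p) ^ 2 := by
    have : (q - p) ^ 2 ≤ (θ * r) ^ 2 := pow_le_pow_left₀ (by linarith) hθ1 2
    have : θ ^ 2 ≤ θ := by nlinarith
    nlinarith [sq_nonneg r]
  have f2 : (a ^ H) ^ 2 ≤ (p + q) ^ 2 - r ^ 2 := by nlinarith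
  have f3 : p ^ 2 * q ^ 2 - ((p ^ 2 + q ^ 2 - r ^ 2) / 2) ^ 2
      = (r ^ 2 - (q - p) ^ 2) * ((p + q) ^ 2 - r ^ 2) / 4 := by ring
  rw [f3]
  have : (1 - θ) * r ^ 2 * (a ^ H) ^ 2 ≤ (r ^ 2 - (q - p) ^ 2) * ((p + q) ^ 2 - r ^ 2) := by
    apply mul_le_mul f1 f2 (by positivity)
    exact le_trans (by have : 0 ≤ 1 - θ := by linarith
                       positivity) f1
  linarith

section fbm

variable {Ω : Type*} [MeasurableSpace Ω] {P : Measure Ω} [IsProbabilityMeasure P]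
  {H : ℝ} {d : ℕ} {B : Ω → ℝ → EuclideanSpace ℝ (Fin d)}

lemma aux_meas (hB : IsFBM P H d B) (t : ℝ) (i : Fin d) : Measurable (fun ω => B ω t i) := by
  have h := hB.meas t
  fun_prop

lemma aux_indep (hB : IsFBM P H d B) (s t : ℝ) (G : Fin d → Set (ℝ × ℝ))
    (hG : ∀ i, MeasurableSet (G i)) :
    P {ω | ∀ i, (B ω s i, B ω t i) ∈ G i} = ∏ i, P {ω | (B ω s i, B ω t i) ∈ G i} := by
  have h := hB.indep.comp (fun i (g : ℝ → ℝ) => (g s, g t)) (fun i => by fun_prop)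
  have h2 := h.measure_inter_preimage_eq_mul Finset.univ (sets := G) (fun i _ => hG i)
  have e : {ω | ∀ i, (B ω s i, B ω t i) ∈ G i} = ⋂ i ∈ Finset.univ,
      ((fun (g : ℝ → ℝ) => (g s, g t)) ∘ fun ω t => B ω t i) ⁻¹' G i := by
    ext ω; simp
  rw [e, h2]
  rfl

lemma aux_fcov_self (hH0 : 0 < H) (t : ℝ) (ht : 0 ≤ t) : fbmCov H t t = t ^ (2 * H) := by
  simp [fbmCov, abs_of_nonneg ht, Real.zero_rpow (show 2 * H ≠ 0 by linarith)]

lemma aux_law1 (hB : IsFBM P H d B) (hH0 : 0 < H) (i : Fin d) (t : ℝ) (ht : t ∈ Icc (0:ℝ) 1) :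
    ∃ v : NNReal, (v : ℝ) = t ^ (2 * H) ∧ P.map (fun ω => B ω t i) = gaussianReal 0 v := by
  obtain ⟨v, hv, h⟩ := hB.gaussian i 1 (fun _ => t) (fun _ => 1) (fun _ => ht)
  refine ⟨v, ?_, ?_⟩
  · rw [hv]; simp [aux_fcov_self hH0 t ht.1]
  · simpa using h

lemma aux_law2 (hB : IsFBM P H d B) (i : Fin d) (s t : ℝ) (hs : s ∈ Icc (0:ℝ) 1)
    (ht : t ∈ Icc (0:ℝ) 1) (x y : ℝ) :
    ∃ v : NNReal, (v : ℝ) = x ^ 2 * fbmCov H s s + 2 * x * y * fbmCov H s t + y ^ 2 * fbmCov H t t ∧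
      P.map (fun ω => x * B ω s i + y * B ω t i) = gaussianReal 0 v := by
  obtain ⟨v, hv, h⟩ := hB.gaussian i 2 ![s, t] ![x, y] (fun j => by fin_cases j <;> assumption)
  refine ⟨v, ?_, ?_⟩
  · rw [hv]
    have : fbmCov H t s = fbmCov H s t := by
      simp only [fbmCov, abs_sub_comm s t]; ring
    simp [Fin.sum_univ_two, this]; ring
  · simpa [Fin.sum_univ_two] using h

lemma aux_incr (hB : IsFBM P H d B) (hH0 : 0 < H) (i : Fin d) (s t : ℝ) (hs : 0 ≤ s)
    (hst : s < t) (ht : t ≤ 1) (l : ℝ) (hl : 0 ≤ l) :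
    P {ω | l < |B ω t i - B ω s i|} ≤
      ENNReal.ofReal (2 * Real.exp (- l ^ 2 / (2 * ((t - s) ^ H) ^ 2))) := by
  obtain ⟨v, hv, h⟩ := aux_law2 hB i s t ⟨hs, by linarith⟩ ⟨by linarith, ht⟩ (-1) 1
  have hv2 : (v : ℝ) = ((t - s) ^ H) ^ 2 := by
    rw [hv, aux_fcov_self hH0 s hs, aux_fcov_self hH0 t (by linarith)]
    simp only [fbmCov, abs_of_nonneg hs, abs_of_nonneg (show 0 ≤ t by linarith),
      abs_of_pos (show 0 < t - s by linarith)]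
    have : (t - s) ^ (2 * H) = ((t - s) ^ H) ^ 2 := by
      rw [mul_comm, Real.rpow_mul (by linarith)]; norm_num
    rw [← this]; ring
  have hv0 : v ≠ 0 := by
    intro h0
    rw [h0] at hv2
    have : 0 < (t - s) ^ H := Real.rpow_pos_of_pos (by linarith) _
    have h3 : (0:ℝ) = ((t - s) ^ H) ^ 2 := hv2
    nlinarith
  have hs' := aux_meas hB s i
  have ht' := aux_meas hB t i
  have := aux_gauss_tail P (fun ω => -1 * B ω s i + 1 * B ω t i) ((hs'.const_mul _).add (ht'.const_mul _)) v hv0 h l hl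
  rw [hv2] at this
  have e : ∀ ω, -1 * B ω s i + 1 * B ω t i = B ω t i - B ω s i := fun ω => by ring
  simp only [e] at this
  exact this

lemma aux_ball (z ε : ℝ) : {x : ℝ | |x - z| ≤ ε} = Icc (z - ε) (z + ε) := by
  ext x; simp only [mem_ofPred_eq, mem_Icc, abs_le]
  constructor <;> rintro ⟨h1, h2⟩ <;> constructor <;> linarith

lemma aux_ball_meas (z ε : ℝ) : MeasurableSet {x : ℝ | |x - z| ≤ ε} := by
  rw [aux_ball]; exact measurableSet_Icc

lemma aux_ball_vol (z ε : ℝ) : volume {x : ℝ | |x - z| ≤ ε} = ENNReal.ofReal (2 * ε) := by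
  rw [aux_ball, Real.volume_Icc]; congr 1; ring

lemma aux_cube_upper (hB : IsFBM P H d B) (hH0 : 0 < H) (a t : ℝ) (ha : 0 < a) (hat : a ≤ t)
    (ht : t ≤ 1) (y : Fin d → ℝ) (ε : ℝ) (hε : 0 ≤ ε) :
    P {ω | ∀ i, |B ω t i - y i| ≤ ε} ≤ ENNReal.ofReal ((2 * ε / a ^ H) ^ d) := by
  have h := aux_indep hB t t (fun i => {p | |p.1 - y i| ≤ ε})
    (fun i => (aux_ball_meas (y i) ε).preimage measurable_fst)
  simp only [mem_ofPred_eq] at h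
  rw [h]
  have : ∀ i, P {ω | |B ω t i - y i| ≤ ε} ≤ ENNReal.ofReal (2 * ε / a ^ H) := by
    intro i
    obtain ⟨v, hv, hl⟩ := aux_law1 hB hH0 i t ⟨by linarith, ht⟩
    have hv0 : v ≠ 0 := by
      intro h0
      have : 0 < t ^ (2 * H) := Real.rpow_pos_of_pos (by linarith) _
      rw [← hv, h0] at this; simp at this
    have e : P {ω | |B ω t i - y i| ≤ ε} = P.map (fun ω => B ω t i) {x | |x - y i| ≤ ε} := by
      rw [Measure.map_apply (aux_meas hB t i) (aux_ball_meas _ _)]; rfl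
    rw [e, hl]
    refine (aux_gauss_upper v hv0 _).trans ?_
    rw [aux_ball_vol, ← ENNReal.ofReal_mul (by positivity)]
    apply ENNReal.ofReal_le_ofReal
    have h1 : a ^ H ≤ √v := by
      rw [hv, mul_comm, Real.rpow_mul (by linarith)]
      rw [show ((t ^ H) ^ (2:ℝ)) = (t ^ H) ^ 2 by norm_num, Real.sqrt_sq (Real.rpow_nonneg (by linarith) _)]
      exact Real.rpow_le_rpow ha.le hat hH0.le
    have h2 : 0 < a ^ H := Real.rpow_pos_of_pos ha _
    calc 1 / √v * (2 * ε) = 2 * ε / √v := by ring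
      _ ≤ _ := by gcongr
  have h2 : 0 < a ^ H := Real.rpow_pos_of_pos ha _
  calc _ ≤ ∏ i : Fin d, ENNReal.ofReal (2 * ε / a ^ H) := Finset.prod_le_prod' (fun i _ => this i)
    _ = _ := by simp [ENNReal.ofReal_pow (show 0 ≤ 2 * ε / a ^ H by positivity)]

lemma aux_cube_lower (hB : IsFBM P H d B) (hH0 : 0 < H) (a : ℝ) (ha : 0 < a) (M : ℝ) :
    ∃ c : ℝ, 0 < c ∧ ∀ t, a ≤ t → t ≤ 1 → ∀ y : Fin d → ℝ, (∀ i, |y i| ≤ M) → ∀ ε, 0 ≤ ε → ε ≤ 1 →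
    ENNReal.ofReal ((c * ε) ^ d) ≤ P {ω | ∀ i, |B ω t i - y i| ≤ ε} := by
  set c0 := (√(2 * Real.pi))⁻¹ * Real.exp (- (M + 1) ^ 2 / (2 * a ^ (2 * H))) with hc0
  have hc0p : 0 < c0 := by positivity
  refine ⟨c0 * 2, by positivity, ?_⟩
  intro t hat ht y hy ε hε hε1
  have h := aux_indep hB t t (fun i => {p | |p.1 - y i| ≤ ε})
    (fun i => (aux_ball_meas (y i) ε).preimage measurable_fst)
  simp only [mem_ofPred_eq] at h
  rw [h]
  have : ∀ i, ENNReal.ofReal (c0 * 2 * ε) ≤ P {ω | |B ω t i - y i| ≤ ε} := by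
    intro i
    obtain ⟨v, hv, hl⟩ := aux_law1 hB hH0 i t ⟨by linarith, ht⟩
    have hv0 : v ≠ 0 := by
      intro h0
      have : 0 < t ^ (2 * H) := Real.rpow_pos_of_pos (by linarith) _
      rw [← hv, h0] at this; simp at this
    have e : P {ω | |B ω t i - y i| ≤ ε} = P.map (fun ω => B ω t i) {x | |x - y i| ≤ ε} := by
      rw [Measure.map_apply (aux_meas hB t i) (aux_ball_meas _ _)]; rfl
    rw [e, hl]
    refine le_trans ?_ (aux_gauss_lower v hv0 ?_ (M + 1) (a ^ (2 * H))
      (Real.rpow_pos_of_pos ha _) ?_ _ ?_)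
    · rw [aux_ball_vol, ← ENNReal.ofReal_mul (by positivity)]
      apply ENNReal.ofReal_le_ofReal
      rw [← hc0]; linarith
    · have : (v:ℝ) ≤ 1 := by
        rw [hv]; exact Real.rpow_le_one (by linarith) ht (by linarith)
      exact_mod_cast this
    · rw [hv]; exact Real.rpow_le_rpow ha.le hat (by linarith)
    · intro x hx
      have h1 : |x - y i| ≤ ε := hx
      have h2 := hy i
      rw [abs_le] at *
      constructor <;> linarith [h1.1, h1.2, h2.1, h2.2]
  calc _ = ∏ i : Fin d, ENNReal.ofReal (c0 * 2 * ε) := by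
        simp [ENNReal.ofReal_pow (show 0 ≤ c0 * 2 * ε by positivity)]
    _ ≤ _ := Finset.prod_le_prod' (fun i _ => this i)

lemma aux_cube_pair (hB : IsFBM P H d B) (hH : H ∈ Ioo (0:ℝ) 1) (a : ℝ) (ha : 0 < a)
    (ha1 : a ≤ 1) :
    ∃ C : ℝ, 0 < C ∧ ∀ s t, a ≤ s → s < t → t ≤ 1 → ∀ y z : Fin d → ℝ, ∀ ε, 0 ≤ ε →
    P {ω | ∀ i, |B ω s i - y i| ≤ ε ∧ |B ω t i - z i| ≤ ε} ≤
      ENNReal.ofReal ((C * ε ^ 2 / (t - s) ^ H) ^ d) := by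
  set κ := (a ^ H) ^ 2 * (1 - ((1 + a) ^ H - a ^ H)) / 4 with hκ
  have hκ0 : 0 < κ := by
    have h1 := aux_theta H a hH ha
    have h2 : 0 < a ^ H := Real.rpow_pos_of_pos ha _
    positivity
  refine ⟨4 / √κ, by positivity, ?_⟩
  intro s t has hst ht y z ε hε
  have hh : 0 < t - s := by linarith
  have hr0 : 0 < (t - s) ^ H := Real.rpow_pos_of_pos hh _
  have h := aux_indep hB s t (fun i => {p | |p.1 - y i| ≤ ε ∧ |p.2 - z i| ≤ ε})
    (fun i => ((aux_ball_meas (y i) ε).preimage measurable_fst).inter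
      ((aux_ball_meas (z i) ε).preimage measurable_snd))
  simp only [mem_ofPred_eq] at h
  rw [h]
  have hdet := aux_det H a s t hH ha ha1 has hst ht
  rw [← hκ] at hdet
  have hdpos : 0 < κ * (t - s) ^ (2 * H) := by
    have := Real.rpow_pos_of_pos hh (2 * H)
    positivity
  have : ∀ i, P {ω | |B ω s i - y i| ≤ ε ∧ |B ω t i - z i| ≤ ε} ≤
      ENNReal.ofReal (4 / √κ * ε ^ 2 / (t - s) ^ H) := by
    intro i
    refine (aux_pair P (fun ω => B ω s i) (fun ω => B ω t i) (aux_meas hB s i) (aux_meas hB t i)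
      (fbmCov H s s) (fbmCov H s t) (fbmCov H t t) ?_ (by linarith)
      (aux_law2 hB i s t ⟨by linarith, by linarith⟩ ⟨by linarith, ht⟩) (y i) (z i) ε hε).trans ?_
    · rw [aux_fcov_self hH.1 s (by linarith)]
      exact Real.rpow_pos_of_pos (by linarith) _
    · apply ENNReal.ofReal_le_ofReal
      have h1 : √κ * (t - s) ^ H ≤ √(fbmCov H s s * fbmCov H t t - fbmCov H s t ^ 2) := by
        apply Real.le_sqrt_of_sq_le
        refine le_trans (le_of_eq ?_) hdet
        rw [mul_pow, Real.sq_sqrt hκ0.le, mul_comm 2 H, Real.rpow_mul hh.le]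
        norm_num
      calc _ ≤ 4 * ε ^ 2 / (√κ * (t - s) ^ H) := by gcongr
        _ = _ := by field_simp
  calc _ ≤ ∏ i : Fin d, ENNReal.ofReal (4 / √κ * ε ^ 2 / (t - s) ^ H) :=
        Finset.prod_le_prod' (fun i _ => this i)
    _ = _ := by
        simp [ENNReal.ofReal_pow (show 0 ≤ 4 / √κ * ε ^ 2 / (t - s) ^ H by positivity)]

end fbm


structure CScale (c : ℕ → ℝ) (q : ℝ) : Prop where
  pos : ∀ k, 0 < c k
  q0 : 0 < q
  q2 : q < 1 / 2
  ratio : ∀ k, c (k + 1) ≤ q * c k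

noncomputable def cPhi (a : ℝ) (c : ℕ → ℝ) (e : ℕ → Fin 2) : ℝ :=
  a + ∑' k, ((e k : ℕ) : ℝ) * c k

def cTr (e : ℕ → Fin 2) (n : ℕ) : ℕ → Fin 2 := fun k => if k < n then e k else 0

def cExt (n : ℕ) (g : Fin n → Fin 2) : ℕ → Fin 2 := fun k => if h : k < n then g ⟨k, h⟩ else 0

lemma cTr_eq_ext (e : ℕ → Fin 2) (n : ℕ) : cTr e n = cExt n (fun i => e i) := by
  ext k; simp [cTr, cExt]

lemma fin2_bd (x : Fin 2) : (0:ℝ) ≤ ((x : ℕ) : ℝ) ∧ ((x : ℕ) : ℝ) ≤ 1 := by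
  fin_cases x <;> simp

namespace CScale

variable {c : ℕ → ℝ} {q : ℝ} (h : CScale c q)
include h

lemma geo (k j : ℕ) : c (k + j) ≤ q ^ j * c k := by
  induction j with
  | zero => simp
  | succ j ih =>
    calc c (k + (j + 1)) ≤ q * c (k + j) := h.ratio _
      _ ≤ q * (q ^ j * c k) := by have := h.q0; gcongr
      _ = _ := by ring

lemma summable : Summable c := by
  have h1 : Summable (fun j => q ^ j * c 0) :=
    (summable_geometric_of_lt_one h.q0.le (by linarith [h.q2])).mul_right _
  refine Summable.of_nonneg_of_le (fun k => (h.pos k).le) (fun k => ?_) h1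
  simpa using h.geo 0 k

lemma tail (k : ℕ) : ∑' j, c (j + k) ≤ c k / (1 - q) := by
  have hs : Summable (fun j => c (j + k)) := (summable_nat_add_iff k).2 h.summable
  have h1 : Summable (fun j => q ^ j * c k) :=
    (summable_geometric_of_lt_one h.q0.le (by linarith [h.q2])).mul_right _
  calc ∑' j, c (j + k) ≤ ∑' j, q ^ j * c k := by
        refine hs.tsum_le_tsum (fun j => ?_) h1
        rw [add_comm]; exact h.geo k j
    _ = c k / (1 - q) := by
        rw [tsum_mul_right, tsum_geometric_of_lt_one h.q0.le (by linarith [h.q2])]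
        field_simp

lemma summ (e : ℕ → Fin 2) : Summable (fun k => ((e k : ℕ) : ℝ) * c k) := by
  refine Summable.of_nonneg_of_le (fun k => mul_nonneg (fin2_bd _).1 (h.pos k).le)
    (fun k => ?_) h.summable
  have := mul_le_mul_of_nonneg_right (fin2_bd (e k)).2 (h.pos k).le
  linarith

lemma diff (a : ℝ) (e e' : ℕ → Fin 2) (k : ℕ) (hk : ∀ i < k, e i = e' i) :
    |cPhi a c e - cPhi a c e'| ≤ c k / (1 - q) := by
  have h1 : cPhi a c e - cPhi a c e' = ∑' j, (((e j : ℕ) : ℝ) * c j - ((e' j : ℕ) : ℝ) * c j) := by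
    rw [(h.summ e).tsum_sub (h.summ e')]; simp [cPhi]
  have hs := (h.summ e).sub (h.summ e')
  rw [h1, ← hs.sum_add_tsum_nat_add k, Finset.sum_eq_zero, zero_add]
  · have hsc : Summable (fun j => c (j + k)) := (summable_nat_add_iff k).2 h.summable
    have hb : ∀ j, |((e (j + k) : ℕ) : ℝ) * c (j + k) - ((e' (j + k) : ℕ) : ℝ) * c (j + k)|
        ≤ c (j + k) := by
      intro j
      have h1 := fin2_bd (e (j + k))
      have h2 := fin2_bd (e' (j + k))
      have h3 := h.pos (j + k)
      rw [← sub_mul, abs_mul, abs_of_pos h3]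
      have : |((e (j + k) : ℕ) : ℝ) - ((e' (j + k) : ℕ) : ℝ)| ≤ 1 := by
        rw [abs_le]; constructor <;> linarith
      nlinarith
    have := tsum_of_norm_bounded (f := fun j => ((e (j + k) : ℕ) : ℝ) * c (j + k) -
      ((e' (j + k) : ℕ) : ℝ) * c (j + k)) hsc.hasSum hb
    exact this.trans (h.tail k)
  · intro i hi
    rw [hk i (Finset.mem_range.1 hi)]; ring

lemma close (a : ℝ) (e e' : ℕ → Fin 2) (k : ℕ) (hk : ∀ i < k, e i = e' i) :
    |cPhi a c e - cPhi a c e'| ≤ 2 * c k := by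
  refine (h.diff a e e' k hk).trans ?_
  rw [div_le_iff₀ (by linarith [h.q2])]
  nlinarith [h.pos k, h.q2]

lemma tr_succ (a : ℝ) (e : ℕ → Fin 2) (j : ℕ) :
    cPhi a c (cTr e (j + 1)) = cPhi a c (cTr e j) + ((e j : ℕ) : ℝ) * c j := by
  have h1 : ∀ n, cPhi a c (cTr e n) = a + ∑ k ∈ Finset.range n, ((e k : ℕ) : ℝ) * c k := by
    intro n
    rw [cPhi, tsum_eq_sum (s := Finset.range n)]
    · congr 1
      apply Finset.sum_congr rfl
      intro k hk
      simp [cTr, Finset.mem_range.1 hk]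
    · intro k hk
      have : ¬ k < n := by simpa using hk
      simp [cTr, this]
  rw [h1, h1, Finset.sum_range_succ]; ring

lemma sep (a : ℝ) (e e' : ℕ → Fin 2) (k : ℕ) (hk : ∀ i < k, e i = e' i) (hne : e k ≠ e' k) :
    (1 - 2 * q) * c k ≤ |cPhi a c e - cPhi a c e'| := by
  have t1 := h.diff a e (cTr e (k + 1)) (k + 1) (fun i hi => by simp [cTr, hi])
  have t2 := h.diff a e' (cTr e' (k + 1)) (k + 1) (fun i hi => by simp [cTr, hi])
  -- direct approach: replace e' by e'' which agrees with e' except at k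
  set e'' : ℕ → Fin 2 := Function.update e' k (e k) with he''
  have hd := h.diff a e e'' (k + 1) (by
    intro i hi
    by_cases hik : i = k
    · subst hik; simp [he'']
    · simp [he'', hik]; exact hk i (by omega))
  have hu : cPhi a c e'' - cPhi a c e' = (((e k : ℕ) : ℝ) - ((e' k : ℕ) : ℝ)) * c k := by
    have h1 : cPhi a c e'' - cPhi a c e' =
        ∑' j, (((e'' j : ℕ) : ℝ) * c j - ((e' j : ℕ) : ℝ) * c j) := by
      rw [(h.summ e'').tsum_sub (h.summ e')]; simp [cPhi]
    rw [h1, tsum_eq_single k]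
    · simp [he'']; ring
    · intro j hj; simp [he'', hj]
  have hab : |((e k : ℕ) : ℝ) - ((e' k : ℕ) : ℝ)| = 1 := by
    revert hne
    generalize e k = x
    generalize e' k = y
    fin_cases x <;> fin_cases y <;> simp
  have h3 : c k ≤ |cPhi a c e'' - cPhi a c e'| := by
    rw [hu, abs_mul, hab, abs_of_pos (h.pos k)]; linarith
  have h4 : c (k + 1) / (1 - q) ≤ 2 * q * c k := by
    rw [div_le_iff₀ (by linarith [h.q2])]
    have := h.ratio k
    have h5 := h.pos k
    have : 0 < q * c k := mul_pos h.q0 h5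
    nlinarith [h.q2]
  have h5 : |cPhi a c e'' - cPhi a c e'| ≤ |cPhi a c e - cPhi a c e'| + |cPhi a c e - cPhi a c e''| := by
    rw [abs_sub_comm (cPhi a c e) (cPhi a c e''), add_comm]
    exact abs_sub_le _ _ _
  linarith

lemma mem_Icc (a : ℝ) (e : ℕ → Fin 2) : cPhi a c e ∈ Icc a (a + 2 * c 0) := by
  have h0 : cPhi a c (fun _ => 0) = a := by simp [cPhi]
  have h1 := h.close a e (fun _ => 0) 0 (by simp)
  rw [h0] at h1
  refine ⟨?_, by linarith [(abs_le.1 h1).2]⟩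
  have : 0 ≤ ∑' k, ((e k : ℕ) : ℝ) * c k :=
    tsum_nonneg (fun k => mul_nonneg (fin2_bd _).1 (h.pos k).le)
  simp only [cPhi]; linarith

lemma cont (a : ℝ) : Continuous (cPhi a c) := by
  unfold cPhi
  refine continuous_const.add (continuous_tsum (u := c) ?_ h.summable ?_)
  · intro k
    have : Continuous (fun x : Fin 2 => ((x : ℕ) : ℝ)) := continuous_of_discreteTopology
    exact (this.comp (continuous_apply k)).mul continuous_const
  · intro k e
    rw [Real.norm_eq_abs, abs_of_nonneg (mul_nonneg (fin2_bd _).1 (h.pos k).le)]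
    have := mul_le_mul_of_nonneg_right (fin2_bd (e k)).2 (h.pos k).le
    linarith

lemma compact (a : ℝ) : IsCompact (range (cPhi a c)) := isCompact_range (h.cont a)

lemma inj_sep (a : ℝ) (e e' : ℕ → Fin 2) (hne : e ≠ e') :
    ∃ k, (∀ i < k, e i = e' i) ∧ e k ≠ e' k ∧
      (1 - 2 * q) * c k ≤ |cPhi a c e - cPhi a c e'| := by
  have hex : ∃ k, e k ≠ e' k := Function.ne_iff.1 hne
  classical
  refine ⟨Nat.find hex, ?_, Nat.find_spec hex, ?_⟩
  · intro i hi
    simpa using Nat.find_min hex hi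
  · apply h.sep
    · intro i hi
      simpa using Nat.find_min hex hi
    · exact Nat.find_spec hex

lemma dim_ge (a g : ℝ) (hg : 0 < g) (C : ℝ) (hC : ∀ k, (1 / 2 : ℝ) ^ k ≤ C * c k ^ g) :
    ENNReal.ofReal g ≤ dimH (range (cPhi a c)) := by
  have hδ : 0 < 1 - 2 * q := by linarith [h.q2]
  have hC0 : 0 ≤ C := by
    have h1 := hC 0
    have h2 := Real.rpow_pos_of_pos (h.pos 0) g
    by_contra hcon
    push Not at hcon
    norm_num at h1
    nlinarith
  have hinj : Function.Injective (cPhi a c) := by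
    intro e e' hee
    by_contra hne
    obtain ⟨k, -, -, hk⟩ := h.inj_sep a e e' hne
    rw [hee, sub_self, abs_zero] at hk
    have := mul_pos hδ (h.pos k)
    linarith
  set F : ℝ → ℝ := fun x => Real.ofDigits (Function.invFun (cPhi a c) x) with hF
  have hFv : ∀ e, F (cPhi a c e) = Real.ofDigits e := by
    intro e; simp only [hF]; rw [Function.leftInverse_invFun hinj]
  set K : ℝ := C * (1 - 2 * q) ^ (-g) with hK
  have hK0 : 0 ≤ K := mul_nonneg hC0 (Real.rpow_nonneg hδ.le _)
  have hHol : HolderOnWith K.toNNReal g.toNNReal F (range (cPhi a c)) := by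
    rintro _ ⟨e, rfl⟩ _ ⟨e', rfl⟩
    rw [hFv, hFv, edist_dist, edist_dist, ENNReal.ofReal_rpow_of_nonneg dist_nonneg (by simp),
      Real.coe_toNNReal _ hg.le, ← ENNReal.ofReal_coe_nnreal, Real.coe_toNNReal _ hK0,
      ← ENNReal.ofReal_mul hK0]
    apply ENNReal.ofReal_le_ofReal
    by_cases hne : e = e'
    · rw [hne]; simp [Real.zero_rpow hg.ne']
    obtain ⟨k, h1, -, h2⟩ := h.inj_sep a e e' hne
    rw [Real.dist_eq, Real.dist_eq]
    calc |Real.ofDigits e - Real.ofDigits e'| ≤ (((2 : ℕ) : ℝ) ^ k)⁻¹ :=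
          Real.abs_ofDigits_sub_ofDigits_le h1
      _ = (1 / 2 : ℝ) ^ k := by simp
      _ ≤ C * c k ^ g := hC k
      _ = K * ((1 - 2 * q) * c k) ^ g := by
          rw [hK, Real.mul_rpow hδ.le (h.pos k).le, Real.rpow_neg hδ.le]
          have := Real.rpow_pos_of_pos hδ g
          field_simp
      _ ≤ _ := by
          have := (mul_pos hδ (h.pos k)).le
          gcongr
  have h1 := hHol.dimH_image_le (by simpa using hg)
  have h2 : Icc (0:ℝ) 1 ⊆ F '' (range (cPhi a c)) := by
    intro x hx
    obtain ⟨e, -, he⟩ := Real.ofDigits_SurjOn (b := 2) (by norm_num) hx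
    exact ⟨cPhi a c e, ⟨e, rfl⟩, by rw [hFv, he]⟩
  have h3 : dimH (Icc (0:ℝ) 1) = 1 := by
    have := Real.dimH_of_nonempty_interior (E := ℝ) (s := Icc (0:ℝ) 1) (by simp)
    simpa using this
  have h4 : (1 : ENNReal) ≤ dimH (range (cPhi a c)) / (g.toNNReal : ENNReal) :=
    h3 ▸ (dimH_mono h2).trans h1
  rw [ENNReal.le_div_iff_mul_le (by simp [hg]) (by simp), one_mul] at h4
  exact h4

lemma dim_le (a g : ℝ) (hg : 0 < g)
    (hC : Tendsto (fun k => (2 : ℝ) ^ k * c k ^ g) atTop (𝓝 0)) :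
    dimH (range (cPhi a c)) ≤ ENNReal.ofReal g := by
  have hc0 : Tendsto c atTop (𝓝 0) := h.summable.tendsto_atTop_zero
  have hlim : Tendsto (fun k => ENNReal.ofReal ((4:ℝ) ^ g * ((2 : ℝ) ^ k * c k ^ g))) atTop (𝓝 0) := by
    have := ENNReal.tendsto_ofReal (hC.const_mul ((4:ℝ) ^ g))
    simpa using this
  have key : μH[(g.toNNReal : ℝ)] (range (cPhi a c)) ≤ 0 := by
    set t : ∀ n : ℕ, (Fin n → Fin 2) → Set ℝ := fun n p =>
      Icc (cPhi a c (cExt n p) - 2 * c n) (cPhi a c (cExt n p) + 2 * c n) with ht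
    have hdiam : ∀ n p, Metric.ediam (t n p) = ENNReal.ofReal (4 * c n) := by
      intro n p
      rw [ht, Real.ediam_Icc]; congr 1; ring
    have := Measure.hausdorffMeasure_le_liminf_sum (g.toNNReal : ℝ) (range (cPhi a c))
      (l := atTop) (fun n => ENNReal.ofReal (4 * c n)) (by
        have := ENNReal.tendsto_ofReal (hc0.const_mul 4)
        simpa using this) t (Eventually.of_forall (fun n p => (hdiam n p).le))
      (Eventually.of_forall (fun n => by
        rintro _ ⟨e, rfl⟩
        refine mem_iUnion.2 ⟨fun i => e i, ?_⟩
        have := h.close a e (cExt n (fun i => e i)) n (fun i hi => by simp [cExt, hi])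
        rw [abs_le] at this
        constructor <;> linarith [this.1, this.2]))
    refine this.trans (le_of_eq ?_)
    refine Tendsto.liminf_eq ?_
    convert hlim using 2 with n
    simp only [hdiam, Finset.sum_const, Finset.card_univ, Fintype.card_fun, Fintype.card_fin,
      nsmul_eq_mul]
    rw [Real.coe_toNNReal _ hg.le, ENNReal.ofReal_rpow_of_nonneg (by linarith [h.pos n]) hg.le,
      Real.mul_rpow (by norm_num) (h.pos n).le]
    rw [show (4:ℝ) ^ g * ((2 : ℝ) ^ n * c n ^ g) = (2:ℝ)^n * (4 ^ g * c n ^ g) by ring,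
      ENNReal.ofReal_mul (p := (2:ℝ) ^ n) (by positivity)]
    congr 1
    rw [ENNReal.ofReal_pow (by norm_num)]; simp
  apply dimH_le_of_hausdorffMeasure_ne_top (d := g.toNNReal)
  rw [le_zero_iff.1 key]; simp

lemma dim_eq (a g : ℝ) (hg : 0 < g)
    (h1 : ∀ g', 0 < g' → g' < g → ∃ C, ∀ k, (1 / 2 : ℝ) ^ k ≤ C * c k ^ g')
    (h2 : ∀ g', g < g' → Tendsto (fun k => (2 : ℝ) ^ k * c k ^ g') atTop (𝓝 0)) :
    dimH (range (cPhi a c)) = ENNReal.ofReal g := by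
  apply le_antisymm
  · have hc : Tendsto (fun x => ENNReal.ofReal x) (𝓝[>] g) (𝓝 (ENNReal.ofReal g)) :=
      (ENNReal.continuous_ofReal.tendsto g).mono_left nhdsWithin_le_nhds
    refine ge_of_tendsto hc ?_
    filter_upwards [self_mem_nhdsWithin] with x hx
    exact h.dim_le a x (hg.trans hx) (h2 x hx)
  · have hc : Tendsto (fun x => ENNReal.ofReal x) (𝓝[<] g) (𝓝 (ENNReal.ofReal g)) :=
      (ENNReal.continuous_ofReal.tendsto g).mono_left nhdsWithin_le_nhds
    refine le_of_tendsto hc ?_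
    filter_upwards [Ioo_mem_nhdsLT hg] with x hx
    obtain ⟨C, hC⟩ := h1 x hx.1 hx.2
    exact h.dim_ge a x hx.1 C hC

end CScale


lemma aux_pol (m : ℕ) (r : ℝ) (hr : 0 < r) (hr1 : r < 1) :
    Tendsto (fun k : ℕ => ((k:ℝ) + 1) ^ m * r ^ k) atTop (𝓝 0) := by
  have h := (tendsto_add_atTop_iff_nat 1).2 (tendsto_pow_const_mul_const_pow_of_lt_one m hr.le hr1)
  have h2 := h.mul_const r⁻¹
  rw [zero_mul] at h2
  refine h2.congr (fun k => ?_)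
  push_cast
  field_simp
  ring

lemma aux_scale (g L : ℝ) (hg0 : 0 < g) (hL : 0 < L) (w : ℕ → ℝ) (hw : ∀ k, 0 < w k)
    (σ : ℝ) (hσ0 : 0 < σ) (hσ : σ < (1 / 2 : ℝ) ^ g) (hr : ∀ k, w (k + 1) ≤ σ * w k)
    (A A' : ℝ) (hA : 0 < A) (hA' : 0 < A') (m : ℕ)
    (hlo : ∀ k : ℕ, A * ((1 / 2 : ℝ) ^ k * (((k:ℝ) + 1) ^ m)⁻¹) ≤ w k)
    (hup : ∀ k : ℕ, w k ≤ A' * ((1 / 2 : ℝ) ^ k * ((k:ℝ) + 1) ^ m)) :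
    ∃ (c : ℕ → ℝ) (q κ : ℝ), CScale c q ∧ 2 * c 0 ≤ L ∧ 0 < κ ∧ (∀ k, c k ^ g = κ * w k) ∧
      (∀ g', 0 < g' → g' < g → ∃ C, ∀ k, (1 / 2 : ℝ) ^ k ≤ C * c k ^ g') ∧
      (∀ g', g < g' → Tendsto (fun k => (2 : ℝ) ^ k * c k ^ g') atTop (𝓝 0)) := by
  have hw0 : 0 < w 0 ^ (1 / g) := Real.rpow_pos_of_pos (hw 0) _
  set L' := L / (2 * w 0 ^ (1 / g)) with hL'
  have hL'0 : 0 < L' := by positivity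
  set κ := L' ^ g with hκ
  have hκ0 : 0 < κ := Real.rpow_pos_of_pos hL'0 _
  set c : ℕ → ℝ := fun k => L' * w k ^ (1 / g) with hc
  have hcpos : ∀ k, 0 < c k := fun k => mul_pos hL'0 (Real.rpow_pos_of_pos (hw k) _)
  have hcg : ∀ k, c k ^ g = κ * w k := by
    intro k
    simp only [hc]
    rw [Real.mul_rpow hL'0.le (Real.rpow_nonneg (hw k).le _), ← Real.rpow_mul (hw k).le]
    rw [one_div_mul_cancel hg0.ne', Real.rpow_one]
  have hcg' : ∀ g' k, c k ^ g' = (κ * w k) ^ (g' / g) := by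
    intro g' k
    rw [← hcg, ← Real.rpow_mul (hcpos k).le]
    congr 1; field_simp
  refine ⟨c, σ ^ (1 / g), κ, ⟨hcpos, Real.rpow_pos_of_pos hσ0 _, ?_, ?_⟩, ?_, hκ0, hcg, ?_, ?_⟩
  · calc σ ^ (1 / g) < ((1 / 2 : ℝ) ^ g) ^ (1 / g) :=
        Real.rpow_lt_rpow hσ0.le hσ (by positivity)
      _ = 1 / 2 := by
        rw [← Real.rpow_mul (by norm_num), mul_one_div_cancel hg0.ne', Real.rpow_one]
  · intro k
    simp only [hc]
    have : w (k + 1) ^ (1 / g) ≤ (σ * w k) ^ (1 / g) :=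
      Real.rpow_le_rpow (hw _).le (hr k) (by positivity)
    rw [Real.mul_rpow hσ0.le (hw k).le] at this
    nlinarith
  · simp only [hc, hL']
    apply le_of_eq; field_simp
  · intro g' h0 h1
    set τ := g' / g with hτ
    have hτ0 : 0 < τ := by positivity
    have hτ1 : τ < 1 := by rw [hτ, div_lt_one hg0]; exact h1
    have hB := (aux_pol m ((1 / 2 : ℝ) ^ (1 - τ)) (by positivity)
      (Real.rpow_lt_one (by norm_num) (by norm_num) (by linarith))).bddAbove_range
    obtain ⟨C, hC⟩ := hB
    have hκA : 0 < (κ * A) ^ τ := by positivity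
    refine ⟨C * ((κ * A) ^ τ)⁻¹, fun k => ?_⟩
    have hCk : ((k:ℝ) + 1) ^ m * ((1 / 2 : ℝ) ^ (1 - τ)) ^ k ≤ C := hC ⟨k, rfl⟩
    rw [hcg']
    set x := (((k:ℝ) + 1) ^ m) with hx
    have hx1 : 1 ≤ x := one_le_pow₀ (by linarith [(Nat.cast_nonneg k : (0:ℝ) ≤ k)])
    have hC0 : 0 ≤ C := le_trans (by positivity) hCk
    have e1 : ((1 / 2 : ℝ) ^ (1 - τ)) ^ k * ((1 / 2 : ℝ) ^ k) ^ τ = (1 / 2 : ℝ) ^ k := by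
      rw [← Real.rpow_natCast, ← Real.rpow_natCast, ← Real.rpow_mul (by norm_num),
        ← Real.rpow_mul (by norm_num), ← Real.rpow_add (by norm_num)]
      congr 1; ring
    have e2 : (κ * A) ^ τ * (((1 / 2 : ℝ) ^ k) ^ τ * x⁻¹) ≤ (κ * w k) ^ τ := by
      calc (κ * A) ^ τ * (((1 / 2 : ℝ) ^ k) ^ τ * x⁻¹)
          ≤ (κ * A) ^ τ * (((1 / 2 : ℝ) ^ k) ^ τ * x⁻¹ ^ τ) := by
            have : x⁻¹ ≤ x⁻¹ ^ τ := by
              have := Real.rpow_le_rpow_of_exponent_ge (x := x⁻¹) (by positivity)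
                (inv_le_one_of_one_le₀ hx1) hτ1.le
              rwa [Real.rpow_one] at this
            gcongr
        _ = (κ * (A * ((1 / 2 : ℝ) ^ k * x⁻¹))) ^ τ := by
            rw [← Real.mul_rpow (by positivity) (by positivity),
              ← Real.mul_rpow (by positivity) (by positivity)]
            congr 1; ring
        _ ≤ _ := by
            have := hlo k
            gcongr
    calc (1 / 2 : ℝ) ^ k = ((1 / 2 : ℝ) ^ (1 - τ)) ^ k * ((1 / 2 : ℝ) ^ k) ^ τ := e1.symm
      _ = (x * ((1 / 2 : ℝ) ^ (1 - τ)) ^ k) * (((1 / 2 : ℝ) ^ k) ^ τ * x⁻¹) := by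
          field_simp
      _ ≤ C * (((1 / 2 : ℝ) ^ k) ^ τ * x⁻¹) := by gcongr
      _ = C * ((κ * A) ^ τ)⁻¹ * ((κ * A) ^ τ * (((1 / 2 : ℝ) ^ k) ^ τ * x⁻¹)) := by
          field_simp
      _ ≤ _ := by gcongr
  · intro g' h1
    set τ := g' / g with hτ
    have hτ1 : 1 < τ := by rw [hτ, one_lt_div hg0]; exact h1
    set M := ⌈(m:ℝ) * τ⌉₊ with hM
    have hlim := (aux_pol M ((1 / 2 : ℝ) ^ (τ - 1)) (by positivity)
      (Real.rpow_lt_one (by norm_num) (by norm_num) (by linarith))).const_mul ((κ * A') ^ τ)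
    rw [mul_zero] at hlim
    refine squeeze_zero (fun k => ?_) (fun k => ?_) hlim
    · have := Real.rpow_pos_of_pos (hcpos k) g'
      positivity
    · rw [hcg']
      set x := ((k:ℝ) + 1) with hx
      have hx1 : 1 ≤ x := by linarith [(Nat.cast_nonneg k : (0:ℝ) ≤ k)]
      have e1 : (2:ℝ) ^ k * ((1 / 2 : ℝ) ^ k) ^ τ = ((1 / 2 : ℝ) ^ (τ - 1)) ^ k := by
        have : (2:ℝ) ^ k = (1 / 2 : ℝ) ^ (-(k:ℝ)) := by
          rw [Real.rpow_neg (by norm_num), Real.rpow_natCast]; simp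
        rw [this, ← Real.rpow_natCast, ← Real.rpow_natCast, ← Real.rpow_mul (by norm_num),
          ← Real.rpow_mul (by norm_num), ← Real.rpow_add (by norm_num)]
        congr 1; ring
      have e2 : (x ^ m) ^ τ ≤ x ^ M := by
        rw [← Real.rpow_natCast, ← Real.rpow_natCast, ← Real.rpow_mul (by linarith)]
        exact Real.rpow_le_rpow_of_exponent_le hx1 (Nat.le_ceil _)
      have hwk := (hw k).le
      have hup' := hup k
      calc (2:ℝ) ^ k * (κ * w k) ^ τ ≤ (2:ℝ) ^ k * (κ * (A' * ((1 / 2 : ℝ) ^ k * x ^ m))) ^ τ := by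
            gcongr
        _ = (2:ℝ) ^ k * ((κ * A') ^ τ * (((1 / 2 : ℝ) ^ k) ^ τ * (x ^ m) ^ τ)) := by
            rw [← Real.mul_rpow (by positivity) (by positivity),
              ← Real.mul_rpow (by positivity) (by positivity)]
            congr 2; ring
        _ ≤ (2:ℝ) ^ k * ((κ * A') ^ τ * (((1 / 2 : ℝ) ^ k) ^ τ * x ^ M)) := by gcongr
        _ = (κ * A') ^ τ * (x ^ M * ((2:ℝ) ^ k * ((1 / 2 : ℝ) ^ k) ^ τ)) := by ring
        _ = _ := by rw [e1]

lemma aux_scale1 (g L : ℝ) (hg0 : 0 < g) (hg1 : g < 1) (hL : 0 < L) (d : ℕ) (hd : 0 < d) :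
    ∃ (c : ℕ → ℝ) (q : ℝ), CScale c q ∧ 2 * c 0 ≤ L ∧
      (∀ a, dimH (range (cPhi a c)) = ENNReal.ofReal g) ∧
      Tendsto (fun k : ℕ => (2:ℝ) ^ k * c k ^ g * ((k:ℝ) + 1) ^ d) atTop (𝓝 0) := by
  obtain ⟨c, q, κ, h1, h2, h3, h4, h5, h6⟩ := aux_scale g L hg0 hL
    (fun k => (1 / 2 : ℝ) ^ k * (((k:ℝ) + 1) ^ (2 * d))⁻¹) (fun k => by positivity)
    (1 / 2) (by norm_num) (by
      have := Real.rpow_lt_rpow_of_exponent_gt (x := (1 / 2 : ℝ)) (by norm_num) (by norm_num) hg1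
      rwa [Real.rpow_one] at this)
    (fun k => by
      rw [pow_succ']
      have : (((((k + 1 : ℕ)):ℝ) + 1) ^ (2 * d))⁻¹ ≤ (((k:ℝ) + 1) ^ (2 * d))⁻¹ := by
        push_cast
        gcongr
        linarith
      rw [mul_assoc]
      gcongr) 1 1 (by norm_num) (by norm_num) (2 * d) (fun k => by simp)
    (fun k => by
      rw [one_mul]
      have : 1 ≤ ((k:ℝ) + 1) ^ (2 * d) := one_le_pow₀ (by linarith [(Nat.cast_nonneg k : (0:ℝ) ≤ k)])
      have := inv_le_one_of_one_le₀ this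
      gcongr
      linarith)
  refine ⟨c, q, h1, h2, fun a => h1.dim_eq a g hg0 h5 h6, ?_⟩
  have h7 : Tendsto (fun k : ℕ => κ * (1 / ((k:ℝ) + 1)) ^ d) atTop (𝓝 0) := by
    have := (tendsto_one_div_add_atTop_nhds_zero_nat (𝕜 := ℝ)).pow d
    rw [zero_pow hd.ne'] at this
    simpa using this.const_mul κ
  refine h7.congr (fun k => ?_)
  rw [h4]
  have : (2:ℝ) ^ k * (1 / 2) ^ k = 1 := by rw [← mul_pow]; norm_num
  calc κ * (1 / ((k:ℝ) + 1)) ^ d = κ * 1 * (1 / ((k:ℝ) + 1)) ^ d := by ring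
    _ = κ * ((2:ℝ) ^ k * (1 / 2) ^ k) * (1 / ((k:ℝ) + 1)) ^ d := by rw [this]
    _ = _ := by
      rw [pow_mul']
      field_simp
      rw [← mul_pow, one_div_mul_cancel (by positivity), one_pow]

lemma aux_scale2 (g L : ℝ) (hg0 : 0 < g) (hg1 : g < 1) (hL : 0 < L) :
    ∃ (c : ℕ → ℝ) (q : ℝ), CScale c q ∧ 2 * c 0 ≤ L ∧
      (∀ a, dimH (range (cPhi a c)) = ENNReal.ofReal g) ∧
      Summable (fun k : ℕ => (1 / 2 : ℝ) ^ k * (c k ^ g)⁻¹) := by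
  have hlt : (1 / 2 : ℝ) < (1 / 2) ^ g := by
    have := Real.rpow_lt_rpow_of_exponent_gt (x := (1 / 2 : ℝ)) (by norm_num) (by norm_num) hg1
    rwa [Real.rpow_one] at this
  obtain ⟨n, hn⟩ : ∃ n : ℕ, (1 / 2 : ℝ) * (1 + 1 / ((n:ℝ) + 1)) ^ 2 < (1 / 2) ^ g := by
    have h := (((tendsto_one_div_add_atTop_nhds_zero_nat (𝕜 := ℝ)).const_add 1).pow 2).const_mul
      (1 / 2 : ℝ)
    have h2 : (1 / 2 : ℝ) * (1 + 0) ^ 2 < (1 / 2) ^ g := by simpa using hlt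
    exact (h.eventually (gt_mem_nhds h2)).exists
  set N : ℝ := (n:ℝ) + 1 with hN
  have hN1 : 1 ≤ N := by rw [hN]; linarith [(Nat.cast_nonneg n : (0:ℝ) ≤ n)]
  obtain ⟨c, q, κ, h1, h2, h3, h4, h5, h6⟩ := aux_scale g L hg0 hL
    (fun k => (1 / 2 : ℝ) ^ k * ((k:ℝ) + N) ^ 2) (fun k => by positivity)
    ((1 / 2 : ℝ) * (1 + 1 / N) ^ 2) (by positivity) hn
    (fun k => by
      rw [pow_succ']
      have : (((k + 1 : ℕ)):ℝ) + N ≤ (1 + 1 / N) * ((k:ℝ) + N) := by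
        push_cast
        have hk : (0:ℝ) ≤ k := Nat.cast_nonneg k
        have : (1 + 1 / N) * ((k:ℝ) + N) = k + N + k / N + 1 := by field_simp; ring
        rw [this]
        have : 0 ≤ (k:ℝ) / N := by positivity
        linarith
      calc 1 / 2 * (1 / 2) ^ k * (((k + 1 : ℕ):ℝ) + N) ^ 2
          ≤ 1 / 2 * (1 / 2) ^ k * ((1 + 1 / N) * ((k:ℝ) + N)) ^ 2 := by gcongr
        _ = _ := by ring) 1 (N ^ 2) (by norm_num) (by positivity) 2
    (fun k => by
      rw [one_mul]
      have hk : (0:ℝ) ≤ k := Nat.cast_nonneg k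
      have a1 : 1 ≤ ((k:ℝ) + 1) ^ 2 := one_le_pow₀ (by linarith)
      have a2 : 1 ≤ ((k:ℝ) + N) ^ 2 := one_le_pow₀ (by linarith)
      have := inv_le_one_of_one_le₀ a1
      gcongr
      linarith)
    (fun k => by
      have hk : (0:ℝ) ≤ k := Nat.cast_nonneg k
      have : (k:ℝ) + N ≤ N * (k + 1) := by nlinarith
      calc (1 / 2 : ℝ) ^ k * ((k:ℝ) + N) ^ 2 ≤ (1 / 2 : ℝ) ^ k * (N * (k + 1)) ^ 2 := by gcongr
        _ = _ := by ring)
  refine ⟨c, q, h1, h2, fun a => h1.dim_eq a g hg0 h5 h6, ?_⟩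
  have hs : Summable (fun k : ℕ => κ⁻¹ * (1 / (((k + 1 : ℕ)):ℝ) ^ 2)) :=
    ((summable_nat_add_iff 1).2 (Real.summable_one_div_nat_pow.2 (by norm_num : 1 < 2))).mul_left _
  refine Summable.of_nonneg_of_le (fun k => ?_) (fun k => ?_) hs
  · have := Real.rpow_pos_of_pos (h1.pos k) g
    positivity
  · rw [h4]
    have hk : (0:ℝ) ≤ k := Nat.cast_nonneg k
    calc (1 / 2 : ℝ) ^ k * (κ * ((1 / 2) ^ k * ((k:ℝ) + N) ^ 2))⁻¹
        = κ⁻¹ * (1 / ((k:ℝ) + N) ^ 2) := by field_simp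
      _ ≤ _ := by
        push_cast
        gcongr


lemma aux_second {Ω : Type*} [MeasurableSpace Ω] (P : Measure Ω) [IsProbabilityMeasure P]
    {ι : Type*} [Fintype ι] (A : ι → Set Ω) (hA : ∀ i, MeasurableSet (A i)) (m0 Q0 : ℝ)
    (hm : 0 < m0) (hQ : 0 < Q0) (h1 : m0 ≤ ∑ i, P.real (A i))
    (h2 : ∑ i, ∑ j, P.real (A i ∩ A j) ≤ Q0) : m0 ^ 2 / Q0 ≤ P.real (⋃ i, A i) := by
  set N : Ω → ℝ := fun ω => ∑ i, (A i).indicator (fun _ => (1:ℝ)) ω with hN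
  have hU : MeasurableSet (⋃ i, A i) := MeasurableSet.iUnion hA
  have hint : ∀ s : Set Ω, MeasurableSet s → Integrable (s.indicator (fun _ => (1:ℝ))) P :=
    fun s hs => (integrable_const _).indicator hs
  have hI : ∀ s : Set Ω, MeasurableSet s → ∫ ω, s.indicator (fun _ => (1:ℝ)) ω ∂P = P.real s := by
    intro s hs
    rw [integral_indicator hs]; simp
  have iN : Integrable N P := integrable_finsetSum _ (fun i _ => hint _ (hA i))
  have eN : ∫ ω, N ω ∂P = ∑ i, P.real (A i) := by
    rw [hN, integral_finsetSum _ (fun i _ => hint _ (hA i))]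
    exact Finset.sum_congr rfl (fun i _ => hI _ (hA i))
  set N2 : Ω → ℝ := fun ω => ∑ i, ∑ j, (A i ∩ A j).indicator (fun _ => (1:ℝ)) ω with hN2
  have hA2 : ∀ i j, MeasurableSet (A i ∩ A j) := fun i j => (hA i).inter (hA j)
  have iN2 : Integrable N2 P :=
    integrable_finsetSum _ (fun i _ => integrable_finsetSum _ (fun j _ => hint _ (hA2 i j)))
  have eN2 : ∫ ω, N2 ω ∂P = ∑ i, ∑ j, P.real (A i ∩ A j) := by
    rw [hN2, integral_finsetSum _
      (fun i _ => integrable_finsetSum _ (fun j _ => hint _ (hA2 i j)))]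
    refine Finset.sum_congr rfl (fun i _ => ?_)
    rw [integral_finsetSum _ (fun j _ => hint _ (hA2 i j))]
    exact Finset.sum_congr rfl (fun j _ => hI _ (hA2 i j))
  have sq : ∀ ω, N2 ω = N ω ^ 2 := by
    intro ω
    simp only [hN, hN2]
    rw [pow_two, Finset.sum_mul_sum]
    refine Finset.sum_congr rfl (fun i _ => Finset.sum_congr rfl (fun j _ => ?_))
    by_cases ha : ω ∈ A i <;> by_cases hb : ω ∈ A j <;> simp [ha, hb]
  set l := Q0 / m0 with hl
  have hl0 : 0 < l := by positivity
  have key : ∫ ω, (2 * l * N ω - N2 ω) ∂P ≤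
      ∫ ω, l ^ 2 * (⋃ i, A i).indicator (fun _ => (1:ℝ)) ω ∂P := by
    refine integral_mono ((iN.const_mul _).sub iN2) ((hint _ hU).const_mul _) (fun ω => ?_)
    simp only
    rw [sq]
    by_cases h : ω ∈ ⋃ i, A i
    · simp only [indicator_of_mem h]
      nlinarith [sq_nonneg (l - N ω)]
    · have : N ω = 0 := by
        simp only [hN]
        refine Finset.sum_eq_zero (fun i _ => ?_)
        rw [indicator_of_notMem]
        intro hi; exact h (mem_iUnion.2 ⟨i, hi⟩)
      simp [this, h]
  rw [integral_sub (iN.const_mul _) iN2, integral_const_mul, integral_const_mul, hI _ hU, eN, eN2]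
    at key
  have k2 : 2 * l * m0 - Q0 ≤ l ^ 2 * P.real (⋃ i, A i) := by
    have : 2 * l * m0 ≤ 2 * l * ∑ i, P.real (A i) := by gcongr
    linarith
  have k3 : 2 * l * m0 - Q0 = Q0 := by rw [hl]; field_simp; ring
  rw [k3, hl] at k2
  rw [div_le_iff₀ hQ]
  have : (Q0 / m0) ^ 2 * P.real (⋃ i, A i) = (Q0 / m0 ^ 2) * (P.real (⋃ i, A i) * Q0) := by
    field_simp
  rw [this] at k2
  have k4 := mul_le_mul_of_nonneg_left k2 (by positivity : 0 ≤ m0 ^ 2 / Q0)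
  have k5 : m0 ^ 2 / Q0 * (Q0 / m0 ^ 2 * (P.real (⋃ i, A i) * Q0)) =
    P.real (⋃ i, A i) * Q0 := by field_simp
  have k6 : m0 ^ 2 / Q0 * Q0 = m0 ^ 2 := by field_simp
  linarith

lemma aux_count (n k : ℕ) (hk : k ≤ n) (g : Fin n → Fin 2) :
    ((Finset.univ.filter (fun g' : Fin n → Fin 2 => ∀ i : Fin n, (i:ℕ) < k → g i = g' i)).card : ℝ)
      ≤ (2:ℝ) ^ n * (1 / 2) ^ k := by
  have h1 : (Finset.univ.filter
      (fun g' : Fin n → Fin 2 => ∀ i : Fin n, (i:ℕ) < k → g i = g' i)).card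
      ≤ (Finset.univ : Finset (Fin (n - k) → Fin 2)).card := by
    refine Finset.card_le_card_of_injOn (fun g' j => g' ⟨k + j, by omega⟩) (by simp) ?_
    intro u hu v hv huv
    simp only [Finset.coe_filter, Finset.mem_univ, true_and, mem_ofPred_eq] at hu hv
    ext i
    by_cases hi : (i:ℕ) < k
    · rw [← hu i hi, ← hv i hi]
    · have := congrFun huv ⟨i - k, by omega⟩
      simp only at this
      have e : (⟨k + (i - k), by omega⟩ : Fin n) = i := by ext; simp; omega
      rw [e] at this
      rw [this]
  rw [Finset.card_univ, Fintype.card_fun, Fintype.card_fin, Fintype.card_fin] at h1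
  have h2 : (2:ℝ) ^ n = 2 ^ (n - k) * 2 ^ k := by rw [← pow_add]; congr 1; omega
  rw [h2, mul_assoc, ← mul_pow]
  norm_num
  exact_mod_cast h1

lemma aux_hold {d : ℕ} {f : ℝ → EuclideanSpace ℝ (Fin d)} {H : ℝ} (hH : 0 < H)
    (hf : HolderWithExp f H (Icc 0 1)) :
    ∃ K : ℝ, 0 ≤ K ∧ (∀ s ∈ Icc (0:ℝ) 1, ∀ t ∈ Icc (0:ℝ) 1, ∀ i, |f s i - f t i| ≤ K * |s - t| ^ H) ∧
      ContinuousOn f (Icc 0 1) := by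
  obtain ⟨K, hK⟩ := hf
  have h0 : ∀ s ∈ Icc (0:ℝ) 1, ∀ t ∈ Icc (0:ℝ) 1, ‖f s - f t‖ ≤ |K| * |s - t| ^ H := by
    intro s hs t ht
    refine (hK s hs t ht).trans ?_
    gcongr
    exact le_abs_self K
  refine ⟨|K|, abs_nonneg _, fun s hs t ht i => ?_, ?_⟩
  · have := PiLp.norm_apply_le (f s - f t) i
    simp only [PiLp.sub_apply, Real.norm_eq_abs] at this
    exact this.trans (h0 s hs t ht)
  · intro t ht
    rw [ContinuousWithinAt, tendsto_iff_norm_sub_tendsto_zero]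
    have hc : Tendsto (fun s : ℝ => |K| * |s - t| ^ H) (𝓝[Icc 0 1] t) (𝓝 0) := by
      have : Continuous (fun s : ℝ => |K| * |s - t| ^ H) :=
        continuous_const.mul (((continuous_id.sub continuous_const).abs).rpow_const
          (fun _ => Or.inr hH.le))
      have h := this.tendsto t
      simp only [sub_self, abs_zero, Real.zero_rpow hH.ne', mul_zero] at h
      exact h.mono_left nhdsWithin_le_nhds
    refine squeeze_zero' (Eventually.of_forall (fun _ => norm_nonneg _)) ?_ hc
    filter_upwards [self_mem_nhdsWithin] with s hs
    exact h0 s hs t ht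

lemma aux_limsup {Ω : Type*} [MeasurableSpace Ω] (P : Measure Ω) [IsProbabilityMeasure P]
    (U : ℕ → Set Ω) (hU : ∀ n, MeasurableSet (U n)) (p : ℝ≥0∞) (hp : ∀ n, p ≤ P (U n)) :
    p ≤ P (⋂ n, ⋃ m, U (n + m)) := by
  have hanti : Antitone (fun n => ⋃ m, U (n + m)) := by
    intro a b hab x hx
    simp only [mem_iUnion] at hx ⊢
    obtain ⟨m, hm⟩ := hx
    exact ⟨b - a + m, by rwa [show a + (b - a + m) = b + m by omega]⟩
  have ht := tendsto_measure_iInter_atTop (μ := P) (s := fun n => ⋃ m, U (n + m))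
    (fun n => (MeasurableSet.iUnion fun m => hU _).nullMeasurableSet) hanti ⟨0, measure_ne_top _ _⟩
  refine ge_of_tendsto' ht (fun n => (hp n).trans (measure_mono ?_))
  exact subset_iUnion_of_subset 0 (by simp)


lemma aux_E2 {Ω : Type*} [MeasurableSpace Ω] {P : Measure Ω} [IsProbabilityMeasure P]
    {H : ℝ} (hH : H ∈ Ioo (0:ℝ) 1) {d : ℕ} (hd : 0 < d)
    {B : Ω → ℝ → EuclideanSpace ℝ (Fin d)} (hB : IsFBM P H d B)
    (a b : ℝ) (ha : 0 < a) (hb : b ≤ 1)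
    {f : ℝ → EuclideanSpace ℝ (Fin d)} (hf : HolderWithExp f H (Icc 0 1))
    {c : ℕ → ℝ} {q : ℝ} (h : CScale c q) (hsub : range (cPhi a c) ⊆ Icc a b)
    (hsum : Summable (fun k : ℕ => (1 / 2 : ℝ) ^ k * (c k ^ (H * d))⁻¹))
    (x : EuclideanSpace ℝ (Fin d)) :
    0 < P {ω | ∃ s ∈ range (cPhi a c), B ω s + f s = x} := by
  obtain ⟨K, hK0, hK, hfc⟩ := aux_hold hH.1 hf
  have hmem : ∀ e, a ≤ cPhi a c e ∧ cPhi a c e ≤ 1 := fun e =>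
    ⟨(hsub ⟨e, rfl⟩).1, (hsub ⟨e, rfl⟩).2.trans hb⟩
  have hmem' : ∀ e, cPhi a c e ∈ Icc (0:ℝ) 1 := fun e => ⟨ha.le.trans (hmem e).1, (hmem e).2⟩
  have ha1 : a ≤ 1 := (hmem 0).1.trans (hmem 0).2
  have hsub' : range (cPhi a c) ⊆ Icc 0 1 := by rintro _ ⟨e, rfl⟩; exact hmem' e
  -- boundedness
  obtain ⟨M, hM⟩ : ∃ M : ℝ, ∀ s ∈ Icc (0:ℝ) 1, ∀ i, |x i - f s i| ≤ M := by
    obtain ⟨M, hM⟩ := isCompact_Icc.exists_bound_of_continuousOn (continuousOn_const.sub hfc :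
      ContinuousOn (fun s => x - f s) (Icc 0 1))
    refine ⟨M, fun s hs i => ?_⟩
    have := PiLp.norm_apply_le (x - f s) i
    simp only [PiLp.sub_apply, Real.norm_eq_abs] at this
    exact this.trans (hM s hs)
  obtain ⟨c0, hc0, hlow⟩ := aux_cube_lower hB hH.1 a ha M
  obtain ⟨C, hC, hpair⟩ := aux_cube_pair hB hH a ha ha1
  set r : ℝ := (1 / 2 : ℝ) ^ (1 / (d:ℝ)) with hr
  have hd' : (0:ℝ) < d := by exact_mod_cast hd
  have hr0 : 0 < r := by positivity
  have hr1 : r < 1 := Real.rpow_lt_one (by norm_num) (by norm_num) (by positivity)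
  have hrd : r ^ d = 1 / 2 := by
    rw [hr, ← Real.rpow_natCast, ← Real.rpow_mul (by norm_num), one_div_mul_cancel hd'.ne',
      Real.rpow_one]
  have hrn : ∀ n : ℕ, (r ^ n) ^ d = (1 / 2) ^ n := fun n => by rw [pow_right_comm, hrd]
  have hrn1 : ∀ n : ℕ, r ^ n ≤ 1 := fun n => pow_le_one₀ hr0.le hr1.le
  set T : (n : ℕ) → (Fin n → Fin 2) → ℝ := fun n g => cPhi a c (cExt n g) with hT
  set A : (n : ℕ) → (Fin n → Fin 2) → Set Ω := fun n g =>
    {ω | ∀ i, |B ω (T n g) i - (x i - f (T n g) i)| ≤ r ^ n} with hA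
  have hAm : ∀ n g, MeasurableSet (A n g) := by
    intro n g
    have : A n g = ⋂ i, {ω | |B ω (T n g) i - (x i - f (T n g) i)| ≤ r ^ n} := by
      ext ω; simp [hA]
    rw [this]
    refine MeasurableSet.iInter (fun i => ?_)
    exact measurableSet_le (((aux_meas hB _ i).sub_const _).abs) measurable_const
  set S : ℝ := ∑' k : ℕ, (1 / 2 : ℝ) ^ k * (c k ^ (H * d))⁻¹ with hS
  have hterm : ∀ k, 0 ≤ (1 / 2 : ℝ) ^ k * (c k ^ (H * d))⁻¹ := fun k => by
    have := Real.rpow_pos_of_pos (h.pos k) (H * d)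
    positivity
  have hS0 : 0 ≤ S := tsum_nonneg hterm
  have hq : 0 < 1 - 2 * q := by linarith [h.q2]
  set D : ℝ := (2 / a ^ H) ^ d with hD
  set C' : ℝ := C ^ d * ((1 - 2 * q) ^ (H * d))⁻¹ with hC'
  have haH : 0 < a ^ H := Real.rpow_pos_of_pos ha _
  have hD0 : 0 < D := by positivity
  have hC'0 : 0 < C' := by
    have := Real.rpow_pos_of_pos hq (H * d)
    positivity
  -- first moment
  have hm1 : ∀ n, c0 ^ d ≤ ∑ g, P.real (A n g) := by
    intro n
    have : ∀ g, c0 ^ d * (1 / 2) ^ n ≤ P.real (A n g) := by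
      intro g
      have h1 := hlow (T n g) (hmem _).1 (hmem _).2 (fun i => x i - f (T n g) i)
        (fun i => hM _ (hmem' _) i) (r ^ n) (by positivity) (hrn1 n)
      rw [mul_pow, hrn] at h1
      exact (ENNReal.ofReal_le_iff_le_toReal (measure_ne_top _ _)).1 h1
    calc c0 ^ d = ∑ g : Fin n → Fin 2, c0 ^ d * (1 / 2) ^ n := by
          simp
          field_simp
      _ ≤ _ := Finset.sum_le_sum (fun g _ => this g)
  -- pair bound
  have hpb : ∀ n (g g' : Fin n → Fin 2), g ≠ g' → ∃ k < n, (∀ i : Fin n, (i:ℕ) < k → g i = g' i) ∧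
      P.real (A n g ∩ A n g') ≤ C' * (1 / 2) ^ n * (1 / 2) ^ n * (c k ^ (H * d))⁻¹ := by
    intro n g g' hne
    have hne' : cExt n g ≠ cExt n g' := by
      intro he
      apply hne
      ext i
      have := congrFun he i
      simp only [cExt, i.2, dif_pos] at this
      rw [this]
    obtain ⟨k, hk1, hk2, hk3⟩ := h.inj_sep a _ _ hne'
    have hkn : k < n := by
      by_contra hcon
      exact hk2 (by simp [cExt, hcon])
    refine ⟨k, hkn, fun i hi => ?_, ?_⟩
    · have := hk1 i hi
      simpa [cExt] using this
    · have hpos : 0 < (1 - 2 * q) * c k := mul_pos hq (h.pos k)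
      have hgen : ∀ u v : Fin n → Fin 2, T n u < T n v → (1 - 2 * q) * c k ≤ T n v - T n u →
          P.real (A n u ∩ A n v) ≤ C' * (1 / 2) ^ n * (1 / 2) ^ n * (c k ^ (H * d))⁻¹ := by
        intro u v huv hle
        have h1 := hpair (T n u) (T n v) (hmem _).1 huv (hmem _).2 (fun i => x i - f (T n u) i)
          (fun i => x i - f (T n v) i) (r ^ n) (by positivity)
        have h2 : A n u ∩ A n v ⊆ {ω | ∀ i, |B ω (T n u) i - (x i - f (T n u) i)| ≤ r ^ n ∧
            |B ω (T n v) i - (x i - f (T n v) i)| ≤ r ^ n} := fun ω hω i => ⟨hω.1 i, hω.2 i⟩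
        have h3 := ENNReal.toReal_mono ENNReal.ofReal_ne_top ((measure_mono h2).trans h1)
        have hTp : 0 < T n v - T n u := by linarith
        have hTH := Real.rpow_pos_of_pos hTp H
        rw [ENNReal.toReal_ofReal (by positivity)] at h3
        refine h3.trans ?_
        have h4 : ((1 - 2 * q) * c k) ^ (H * d) ≤ ((T n v - T n u) ^ H) ^ d := by
          rw [← Real.rpow_natCast, ← Real.rpow_mul hTp.le]
          exact Real.rpow_le_rpow hpos.le hle (by have := hH.1; positivity)
        have h5 := Real.rpow_pos_of_pos hpos (H * d)
        calc (C * (r ^ n) ^ 2 / (T n v - T n u) ^ H) ^ d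
            = C ^ d * ((r ^ n) ^ d) ^ 2 / ((T n v - T n u) ^ H) ^ d := by
              rw [div_pow, mul_pow]; congr 2; rw [pow_right_comm]
          _ ≤ C ^ d * ((r ^ n) ^ d) ^ 2 / (((1 - 2 * q) * c k) ^ (H * d)) := by gcongr
          _ = _ := by
              rw [hrn, Real.mul_rpow hq.le (h.pos k).le, hC', div_eq_mul_inv, mul_inv]
              ring
      rcases le_or_gt 0 (T n g - T n g') with hs | hs
      · have h6 : (1 - 2 * q) * c k ≤ T n g - T n g' := by
          rw [← abs_of_nonneg hs]; exact hk3
        rw [inter_comm]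
        exact hgen g' g (by linarith) h6
      · have h6 : (1 - 2 * q) * c k ≤ T n g' - T n g := by
          have : |T n g - T n g'| = T n g' - T n g := by rw [abs_of_neg hs]; ring
          rw [← this]; exact hk3
        exact hgen g g' (by linarith) h6
  -- diagonal
  have hdiag : ∀ n g, P.real (A n g) ≤ D * (1 / 2) ^ n := by
    intro n g
    have h1 := aux_cube_upper hB hH.1 a (T n g) ha (hmem _).1 (hmem _).2
      (fun i => x i - f (T n g) i) (r ^ n) (by positivity)
    have h3 := ENNReal.toReal_mono ENNReal.ofReal_ne_top h1
    rw [ENNReal.toReal_ofReal (by positivity)] at h3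
    refine h3.trans (le_of_eq ?_)
    rw [hD, ← hrn, ← mul_pow]
    congr 1; ring
  have hm2 : ∀ n, ∑ g, ∑ g', P.real (A n g ∩ A n g') ≤ D + C' * S := by
    intro n
    have hgg : ∀ g g', P.real (A n g ∩ A n g') ≤ (if g = g' then D * (1 / 2) ^ n else 0) +
        ∑ k ∈ Finset.range n, (if ∀ i : Fin n, (i:ℕ) < k → g i = g' i then
          C' * (1 / 2) ^ n * (1 / 2) ^ n * (c k ^ (H * d))⁻¹ else 0) := by
      intro g g'
      have hnn : ∀ k ∈ Finset.range n, 0 ≤ (if ∀ i : Fin n, (i:ℕ) < k → g i = g' i then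
          C' * (1 / 2) ^ n * (1 / 2) ^ n * (c k ^ (H * d))⁻¹ else 0) := by
        intro k _
        have := Real.rpow_pos_of_pos (h.pos k) (H * d)
        split_ifs <;> positivity
      by_cases he : g = g'
      · subst he
        rw [inter_self, if_pos rfl]
        have := Finset.sum_nonneg hnn
        linarith [hdiag n g]
      · rw [if_neg he, zero_add]
        obtain ⟨k, hk, hk1, hk2⟩ := hpb n g g' he
        refine le_trans ?_ (Finset.single_le_sum hnn (Finset.mem_range.2 hk))
        rw [if_pos hk1]; exact hk2
    have hrow : ∀ g, ∑ g', P.real (A n g ∩ A n g') ≤ (D + C' * S) * (1 / 2) ^ n := by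
      intro g
      calc ∑ g', P.real (A n g ∩ A n g') ≤ ∑ g', ((if g = g' then D * (1 / 2) ^ n else 0) +
        ∑ k ∈ Finset.range n, (if ∀ i : Fin n, (i:ℕ) < k → g i = g' i then
          C' * (1 / 2) ^ n * (1 / 2) ^ n * (c k ^ (H * d))⁻¹ else 0)) :=
            Finset.sum_le_sum (fun g' _ => hgg g g')
        _ = D * (1 / 2) ^ n + ∑ k ∈ Finset.range n, ∑ g' : Fin n → Fin 2, (if ∀ i : Fin n, (i:ℕ) < k → g i = g' i then
          C' * (1 / 2) ^ n * (1 / 2) ^ n * (c k ^ (H * d))⁻¹ else 0) := by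
            rw [Finset.sum_add_distrib, Finset.sum_comm (s := Finset.univ) (t := Finset.range n)]
            simp
        _ ≤ D * (1 / 2) ^ n + ∑ k ∈ Finset.range n,
            C' * (1 / 2) ^ n * ((1 / 2) ^ k * (c k ^ (H * d))⁻¹) := by
            gcongr with k hk
            rw [← Finset.sum_filter, Finset.sum_const, nsmul_eq_mul]
            have h1 := aux_count n k (Finset.mem_range.1 hk).le g
            have := Real.rpow_pos_of_pos (h.pos k) (H * d)
            calc _ ≤ (2:ℝ) ^ n * (1 / 2) ^ k *
                  (C' * (1 / 2) ^ n * (1 / 2) ^ n * (c k ^ (H * d))⁻¹) := by gcongr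
              _ = ((2:ℝ) ^ n * (1 / 2) ^ n) *
                  (C' * (1 / 2) ^ n * ((1 / 2) ^ k * (c k ^ (H * d))⁻¹)) := by ring
              _ = _ := by rw [← mul_pow]; norm_num
        _ ≤ D * (1 / 2) ^ n + C' * (1 / 2) ^ n * S := by
            rw [← Finset.mul_sum]
            gcongr
            exact hsum.sum_le_tsum _ (fun k _ => hterm k)
        _ = _ := by ring
    calc ∑ g, ∑ g', P.real (A n g ∩ A n g') ≤ ∑ g : Fin n → Fin 2, (D + C' * S) * (1 / 2) ^ n :=
          Finset.sum_le_sum (fun g _ => hrow g)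
      _ = _ := by
        simp
        field_simp
  set p := (c0 ^ d) ^ 2 / (D + C' * S) with hp
  have hp0 : 0 < p := by positivity
  have hU : ∀ n, p ≤ P.real (⋃ g, A n g) := fun n =>
    aux_second P (A n) (hAm n) (c0 ^ d) (D + C' * S) (by positivity) (by positivity) (hm1 n) (hm2 n)
  have hU' : ∀ n, ENNReal.ofReal p ≤ P (⋃ g, A n g) := fun n =>
    (ENNReal.ofReal_le_iff_le_toReal (measure_ne_top _ _)).2 (hU n)
  have hlim := aux_limsup P (fun n => ⋃ g, A n g) (fun n => MeasurableSet.iUnion (hAm n)) _ hU'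
  refine lt_of_lt_of_le (ENNReal.ofReal_pos.2 hp0) (hlim.trans (measure_mono ?_))
  intro ω hω
  have hcont : ContinuousOn (fun s => ∑ i, |B ω s i - (x i - f s i)|) (range (cPhi a c)) := by
    refine continuousOn_finsetSum _ (fun i _ => ?_)
    have h1 : ContinuousOn (fun s => B ω s i) (range (cPhi a c)) :=
      (PiLp.continuous_apply 2 _ i).comp_continuousOn ((hB.cont ω).mono hsub')
    have h2 : ContinuousOn (fun s => f s i) (range (cPhi a c)) :=
      (PiLp.continuous_apply 2 _ i).comp_continuousOn (hfc.mono hsub')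
    exact (h1.sub (continuousOn_const.sub h2)).abs
  obtain ⟨s0, hs0, hmin⟩ := (h.compact a).exists_isMinOn (range_nonempty _) hcont
  refine ⟨s0, hs0, ?_⟩
  have hle : ∀ n, ∑ i, |B ω s0 i - (x i - f s0 i)| ≤ d * r ^ n := by
    intro n
    have h1 := mem_iInter.1 hω n
    obtain ⟨m, hm⟩ := mem_iUnion.1 h1
    obtain ⟨g, hg⟩ := mem_iUnion.1 hm
    have h2 := isMinOn_iff.1 hmin (T (n + m) g) ⟨_, rfl⟩
    refine h2.trans ?_
    calc ∑ i, |B ω (T (n + m) g) i - (x i - f (T (n + m) g) i)| ≤ ∑ i : Fin d, r ^ n := by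
          refine Finset.sum_le_sum (fun i _ => (hg i).trans ?_)
          exact pow_le_pow_of_le_one hr0.le hr1.le (by omega)
      _ = _ := by simp
  have hz : ∑ i, |B ω s0 i - (x i - f s0 i)| ≤ 0 := by
    have ht := (tendsto_pow_atTop_nhds_zero_of_lt_one hr0.le hr1).const_mul (d:ℝ)
    rw [mul_zero] at ht
    exact ge_of_tendsto' ht hle
  have hz' := (Finset.sum_eq_zero_iff_of_nonneg (fun i _ => abs_nonneg _)).1
    (le_antisymm hz (Finset.sum_nonneg (fun i _ => abs_nonneg _)))
  ext i
  have := abs_eq_zero.1 (hz' i (Finset.mem_univ i))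
  simp only [PiLp.add_apply]
  linarith


lemma cTr_cTr (e : ℕ → Fin 2) (n : ℕ) : cTr (cTr e (n + 1)) n = cTr e n := by
  ext k
  by_cases hk : k < n
  · simp [cTr, hk, Nat.lt_succ_of_lt hk]
  · simp [cTr, hk]

lemma cTr_cExt (n : ℕ) (g : Fin n → Fin 2) : cTr (cExt n g) n = cExt n g := by
  ext k
  by_cases hk : k < n <;> simp [cTr, cExt, hk]

lemma aux_bad {Ω : Type*} [MeasurableSpace Ω] {P : Measure Ω} [IsProbabilityMeasure P]
    {H : ℝ} (hH : H ∈ Ioo (0:ℝ) 1) {d : ℕ}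
    {B : Ω → ℝ → EuclideanSpace ℝ (Fin d)} (hB : IsFBM P H d B)
    (a : ℝ) {c : ℕ → ℝ} {q : ℝ} (h : CScale c q)
    (hmem : ∀ e, cPhi a c e ∈ Icc (0:ℝ) 1) (j : ℕ) :
    P (⋃ g : Fin (j + 1) → Fin 2, ⋃ i : Fin d, {ω | 2 * c j ^ H * ((j:ℝ) + 1) <
      |B ω (cPhi a c (cExt (j + 1) g)) i - B ω (cPhi a c (cTr (cExt (j + 1) g) j)) i|}) ≤
      ENNReal.ofReal (4 * d * (1 / 2) ^ j) := by
  have hcH : 0 < c j ^ H := Real.rpow_pos_of_pos (h.pos j) _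
  have h1 : ∀ (g : Fin (j + 1) → Fin 2) (i : Fin d), P {ω | 2 * c j ^ H * ((j:ℝ) + 1) <
      |B ω (cPhi a c (cExt (j + 1) g)) i - B ω (cPhi a c (cTr (cExt (j + 1) g) j)) i|} ≤
      ENNReal.ofReal (2 * (1 / 4) ^ j) := by
    intro g i
    have ht := h.tr_succ a (cExt (j + 1) g) j
    rw [cTr_cExt] at ht
    have hcase : cExt (j + 1) g j = 0 ∨ cExt (j + 1) g j = 1 := by
      generalize cExt (j + 1) g j = z
      fin_cases z <;> simp
    rcases hcase with h0 | h0
    · rw [h0] at ht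
      simp only [Fin.val_zero, Nat.cast_zero, zero_mul, add_zero] at ht
      rw [ht]
      have : {ω : Ω | 2 * c j ^ H * ((j:ℝ) + 1) <
        |B ω (cPhi a c (cTr (cExt (j + 1) g) j)) i - B ω (cPhi a c (cTr (cExt (j + 1) g) j)) i|} = ∅ := by
        ext ω
        simp only [sub_self, abs_zero, mem_ofPred_eq, mem_empty_iff_false, iff_false, not_lt]
        positivity
      rw [this]; simp
    · rw [h0] at ht
      simp only [Fin.val_one, Nat.cast_one, one_mul] at ht
      have hd : cPhi a c (cExt (j + 1) g) - cPhi a c (cTr (cExt (j + 1) g) j) = c j := by linarith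
      have h2 := aux_incr hB hH.1 i _ _ (hmem (cTr (cExt (j + 1) g) j)).1
        (by linarith [h.pos j]) (hmem (cExt (j + 1) g)).2 (2 * c j ^ H * ((j:ℝ) + 1)) (by positivity)
      refine h2.trans (ENNReal.ofReal_le_ofReal ?_)
      rw [hd]
      have e1 : -(2 * c j ^ H * ((j:ℝ) + 1)) ^ 2 / (2 * (c j ^ H) ^ 2) = -2 * ((j:ℝ) + 1) ^ 2 := by
        field_simp
      rw [e1]
      have e2 : Real.exp (-2) ≤ 1 / 4 := by
        have h3 : (2:ℝ) ≤ Real.exp 1 := by linarith [Real.add_one_le_exp (1:ℝ)]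
        have h4 : (4:ℝ) ≤ Real.exp 2 := by
          have : Real.exp 2 = Real.exp 1 * Real.exp 1 := by rw [← Real.exp_add]; norm_num
          rw [this]; nlinarith
        rw [Real.exp_neg, one_div]
        gcongr
      have e3 : Real.exp (-2 * ((j:ℝ) + 1) ^ 2) ≤ Real.exp (-2) ^ j := by
        rw [← Real.exp_nat_mul]
        apply Real.exp_le_exp.2
        have hj : (0:ℝ) ≤ j := Nat.cast_nonneg j
        nlinarith
      have e4 : Real.exp (-2) ^ j ≤ (1 / 4) ^ j := by
        have := Real.exp_pos (-2); gcongr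
      linarith
  calc _ ≤ ∑ g : Fin (j + 1) → Fin 2, ∑ i : Fin d, P {ω | 2 * c j ^ H * ((j:ℝ) + 1) <
      |B ω (cPhi a c (cExt (j + 1) g)) i - B ω (cPhi a c (cTr (cExt (j + 1) g) j)) i|} := by
        refine (measure_iUnion_fintype_le _ _).trans (Finset.sum_le_sum (fun g _ => ?_))
        exact measure_iUnion_fintype_le _ _
    _ ≤ ∑ g : Fin (j + 1) → Fin 2, ∑ i : Fin d, ENNReal.ofReal (2 * (1 / 4) ^ j) :=
        Finset.sum_le_sum (fun g _ => Finset.sum_le_sum (fun i _ => h1 g i))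
    _ = ENNReal.ofReal (∑ g : Fin (j + 1) → Fin 2, ∑ i : Fin d, (2 * (1 / 4) ^ j)) := by
        rw [ENNReal.ofReal_sum_of_nonneg (fun _ _ => Finset.sum_nonneg (fun _ _ => by positivity))]
        refine Finset.sum_congr rfl (fun _ _ => ?_)
        rw [ENNReal.ofReal_sum_of_nonneg (fun _ _ => by positivity)]
    _ = _ := by
        congr 1
        have : (2:ℝ) ^ j * (1 / 4) ^ j = (1 / 2) ^ j := by rw [← mul_pow]; norm_num
        rw [← this]
        simp [pow_succ]
        ring

lemma aux_E1 {Ω : Type*} [MeasurableSpace Ω] {P : Measure Ω} [IsProbabilityMeasure P]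
    {H : ℝ} (hH : H ∈ Ioo (0:ℝ) 1) {d : ℕ}
    {B : Ω → ℝ → EuclideanSpace ℝ (Fin d)} (hB : IsFBM P H d B)
    (a b : ℝ) (ha : 0 < a) (hb : b ≤ 1)
    {f : ℝ → EuclideanSpace ℝ (Fin d)} (hf : HolderWithExp f H (Icc 0 1))
    {c : ℕ → ℝ} {q : ℝ} (h : CScale c q) (hsub : range (cPhi a c) ⊆ Icc a b)
    (hlim : Tendsto (fun k : ℕ => (2:ℝ) ^ k * c k ^ (H * d) * ((k:ℝ) + 1) ^ d) atTop (𝓝 0))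
    (x : EuclideanSpace ℝ (Fin d)) :
    P {ω | ∃ s ∈ range (cPhi a c), B ω s + f s = x} = 0 := by
  obtain ⟨K, hK0, hK, -⟩ := aux_hold hH.1 hf
  have hmem : ∀ e, a ≤ cPhi a c e ∧ cPhi a c e ≤ 1 := fun e =>
    ⟨(hsub ⟨e, rfl⟩).1, (hsub ⟨e, rfl⟩).2.trans hb⟩
  have hmem' : ∀ e, cPhi a c e ∈ Icc (0:ℝ) 1 := fun e => ⟨ha.le.trans (hmem e).1, (hmem e).2⟩
  have hcH : ∀ k, 0 < c k ^ H := fun k => Real.rpow_pos_of_pos (h.pos k) _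
  have haH : 0 < a ^ H := Real.rpow_pos_of_pos ha _
  set θ := q ^ H with hθ
  have hθ0 : 0 < θ := Real.rpow_pos_of_pos h.q0 _
  have hθ1 : θ < 1 := Real.rpow_lt_one h.q0.le (by linarith [h.q2]) hH.1
  have hWs : Summable (fun i : ℕ => θ ^ i * ((i:ℝ) + 1)) := by
    have h1 := summable_pow_mul_geometric_of_norm_lt_one (R := ℝ) 1 (r := θ)
      (by rwa [Real.norm_eq_abs, abs_of_pos hθ0])
    have h2 := summable_geometric_of_lt_one hθ0.le hθ1
    refine (h1.add h2).congr (fun i => ?_)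
    ring
  set W := ∑' i : ℕ, θ ^ i * ((i:ℝ) + 1) with hW
  have hWt : ∀ i : ℕ, 0 ≤ θ ^ i * ((i:ℝ) + 1) := fun i => by positivity
  have hW0 : 0 ≤ W := tsum_nonneg hWt
  have hstep : ∀ k j : ℕ, 2 * c (k + j) ^ H * (((k + j : ℕ):ℝ) + 1) ≤
      2 * c k ^ H * ((k:ℝ) + 1) * (θ ^ j * ((j:ℝ) + 1)) := by
    intro k j
    have h1 : c (k + j) ^ H ≤ θ ^ j * c k ^ H := by
      have h2 := Real.rpow_le_rpow (h.pos _).le (h.geo k j) hH.1.le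
      rw [Real.mul_rpow (pow_nonneg h.q0.le _) (h.pos k).le] at h2
      have h3 : (q ^ j) ^ H = θ ^ j := by
        rw [hθ, ← Real.rpow_natCast, ← Real.rpow_natCast, ← Real.rpow_mul h.q0.le,
          ← Real.rpow_mul h.q0.le, mul_comm]
      rwa [h3] at h2
    have h2 : ((k + j : ℕ):ℝ) + 1 ≤ ((k:ℝ) + 1) * ((j:ℝ) + 1) := by
      push_cast
      have : (0:ℝ) ≤ (k:ℝ) * j := by positivity
      nlinarith
    have := hcH k
    calc 2 * c (k + j) ^ H * (((k + j : ℕ):ℝ) + 1)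
        ≤ 2 * (θ ^ j * c k ^ H) * (((k:ℝ) + 1) * ((j:ℝ) + 1)) := by gcongr
      _ = _ := by ring
  set R := 2 * W + K * 2 ^ H with hR
  have hR0 : 0 ≤ R := by positivity
  set bad : ℕ → Set Ω := fun j => ⋃ g : Fin (j + 1) → Fin 2, ⋃ i : Fin d,
    {ω | 2 * c j ^ H * ((j:ℝ) + 1) <
      |B ω (cPhi a c (cExt (j + 1) g)) i - B ω (cPhi a c (cTr (cExt (j + 1) g) j)) i|} with hbad
  set good : (k : ℕ) → (Fin k → Fin 2) → Set Ω := fun k g =>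
    {ω | ∀ i, |B ω (cPhi a c (cExt k g)) i - (x i - f (cPhi a c (cExt k g)) i)| ≤
      R * c k ^ H * ((k:ℝ) + 1)} with hgood
  have hcover : ∀ k, {ω | ∃ s ∈ range (cPhi a c), B ω s + f s = x} ⊆
      (⋃ g, good k g) ∪ ⋃ j, bad (k + j) := by
    rintro k ω ⟨_, ⟨e, rfl⟩, hx⟩
    by_cases hω : ω ∈ ⋃ j, bad (k + j)
    · exact Or.inr hω
    left
    have hnb : ∀ n, k ≤ n → ∀ i, |B ω (cPhi a c (cTr e (n + 1))) i - B ω (cPhi a c (cTr e n)) i| ≤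
        2 * c n ^ H * ((n:ℝ) + 1) := by
      intro n hn i
      by_contra hcon
      push Not at hcon
      apply hω
      refine mem_iUnion.2 ⟨n - k, ?_⟩
      rw [show k + (n - k) = n by omega]
      refine mem_iUnion.2 ⟨fun i => e i, mem_iUnion.2 ⟨i, ?_⟩⟩
      rw [← cTr_eq_ext, cTr_cTr]
      exact hcon
    have hpart : ∀ i, ∀ m : ℕ, |B ω (cPhi a c (cTr e (k + m))) i - B ω (cPhi a c (cTr e k)) i| ≤
        2 * c k ^ H * ((k:ℝ) + 1) * ∑ j ∈ Finset.range m, θ ^ j * ((j:ℝ) + 1) := by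
      intro i m
      induction m with
      | zero => simp
      | succ m ih =>
        rw [Finset.sum_range_succ, mul_add]
        have h1 := hnb (k + m) (by omega) i
        have h2 := hstep k m
        have h3 := abs_sub_le (B ω (cPhi a c (cTr e (k + (m + 1)))) i)
          (B ω (cPhi a c (cTr e (k + m))) i) (B ω (cPhi a c (cTr e k)) i)
        rw [← add_assoc] at h3 ⊢
        linarith
    have hpart' : ∀ i, ∀ m : ℕ, |B ω (cPhi a c (cTr e (k + m))) i - B ω (cPhi a c (cTr e k)) i| ≤
        2 * c k ^ H * ((k:ℝ) + 1) * W := by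
      intro i m
      have := hcH k
      refine (hpart i m).trans ?_
      gcongr
      exact hWs.sum_le_tsum _ (fun j _ => hWt j)
    have hclose : ∀ n, |cPhi a c e - cPhi a c (cTr e n)| ≤ 2 * c n := fun n =>
      h.close a e (cTr e n) n (fun i hi => by simp [cTr, hi])
    have htend : Tendsto (fun m => cPhi a c (cTr e (k + m))) atTop (𝓝[Icc 0 1] (cPhi a c e)) := by
      refine tendsto_nhdsWithin_iff.2 ⟨?_, Eventually.of_forall (fun m => hmem' _)⟩
      rw [tendsto_iff_norm_sub_tendsto_zero]
      have h1 : Tendsto (fun m => 2 * c (k + m)) atTop (𝓝 0) := by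
        have h2 := (tendsto_add_atTop_iff_nat k).2 h.summable.tendsto_atTop_zero
        have h3 := h2.const_mul 2
        rw [mul_zero] at h3
        refine h3.congr (fun m => by rw [add_comm])
      refine squeeze_zero (fun _ => norm_nonneg _) (fun m => ?_) h1
      rw [Real.norm_eq_abs, abs_sub_comm]
      exact hclose _
    have hfin : ∀ i, |B ω (cPhi a c e) i - B ω (cPhi a c (cTr e k)) i| ≤
        2 * c k ^ H * ((k:ℝ) + 1) * W := by
      intro i
      have hcB : ContinuousWithinAt (fun s => B ω s i) (Icc 0 1) (cPhi a c e) :=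
        ((PiLp.continuous_apply 2 _ i).comp_continuousOn (hB.cont ω)) _ (hmem' e)
      have h1 := ((hcB.tendsto.comp htend).sub_const (B ω (cPhi a c (cTr e k)) i)).abs
      exact le_of_tendsto' h1 (fun m => hpart' i m)
    refine mem_iUnion.2 ⟨fun i => e i, fun i => ?_⟩
    rw [← cTr_eq_ext]
    have hxi : x i = B ω (cPhi a c e) i + f (cPhi a c e) i := by rw [← hx]; simp
    have hfi := hK _ (hmem' e) _ (hmem' (cTr e k)) i
    have hfi2 : K * |cPhi a c e - cPhi a c (cTr e k)| ^ H ≤ K * 2 ^ H * c k ^ H * ((k:ℝ) + 1) := by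
      have h1 : |cPhi a c e - cPhi a c (cTr e k)| ^ H ≤ (2 * c k) ^ H :=
        Real.rpow_le_rpow (abs_nonneg _) (hclose k) hH.1.le
      rw [Real.mul_rpow (by norm_num) (h.pos k).le] at h1
      have h2 : (1:ℝ) ≤ (k:ℝ) + 1 := by linarith [(Nat.cast_nonneg k : (0:ℝ) ≤ k)]
      have := hcH k
      calc K * |cPhi a c e - cPhi a c (cTr e k)| ^ H ≤ K * (2 ^ H * c k ^ H) := by gcongr
        _ = K * 2 ^ H * c k ^ H * 1 := by ring
        _ ≤ _ := by gcongr
    have hBi := hfin i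
    rw [hxi]
    have hRe : R * c k ^ H * ((k:ℝ) + 1) =
        2 * c k ^ H * ((k:ℝ) + 1) * W + K * 2 ^ H * c k ^ H * ((k:ℝ) + 1) := by rw [hR]; ring
    rw [hRe]
    have h1 := abs_le.1 hBi
    have h2 := abs_le.1 (hfi.trans hfi2)
    rw [abs_le]
    constructor <;> linarith [h1.1, h1.2, h2.1, h2.2]
  set u : ℕ → ℝ := fun k => (2 * R / a ^ H) ^ d * ((2:ℝ) ^ k * c k ^ (H * d) * ((k:ℝ) + 1) ^ d) +
    8 * d * (1 / 2) ^ k with hu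
  have hut : Tendsto u atTop (𝓝 0) := by
    have h1 := hlim.const_mul ((2 * R / a ^ H) ^ d)
    have h2 := (tendsto_pow_atTop_nhds_zero_of_lt_one (r := (1 / 2 : ℝ)) (by norm_num)
      (by norm_num)).const_mul (8 * (d:ℝ))
    simpa [hu] using h1.add h2
  have hbound : ∀ k, P {ω | ∃ s ∈ range (cPhi a c), B ω s + f s = x} ≤ ENNReal.ofReal (u k) := by
    intro k
    have hck := hcH k
    have hckd := Real.rpow_pos_of_pos (h.pos k) (H * d)
    refine (measure_mono (hcover k)).trans ((measure_union_le _ _).trans ?_)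
    rw [hu, ENNReal.ofReal_add (by positivity) (by positivity)]
    refine add_le_add ?_ ?_
    · calc P (⋃ g, good k g) ≤ ∑ g, P (good k g) := measure_iUnion_fintype_le _ _
        _ ≤ ∑ g : Fin k → Fin 2, ENNReal.ofReal ((2 * (R * c k ^ H * ((k:ℝ) + 1)) / a ^ H) ^ d) := by
            refine Finset.sum_le_sum (fun g _ => ?_)
            exact aux_cube_upper hB hH.1 a _ ha (hmem _).1 (hmem _).2 _ _ (by positivity)
        _ = ENNReal.ofReal (∑ g : Fin k → Fin 2, (2 * (R * c k ^ H * ((k:ℝ) + 1)) / a ^ H) ^ d) := by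
            rw [ENNReal.ofReal_sum_of_nonneg (fun _ _ => by positivity)]
        _ = _ := by
            congr 1
            have e1 : c k ^ (H * d) = (c k ^ H) ^ d := by
              rw [← Real.rpow_natCast, ← Real.rpow_mul (h.pos k).le]
            rw [e1]
            rw [show 2 * (R * c k ^ H * ((k:ℝ) + 1)) / a ^ H =
              (2 * R / a ^ H) * (c k ^ H) * ((k:ℝ) + 1) by ring, mul_pow, mul_pow]
            simp
            ring
    · calc P (⋃ j, bad (k + j)) ≤ ∑' j, P (bad (k + j)) := measure_iUnion_le _
        _ ≤ ∑' j : ℕ, ENNReal.ofReal (4 * d * (1 / 2) ^ (k + j)) :=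
            ENNReal.tsum_le_tsum (fun j => aux_bad hH hB a h hmem' (k + j))
        _ = ENNReal.ofReal (∑' j : ℕ, 4 * d * (1 / 2) ^ (k + j)) := by
            rw [ENNReal.ofReal_tsum_of_nonneg (fun _ => by positivity)]
            simp_rw [pow_add, ← mul_assoc]
            exact summable_geometric_two.mul_left _
        _ = _ := by
            congr 1
            simp_rw [pow_add, ← mul_assoc]
            rw [tsum_mul_left, tsum_geometric_two]
            ring
  have h1 := ENNReal.tendsto_ofReal hut
  rw [ENNReal.ofReal_zero] at h1
  exact le_antisymm (ge_of_tendsto' h1 hbound) zero_le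

end Aux

/-- Proposition 6.1: if `Hd < 1` and `f` is `H`-Hölder continuous,
there are Borel sets `E₁, E₂ ⊆ I` of Hausdorff dimension `Hd` such that every point is
polar for `(B^H+f)|_{E₁}` and non-polar for `(B^H+f)|_{E₂}`. -/
theorem statement17 {Ω : Type*} [MeasurableSpace Ω] (ℙ : Measure Ω) [IsProbabilityMeasure ℙ]
    (H : ℝ) (hH : H ∈ Set.Ioo (0 : ℝ) 1) (d : ℕ) (hd : 0 < d)
    (hHd : H * d < 1)
    (B : Ω → ℝ → EuclideanSpace ℝ (Fin d)) (hB : IsFBM ℙ H d B)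
    (a b : ℝ) (ha : 0 < a) (hab : a < b) (hb : b ≤ 1)
    (f : ℝ → EuclideanSpace ℝ (Fin d)) (hf : HolderWithExp f H (Set.Icc 0 1)) :
    ∃ E₁ E₂ : Set ℝ, MeasurableSet E₁ ∧ MeasurableSet E₂ ∧
      E₁ ⊆ Set.Icc a b ∧ E₂ ⊆ Set.Icc a b ∧
      dimH E₁ = ENNReal.ofReal (H * d) ∧ dimH E₂ = ENNReal.ofReal (H * d) ∧
      ∀ x : EuclideanSpace ℝ (Fin d),
        ℙ {ω | ∃ s ∈ E₁, B ω s + f s = x} = 0 ∧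
        0 < ℙ {ω | ∃ s ∈ E₂, B ω s + f s = x} := by
  have hH0 := hH.1
  have hd' : (0:ℝ) < d := by exact_mod_cast hd
  have hg0 : 0 < H * d := mul_pos hH0 hd'
  obtain ⟨c₁, q₁, h₁, hL₁, hdim₁, hlim₁⟩ := aux_scale1 (H * d) (b - a) hg0 hHd (by linarith) d hd
  obtain ⟨c₂, q₂, h₂, hL₂, hdim₂, hsum₂⟩ := aux_scale2 (H * d) (b - a) hg0 hHd (by linarith)
  have hs₁ : range (cPhi a c₁) ⊆ Icc a b := by
    rintro _ ⟨e, rfl⟩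
    exact ⟨(h₁.mem_Icc a e).1, by linarith [(h₁.mem_Icc a e).2]⟩
  have hs₂ : range (cPhi a c₂) ⊆ Icc a b := by
    rintro _ ⟨e, rfl⟩
    exact ⟨(h₂.mem_Icc a e).1, by linarith [(h₂.mem_Icc a e).2]⟩
  exact ⟨range (cPhi a c₁), range (cPhi a c₂), (h₁.compact a).measurableSet,
    (h₂.compact a).measurableSet, hs₁, hs₂, hdim₁ a, hdim₂ a, fun x =>
    ⟨aux_E1 hH hB a b ha hb hf h₁ hs₁ hlim₁ x, aux_E2 hH hd hB a b ha hb hf h₂ hs₂ hsum₂ x⟩⟩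
end

section
/- Let x₀ ∈ (0,1) and let φ be a continuous increasing function on ℝ₊ with φ(0) = 0 and φ(2x) < 2φ(x) for all x ∈ (0,x₀). Then there exist a compact set E_φ ⊆ [0,x₀], a Borel probability measure ν supported on E_φ, and a constant c ≥ 1 such that c^{−1} φ(r) ≤ ν([x−r, x+r]) ≤ c φ(r) for all r ∈ (0,x₀] and all x ∈ E_φ. -/
open MeasureTheory Set

namespace S19

noncomputable def b (l : ℕ → ℝ) (ω : ℕ → Bool) (i : ℕ) : ℝ :=
  if ω i then l i - l (i+1) else 0

noncomputable def S (l : ℕ → ℝ) (n : ℕ) (ω : ℕ → Bool) : ℝ :=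
  ∑ i ∈ Finset.range n, b l ω i

noncomputable def X (l : ℕ → ℝ) (ω : ℕ → Bool) : ℝ := ∑' i, b l ω i

lemma b_nonneg {l : ℕ → ℝ} (hp : ∀ n, 0 < l n) (hl : ∀ n, l (n+1) < l n / 2)
    (ω : ℕ → Bool) (i : ℕ) : 0 ≤ b l ω i := by
  unfold b
  have := hp i
  have := hl i
  split_ifs <;> linarith

lemma b_le {l : ℕ → ℝ} (hp : ∀ n, 0 < l n) (hl : ∀ n, l (n+1) < l n / 2)
    (ω : ℕ → Bool) (i : ℕ) : b l ω i ≤ l i - l (i+1) := by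
  unfold b
  have := hp i
  have := hl i
  split_ifs <;> linarith

lemma sep {l : ℕ → ℝ} (hp : ∀ n, 0 < l n) (hl : ∀ n, l (n+1) < l n / 2)
    (ω ω' : ℕ → Bool) (n : ℕ) (h : ∃ i < n, ω i ≠ ω' i) :
    l n ≤ |S l n ω - S l n ω'| := by
  induction n with
  | zero => obtain ⟨i, hi, _⟩ := h; omega
  | succ n ih =>
    have e1 : ∀ ω, S l (n+1) ω = S l n ω + b l ω n := fun ω => Finset.sum_range_succ _ _
    rw [e1, e1]
    have h1 := b_nonneg hp hl ω n
    have h2 := b_nonneg hp hl ω' n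
    have h3 := b_le hp hl ω n
    have h4 := b_le hp hl ω' n
    have := hl n
    by_cases hd : ∃ i < n, ω i ≠ ω' i
    · have := ih hd
      rcases le_abs.1 this with h | h
      · exact le_abs.2 (Or.inl (by linarith))
      · exact le_abs.2 (Or.inr (by linarith))
    · push Not at hd
      obtain ⟨i, hi, hne⟩ := h
      have hin : i = n := by
        by_contra hh
        exact hne (hd i (by omega))
      subst hin
      have hS : S l i ω = S l i ω' := by
        unfold S
        refine Finset.sum_congr rfl fun j hj => ?_
        unfold b
        rw [hd j (Finset.mem_range.1 hj)]
      rw [hS]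
      unfold b
      cases h5 : ω i <;> cases h6 : ω' i
      · simp [h5, h6] at hne
      · exact le_abs.2 (Or.inr (by simp; linarith))
      · exact le_abs.2 (Or.inl (by simp; linarith))
      · simp [h5, h6] at hne

lemma S_tail {l : ℕ → ℝ} (hp : ∀ n, 0 < l n) (hl : ∀ n, l (n+1) < l n / 2)
    (ω : ℕ → Bool) (n k : ℕ) : S l (n+k) ω ≤ S l n ω + l n - l (n+k) := by
  induction k with
  | zero => simp
  | succ k ih =>
    have e1 : S l (n+k+1) ω = S l (n+k) ω + b l ω (n+k) := Finset.sum_range_succ _ _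
    have := b_le hp hl ω (n+k)
    rw [← add_assoc, e1]
    linarith

lemma d_summable {l : ℕ → ℝ} (hp : ∀ n, 0 < l n) (hl : ∀ n, l (n+1) < l n / 2) :
    Summable fun i => l i - l (i+1) := by
  refine summable_of_sum_range_le (c := l 0) (fun n => ?_) (fun n => ?_)
  · linarith [hp n, hl n]
  · rw [Finset.sum_range_sub']
    linarith [hp n]

lemma b_summable {l : ℕ → ℝ} (hp : ∀ n, 0 < l n) (hl : ∀ n, l (n+1) < l n / 2)
    (ω : ℕ → Bool) : Summable (b l ω) :=
  Summable.of_nonneg_of_le (b_nonneg hp hl ω) (b_le hp hl ω) (d_summable hp hl)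

lemma S_le_X {l : ℕ → ℝ} (hp : ∀ n, 0 < l n) (hl : ∀ n, l (n+1) < l n / 2)
    (ω : ℕ → Bool) (n : ℕ) : S l n ω ≤ X l ω :=
  (b_summable hp hl ω).sum_le_tsum _ fun i _ => b_nonneg hp hl ω i

lemma X_le {l : ℕ → ℝ} (hp : ∀ n, 0 < l n) (hl : ∀ n, l (n+1) < l n / 2)
    (ω : ℕ → Bool) (n : ℕ) : X l ω ≤ S l n ω + l n := by
  have h := (b_summable hp hl ω).hasSum.tendsto_sum_nat
  refine le_of_tendsto h ?_
  filter_upwards [Filter.eventually_ge_atTop n] with m hm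
  obtain ⟨k, rfl⟩ := Nat.exists_eq_add_of_le hm
  have := S_tail hp hl ω n k
  have := hp (n+k)
  unfold S at *
  linarith

lemma X_cont {l : ℕ → ℝ} (hp : ∀ n, 0 < l n) (hl : ∀ n, l (n+1) < l n / 2) :
    Continuous (X l) := by
  refine continuous_tsum (fun i => ?_) (d_summable hp hl) (fun i ω => ?_)
  · have : (fun ω : ℕ → Bool => b l ω i) =
      (fun t : Bool => if t then l i - l (i+1) else 0) ∘ fun ω => ω i := rfl
    rw [this]
    exact (continuous_of_discreteTopology).comp (continuous_apply i)
  · rw [Real.norm_of_nonneg (b_nonneg hp hl ω i)]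
    exact b_le hp hl ω i

noncomputable def P : Measure (ℕ → Bool) :=
  Measure.infinitePi fun _ : ℕ => (PMF.uniformOfFintype Bool).toMeasure

instance : IsProbabilityMeasure P := by unfold P; infer_instance

def cyl (n : ℕ) (ω : ℕ → Bool) : Set (ℕ → Bool) := {ω' | ∀ i < n, ω' i = ω i}

lemma P_cyl (n : ℕ) (ω : ℕ → Bool) : P (cyl n ω) = ENNReal.ofReal ((1/2)^n) := by
  have : cyl n ω = Set.pi (Finset.range n) fun i => {ω i} := by
    ext; simp [cyl]
  rw [this, P, Measure.infinitePi_pi]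
  · simp only [PMF.toMeasure_apply_singleton _ _ (MeasurableSet.singleton _)]
    simp [ENNReal.ofReal_inv_of_pos, ENNReal.inv_pow]
  · intro i _
    exact MeasurableSet.singleton _

lemma upper {l : ℕ → ℝ} (hp : ∀ n, 0 < l n) (hl : ∀ n, l (n+1) < l n / 2)
    (n : ℕ) (r x : ℝ) (hr : r ≤ l n) :
    P (X l ⁻¹' Icc (x - r) (x + r)) ≤ 4 * ENNReal.ofReal ((1/2)^n) := by
  set A := X l ⁻¹' Icc (x - r) (x + r) with hA
  let g : (ℕ → Bool) → ℤ := fun ω => ⌊(S l n ω - (x - r - l n)) / l n⌋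
  have hln := hp n
  have hsub : A ⊆ ⋃ j ∈ Finset.Icc (0:ℤ) 3, (A ∩ g ⁻¹' {j}) := by
    intro ω hω
    simp only [mem_iUnion]
    refine ⟨g ω, ?_, hω, rfl⟩
    have h1 := S_le_X hp hl ω n
    have h2 := X_le hp hl ω n
    obtain ⟨h3, h4⟩ := hω
    rw [Finset.mem_Icc]
    constructor
    · exact Int.floor_nonneg.2 (div_nonneg (by linarith) hln.le)
    · refine Int.lt_add_one_iff.1 (Int.floor_lt.2 ?_)
      rw [div_lt_iff₀ hln]
      push_cast
      linarith
  calc P A ≤ P (⋃ j ∈ Finset.Icc (0:ℤ) 3, (A ∩ g ⁻¹' {j})) := measure_mono hsub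
    _ ≤ ∑ j ∈ Finset.Icc (0:ℤ) 3, P (A ∩ g ⁻¹' {j}) := measure_biUnion_finset_le _ _
    _ ≤ ∑ j ∈ Finset.Icc (0:ℤ) 3, ENNReal.ofReal ((1/2)^n) := by
      refine Finset.sum_le_sum fun j _ => ?_
      rcases (A ∩ g ⁻¹' {j}).eq_empty_or_nonempty with h | ⟨ω₀, hω₀⟩
      · rw [h]; simp
      · rw [← P_cyl n ω₀]
        refine measure_mono fun ω hω => ?_
        by_contra hc
        have hc' : ∃ i < n, ω i ≠ ω₀ i := by
          simpa [cyl] using hc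
        have h1 := sep hp hl ω ω₀ n hc'
        have h2 : g ω = g ω₀ := by
          rw [show g ω = j from hω.2, show g ω₀ = j from hω₀.2]
        have h3 := Int.abs_sub_lt_one_of_floor_eq_floor h2
        rw [← sub_div, abs_div, abs_of_pos hln, div_lt_one hln] at h3
        rw [sub_sub_sub_cancel_right] at h3
        linarith
    _ = 4 * ENNReal.ofReal ((1/2)^n) := by simp

lemma lower {l : ℕ → ℝ} (hp : ∀ n, 0 < l n) (hl : ∀ n, l (n+1) < l n / 2)
    (n : ℕ) (r : ℝ) (ω : ℕ → Bool) (hr : l n ≤ r) :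
    ENNReal.ofReal ((1/2)^n) ≤ P (X l ⁻¹' Icc (X l ω - r) (X l ω + r)) := by
  rw [← P_cyl n ω]
  refine measure_mono fun ω' h => ?_
  have hS : S l n ω' = S l n ω := by
    unfold S
    refine Finset.sum_congr rfl fun j hj => ?_
    unfold b
    rw [h j (Finset.mem_range.1 hj)]
  have h1 := S_le_X hp hl ω n
  have h2 := X_le hp hl ω n
  have h3 := S_le_X hp hl ω' n
  have h4 := X_le hp hl ω' n
  constructor <;> linarith

end S19

open S19 in
/-- Proposition 7.1: for a continuous increasing `φ` on `ℝ₊` with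
`φ(0) = 0` and `φ(2x) < 2φ(x)` on `(0,x₀)`, there is a compact set `E_φ ⊆ [0,x₀]`
carrying a probability measure `ν` with `ν([x-r,x+r]) ≍ φ(r)` for `x ∈ E_φ` and
`0 < r ≤ x₀`. -/
theorem statement19 (x₀ : ℝ) (hx₀ : x₀ ∈ Set.Ioo (0 : ℝ) 1)
    (φ : ℝ → ℝ) (hφc : ContinuousOn φ (Set.Ici 0))
    (hφmono : StrictMonoOn φ (Set.Ici 0)) (hφ0 : φ 0 = 0)
    (hφdoub : ∀ x ∈ Set.Ioo (0 : ℝ) x₀, φ (2 * x) < 2 * φ x) :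
    ∃ (E : Set ℝ) (ν : Measure ℝ) (c : ℝ), IsCompact E ∧ E ⊆ Set.Icc 0 x₀ ∧
      IsProbabilityMeasure ν ∧ ν Eᶜ = 0 ∧ 1 ≤ c ∧
      ∀ r ∈ Set.Ioc (0 : ℝ) x₀, ∀ x ∈ E,
        ENNReal.ofReal (c⁻¹ * φ r) ≤ ν (Set.Icc (x - r) (x + r)) ∧
        ν (Set.Icc (x - r) (x + r)) ≤ ENNReal.ofReal (c * φ r) := by
  obtain ⟨hx0, hx1⟩ := hx₀
  have hM : 0 < φ x₀ := by
    rw [← hφ0]; exact hφmono (by simp) hx0.le hx0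
  set M := φ x₀ with hMdef
  have hex : ∀ n : ℕ, ∃ y ∈ Icc 0 x₀, φ y = M * (1/2)^n := by
    intro n
    have h := intermediate_value_Icc hx0.le (hφc.mono Icc_subset_Ici_self)
    apply h
    rw [hφ0]
    refine ⟨by positivity, ?_⟩
    exact mul_le_of_le_one_right hM.le (pow_le_one₀ (by norm_num) (by norm_num))
  choose l hlI hlφ using hex
  have hp : ∀ n, 0 < l n := by
    intro n
    refine lt_of_le_of_ne (hlI n).1 fun h => ?_
    have h1 := hlφ n
    rw [← h, hφ0] at h1
    have : 0 < M * (1/2)^n := by positivity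
    linarith
  have hl : ∀ n, l (n+1) < l n / 2 := by
    intro n
    have h0 := hp n
    have h2 := (hlI n).2
    by_contra hc
    push Not at hc
    have h3 := hφmono.monotoneOn (show l n / 2 ∈ Ici (0:ℝ) from by simp; linarith)
      (show l (n+1) ∈ Ici (0:ℝ) from (hlI _).1) hc
    have h4 := hφdoub (l n / 2) ⟨by linarith, by linarith⟩
    rw [mul_div_cancel₀ _ (two_ne_zero), hlφ n] at h4
    rw [hlφ (n+1), pow_succ] at h3
    linarith
  have hl0 : l 0 = x₀ := hφmono.injOn (hlI 0).1 hx0.le (by rw [hlφ 0]; simp [hMdef])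
  have hlb : ∀ n, l n ≤ x₀ * (1/2)^n := by
    intro n
    induction n with
    | zero => simp [hl0]
    | succ n ih => have := hl n; rw [pow_succ]; linarith
  have hXc := X_cont hp hl
  have hEc : IsCompact (range (X l)) := isCompact_range hXc
  refine ⟨range (X l), P.map (X l), 1 + 2 * M + 8 / M, hEc, ?_,
    Measure.isProbabilityMeasure_map hXc.measurable.aemeasurable, ?_, ?_, ?_⟩
  · rintro _ ⟨ω, rfl⟩
    have h1 := S_le_X hp hl ω 0
    have h2 := X_le hp hl ω 0
    simp only [S, Finset.range_zero, Finset.sum_empty, hl0] at h1 h2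
    constructor <;> linarith
  · rw [Measure.map_apply hXc.measurable hEc.measurableSet.compl]
    have : X l ⁻¹' (range (X l))ᶜ = ∅ := by
      ext; simp
    rw [this]; simp
  · have : 0 < 8 / M := by positivity
    linarith
  · rintro r ⟨hr0, hr1⟩ _ ⟨ω, rfl⟩
    rw [Measure.map_apply hXc.measurable measurableSet_Icc]
    have hexm : ∃ m, l m < r := by
      obtain ⟨m, hm⟩ := exists_pow_lt_of_lt_one (div_pos hr0 hx0) (show (1/2:ℝ) < 1 by norm_num)
      refine ⟨m, (hlb m).trans_lt ?_⟩
      rw [lt_div_iff₀ hx0] at hm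
      linarith
    obtain ⟨n, hn1, hn2⟩ : ∃ n, l (n+1) < r ∧ r ≤ l n := by
      classical
      have h1 := Nat.find_spec hexm
      rcases hN : Nat.find hexm with _ | n
      · rw [hN, hl0] at h1; linarith
      · refine ⟨n, by rwa [hN] at h1, ?_⟩
        exact not_lt.1 (Nat.find_min hexm (by omega))
    have hφ1 : φ r ≤ M * (1/2)^n := by
      rw [← hlφ]; exact hφmono.monotoneOn hr0.le (hp n).le hn2
    have hφ2 : M * (1/2)^(n+1) ≤ φ r := by
      rw [← hlφ]; exact hφmono.monotoneOn (hp _).le hr0.le hn1.le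
    have hM8 : 0 < 8 / M := by positivity
    have hpow : (0:ℝ) < (1/2)^n := by positivity
    constructor
    · refine le_trans (ENNReal.ofReal_le_ofReal ?_) (lower hp hl (n+1) r ω hn1.le)
      rw [inv_mul_le_iff₀ (by positivity), pow_succ]
      have : 0 < (1 + 8/M) * (1/2)^n := by positivity
      nlinarith
    · refine (upper hp hl n r _ hn2).trans ?_
      rw [show (4:ENNReal) = ENNReal.ofReal 4 by simp, ← ENNReal.ofReal_mul (by norm_num)]
      apply ENNReal.ofReal_le_ofReal
      have hφr : 0 ≤ φ r := le_trans (by positivity) hφ2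
      have h1 : 8 / M * (M * (1/2)^(n+1)) ≤ 8 / M * φ r := mul_le_mul_of_nonneg_left hφ2 hM8.le
      have h2 : 8 / M * (M * (1/2)^(n+1)) = 4 * (1/2)^n := by
        rw [pow_succ]; field_simp; norm_num
      have h3 : 0 ≤ (1 + 2 * M) * φ r := by positivity
      linarith
end
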